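/- arXiv:2303.02855 — 3 statements merged into one kernel-verified Lean document; each statement's English description precedes it below -/
import Mathlib

section
/- n(3) > A(7,184): there exists a word over a three-letter alphabet of length greater than A(7,184) satisfying property (*). -/
/-- `friedmanBlock s i` is the block `s_i s_{i+1} … s_{2i}` of the word `s`
(1-based indices); it has length `i + 1` when `2*i ≤ s.length`. -/
def friedmanBlock {α : Type} (s : List α) (i : ℕ) : List α :=
  (s.drop (i - 1)).take (i + 1)

/-- Friedman's property (*): there are no indices `1 ≤ i < j ≤ n/2` such that
`s^(i)` is a (scattered) subword of `s^(j)`.  Note `j ≤ n/2 ↔ 2*j ≤ n`. -/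
def SatisfiesStar {α : Type} (s : List α) : Prop :=
  ∀ i j : ℕ, 1 ≤ i → i < j → 2 * j ≤ s.length →
    ¬ (friedmanBlock s i).Sublist (friedmanBlock s j)

/-- `friedmanN k` = n(k), the length of a longest word over a `k`-letter
alphabet satisfying (*). -/
noncomputable def friedmanN (k : ℕ) : ℕ :=
  sSup {n : ℕ | ∃ s : List (Fin k), s.length = n ∧ SatisfiesStar s}

/-- The modified Ackermann function: `A(1,c) = 2c`, `A(f,1) = 2` for `f ≥ 2`,
and `A(f,c) = A(f-1, A(f,c-1))` for `f, c ≥ 2` (values at `f = 0` or `c = 0`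
are irrelevant junk values). -/
def ackF : ℕ → ℕ → ℕ
  | 0, _ => 0
  | 1, c => 2 * c
  | _ + 2, 0 => 2
  | _ + 2, 1 => 2
  | f + 2, c + 2 => ackF (f + 1) (ackF (f + 2) (c + 1))
termination_by f c => (f, c)


/-! ### Long lexicographically decreasing digit sequences -/

/-- A fast growing hierarchy. -/
def frG : ℕ → ℕ → ℕ
  | 0, K => K + 1
  | d + 1, K => (frG d)^[K + 1] K

theorem frG_props (d : ℕ) : Monotone (frG d) ∧ ∀ K, K + 1 ≤ frG d K := by
  induction d with
  | zero => exact ⟨fun a b h => by simp only [frG]; omega, fun K => le_rfl⟩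
  | succ d ih =>
    obtain ⟨hm, hl⟩ := ih
    have hid : id ≤ frG d := fun x => by have := hl x; simp only [id]; omega
    have hit : ∀ n K, K + n ≤ (frG d)^[n] K := by
      intro n
      induction n with
      | zero => intro K; simp
      | succ n ihn =>
        intro K
        rw [Function.iterate_succ_apply']
        have h1 := ihn K
        have h2 := hl ((frG d)^[n] K)
        omega
    refine ⟨fun a b h => ?_, fun K => ?_⟩
    · simp only [frG]
      calc (frG d)^[a + 1] a ≤ (frG d)^[a + 1] b := hm.iterate _ h
        _ ≤ (frG d)^[b + 1] b := Function.monotone_iterate_of_id_le hid (by omega) b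
    · simp only [frG]
      have := hit (K + 1) K
      omega

theorem frG_ack (d : ℕ) : ∀ K, 1 ≤ K → ackF (d + 1) K ≤ frG (d + 1) K := by
  induction d with
  | zero =>
    intro K hK
    have hit : ∀ n K, (frG 0)^[n] K = K + n := by
      intro n
      induction n with
      | zero => intro K; simp
      | succ n ihn =>
        intro K
        rw [Function.iterate_succ_apply', ihn]
        simp only [frG]; omega
    show ackF 1 K ≤ (frG 0)^[K + 1] K
    rw [hit, ackF]; omega
  | succ d ih =>
    intro K hK
    have hone : ∀ c, 1 ≤ ackF (d + 2) (c + 1) ∧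
        ackF (d + 2) (c + 1) ≤ (frG (d + 1))^[c + 1] K := by
      intro c
      induction c with
      | zero =>
        have := (frG_props (d + 1)).2 K
        have h0 : ackF (d + 2) (0 + 1) = 2 := by rw [zero_add, ackF]
        rw [h0]
        simp only [Function.iterate_succ, Function.iterate_zero, Function.comp, id]
        omega
      | succ c ihc =>
        obtain ⟨h1, h2⟩ := ihc
        rw [ackF, Function.iterate_succ_apply']
        refine ⟨?_, ?_⟩
        · rcases d with _ | d
          · rw [ackF]; omega
          · generalize ackF (d + 1 + 2) (c + 1) = y at h1 h2
            have key : ∀ e y, 1 ≤ ackF (e + 2) y := by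
              intro e
              induction e with
              | zero =>
                intro y
                induction y with
                | zero => simp [ackF]
                | succ y ihy =>
                  rcases y with _ | y
                  · simp [ackF]
                  · rw [ackF, ackF]; omega
              | succ e ihe =>
                intro y
                rcases y with _ | _ | y
                · simp [ackF]
                · simp [ackF]
                · rw [ackF]; exact ihe _
            exact key _ _
        · exact (ih _ h1).trans ((frG_props (d + 1)).1 h2)
    show ackF (d + 2) K ≤ (frG (d + 1))^[K + 1] K
    obtain ⟨c, rfl⟩ : ∃ c, K = c + 1 := ⟨K - 1, by omega⟩
    refine (hone c).2.trans ?_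
    rw [Function.iterate_succ_apply' (frG (d + 1)) (c + 1)]
    have := (frG_props (d + 1)).2 ((frG (d + 1))^[c + 1] (c + 1))
    omega

/-- A bad sequence of digit vectors indexed by `[K, N)`. -/
def FrGood (d K N : ℕ) : Prop :=
  ∃ v : ℕ → ℕ → ℕ, (∀ k c, K ≤ k → k < N → v k c ≤ k) ∧
    ∀ k l, K ≤ k → k < l → l < N → ∃ c < d, v l c < v k c

theorem frGood_all (d : ℕ) : ∀ K, FrGood d K (frG d K) := by
  induction d with
  | zero =>
    intro K
    refine ⟨fun _ _ => 0, fun _ _ _ _ => Nat.zero_le _, fun k l h1 h2 h3 => ?_⟩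
    simp only [frG] at h3; omega
  | succ d ih =>
    have key : ∀ n K, n ≤ K → ∃ v : ℕ → ℕ → ℕ,
        (∀ k c, K ≤ k → k < (frG d)^[n + 1] K → v k c ≤ k) ∧
        (∀ k, K ≤ k → k < (frG d)^[n + 1] K → v k d ≤ n) ∧
        ∀ k l, K ≤ k → k < l → l < (frG d)^[n + 1] K → ∃ c < d + 1, v l c < v k c := by
      intro n
      induction n with
      | zero =>
        intro K _
        obtain ⟨v, hv1, hv2⟩ := ih K
        refine ⟨fun k c => if c = d then 0 else v k c, ?_, ?_, ?_⟩
        · intro k c h1 h2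
          by_cases hc : c = d
          · simp [hc]
          · simpa [hc] using hv1 k c h1 h2
        · intro k _ _; simp
        · intro k l h1 h2 h3
          obtain ⟨c, hc, hlt⟩ := hv2 k l h1 h2 h3
          exact ⟨c, by omega, by simpa [hc.ne] using hlt⟩
      | succ n ihn =>
        intro K hK
        obtain ⟨v, hv1, hv2⟩ := ih K
        have hg := (frG_props d).2 K
        obtain ⟨w, hw1, hw2, hw3⟩ := ihn (frG d K) (by omega)
        rw [← Function.iterate_succ_apply (frG d)] at hw1 hw2 hw3
        refine ⟨fun k c => if k < frG d K then (if c = d then n + 1 else v k c) else w k c,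
          ?_, ?_, ?_⟩
        · intro k c h1 h2
          by_cases hk : k < frG d K
          · by_cases hc : c = d
            · simp [hk, hc]; omega
            · simpa [hk, hc] using hv1 k c h1 hk
          · simpa [hk] using hw1 k c (by omega) h2
        · intro k h1 h2
          by_cases hk : k < frG d K
          · simp [hk]
          · have := hw2 k (by omega) h2
            simp [hk]; omega
        · intro k l h1 h2 h3
          by_cases hl : l < frG d K
          · have hk : k < frG d K := by omega
            obtain ⟨c, hc, hlt⟩ := hv2 k l h1 h2 hl
            exact ⟨c, by omega, by simpa [hk, hl, hc.ne] using hlt⟩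
          · by_cases hk : k < frG d K
            · refine ⟨d, by omega, ?_⟩
              have := hw2 l (by omega) h3
              simp [hk, hl]; omega
            · obtain ⟨c, hc, hlt⟩ := hw3 k l (by omega) h2 h3
              exact ⟨c, hc, by simpa [hk, hl] using hlt⟩
    intro K
    obtain ⟨v, h1, _, h3⟩ := key K K le_rfl
    exact ⟨v, h1, h3⟩

theorem frG_step (d K : ℕ) : frG d K ≤ frG (d + 1) K := by
  show _ ≤ (frG d)^[K + 1] K
  rw [Function.iterate_succ_apply]
  have hid : id ≤ frG d := fun x => by have := (frG_props d).2 x; simp only [id]; omega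
  exact Function.id_le_iterate_of_id_le hid K _

theorem frG_comp (d K : ℕ) (hK : 1 ≤ K) : frG d (frG d K) ≤ frG (d + 1) K := by
  show _ ≤ (frG d)^[K + 1] K
  have hid : id ≤ frG d := fun x => by have := (frG_props d).2 x; simp only [id]; omega
  have := Function.monotone_iterate_of_id_le hid (show 2 ≤ K + 1 by omega) K
  simpa using this

theorem frG_large : ackF 7 184 ≤ frG 8 4 := by
  have h2 : frG 2 4 = 159 := by decide
  have h1 : ∀ n K, K + n ≤ (frG 1)^[n] K := by
    intro n
    induction n with
    | zero => intro K; simp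
    | succ n ihn =>
      intro K
      rw [Function.iterate_succ_apply']
      have h1 := ihn K
      have h2 := (frG_props 1).2 ((frG 1)^[n] K)
      omega
  have h3 : 184 ≤ frG 3 4 := by
    have := frG_comp 2 4 (by norm_num)
    rw [h2] at this
    refine le_trans ?_ this
    show 184 ≤ (frG 1)^[160] 159
    exact le_trans (by norm_num) (h1 160 159)
  have h7 : 184 ≤ frG 7 4 :=
    h3.trans ((frG_step 3 4).trans ((frG_step 4 4).trans ((frG_step 5 4).trans (frG_step 6 4))))
  calc ackF 7 184 ≤ frG 7 184 := frG_ack 6 184 (by norm_num)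
    _ ≤ frG 7 (frG 7 4) := (frG_props 7).1 h7
    _ ≤ frG 8 4 := frG_comp 7 4 (by norm_num)

/-- The digit sequence used in the construction. -/
theorem fr_digits : ∃ (L : ℕ) (D : ℕ → ℕ → ℕ), ackF 7 184 ≤ L + 5 ∧
    (∀ k c, 1 ≤ D k c ∧ D k c ≤ k + 5) ∧
    ∀ k l, k < l → l ≤ L → ∃ c < 8, D l c < D k c := by
  obtain ⟨v, h1, h2⟩ := frGood_all 8 4
  have h5 := (frG_props 8).2 4
  refine ⟨frG 8 4 - 5, fun k c => if k + 4 < frG 8 4 then v (k + 4) c + 1 else 1, ?_, ?_, ?_⟩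
  · have := frG_large; omega
  · intro k c
    by_cases h : k + 4 < frG 8 4
    · have := h1 (k + 4) c (by omega) h
      simp [h]; omega
    · simp [h]
  · intro k l hkl hl
    obtain ⟨c, hc, hlt⟩ := h2 (k + 4) (l + 4) (by omega) (by omega) (by omega)
    refine ⟨c, hc, ?_⟩
    have a : k + 4 < frG 8 4 := by omega
    have b : l + 4 < frG 8 4 := by omega
    simp [a, b]; omega

/-! ### Positions of the marker letter -/

/-- Sum of the eight digits of phase `k`. -/
def frT (D : ℕ → ℕ → ℕ) (k : ℕ) : ℕ := ∑ c ∈ Finset.range 8, D k c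

/-- Gap sizes in group `k`. -/
def frA (D : ℕ → ℕ → ℕ) (k c : ℕ) : ℕ :=
  if c = 0 then 72 * 2 ^ k + 8 * k + 48
  else if c ≤ 8 then D k (c - 1)
  else 241 * 2 ^ k - 27 - (72 * 2 ^ k + 8 * k + 48) - frT D k

/-- Gap after the `n`-th marker. -/
def frGap (D : ℕ → ℕ → ℕ) (n : ℕ) : ℕ :=
  if n < 111 then 0 else if (n - 111) % 27 < 17 then 0
  else frA D ((n - 111) / 27) ((n - 111) % 27 - 17)

/-- Position of the `n`-th marker. -/
def frW (D : ℕ → ℕ → ℕ) : ℕ → ℕ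
  | 0 => 129
  | n + 1 => frW D n + frGap D n + 1

/-- Start of group `k`. -/
def frP (k : ℕ) : ℕ := 241 * 2 ^ k - 1

theorem frP_succ (k : ℕ) : frP (k + 1) = 2 * frP k + 1 := by
  have : 1 ≤ 2 ^ k := Nat.one_le_two_pow
  simp only [frP, pow_succ]; omega

theorem frP_zero : frP 0 = 240 := by simp [frP]

theorem frP_ge (k : ℕ) : 240 + k ≤ frP k := by
  induction k with
  | zero => simp [frP]
  | succ k ih => rw [frP_succ]; omega

theorem frP_mono : StrictMono frP := strictMono_nat_of_lt_succ fun k => by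
  rw [frP_succ]; omega

theorem frW_strictMono (D : ℕ → ℕ → ℕ) : StrictMono (frW D) :=
  strictMono_nat_of_lt_succ fun n => by simp only [frW]; omega

theorem frW_init (D : ℕ → ℕ → ℕ) (n : ℕ) (hn : n ≤ 111) : frW D n = 129 + n := by
  induction n with
  | zero => simp only [frW]
  | succ n ih =>
    have : frGap D n = 0 := by simp only [frGap]; rw [if_pos (by omega)]
    simp only [frW]; rw [ih (by omega), this]; omega

theorem frGap_lo (D : ℕ → ℕ → ℕ) (k x : ℕ) (hx : x < 17) : frGap D (111 + 27 * k + x) = 0 := by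
  simp only [frGap]
  rw [if_neg (by omega), if_pos (by omega)]

theorem frGap_hi (D : ℕ → ℕ → ℕ) (k c : ℕ) (hc : c ≤ 9) :
    frGap D (111 + 27 * k + 17 + c) = frA D k c := by
  simp only [frGap]
  have e1 : (111 + 27 * k + 17 + c - 111) / 27 = k := by omega
  have e2 : (111 + 27 * k + 17 + c - 111) % 27 - 17 = c := by omega
  rw [if_neg (by omega), if_neg (by omega), e1, e2]

theorem frGap_pos (D : ℕ → ℕ → ℕ) (n : ℕ) (h : 0 < frGap D n) :
    ∃ k c, c ≤ 9 ∧ n = 111 + 27 * k + 17 + c := by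
  simp only [frGap] at h
  split_ifs at h with h1 h2
  · omega
  · omega
  · exact ⟨(n - 111) / 27, (n - 111) % 27 - 17, by omega, by omega⟩

theorem frT_le (D : ℕ → ℕ → ℕ) (hD : ∀ k c, 1 ≤ D k c ∧ D k c ≤ k + 5) (k : ℕ) :
    frT D k ≤ 8 * k + 40 := by
  have : frT D k ≤ ∑ c ∈ Finset.range 8, (k + 5) := Finset.sum_le_sum fun c _ => (hD k c).2
  simp at this; omega

theorem frW_run (D : ℕ → ℕ → ℕ) (k x : ℕ) (hx : x ≤ 17) :
    frW D (111 + 27 * k + x) = frW D (111 + 27 * k) + x := by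
  induction x with
  | zero => rfl
  | succ x ih =>
    have := frGap_lo D k x (by omega)
    rw [← add_assoc]; simp only [frW]; rw [ih (by omega), this]; omega

theorem frW_18 (D : ℕ → ℕ → ℕ) (k : ℕ) :
    frW D (111 + 27 * k + 18) = frW D (111 + 27 * k) + 18 + (72 * 2 ^ k + 8 * k + 48) := by
  have h := frGap_hi D k 0 (by omega)
  have h' : frW D (111 + 27 * k + 18) =
    frW D (111 + 27 * k + 17) + frGap D (111 + 27 * k + 17 + 0) + 1 := rfl
  rw [h', h, frW_run D k 17 le_rfl]
  simp only [frA, if_true]; omega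

theorem frW_digits (D : ℕ → ℕ → ℕ) (k c : ℕ) (hc : c ≤ 8) :
    frW D (111 + 27 * k + 18 + c) = frW D (111 + 27 * k + 18) +
      ∑ x ∈ Finset.range c, (D k x + 1) := by
  induction c with
  | zero => simp
  | succ c ih =>
    have h := frGap_hi D k (c + 1) (by omega)
    have e : 111 + 27 * k + 17 + (c + 1) = 111 + 27 * k + 18 + c := by omega
    rw [e] at h
    have h' : frW D (111 + 27 * k + 18 + (c + 1)) =
      frW D (111 + 27 * k + 18 + c) + frGap D (111 + 27 * k + 18 + c) + 1 := rfl
    have hA : frA D k (c + 1) = D k c := by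
      simp only [frA]; rw [if_neg (by omega), if_pos (by omega)]; rfl
    rw [h', h, ih (by omega), Finset.sum_range_succ, hA]; omega

theorem fr_arith (k : ℕ) : k + 1 ≤ 2 ^ k := Nat.lt_two_pow_self

theorem frW_base (D : ℕ → ℕ → ℕ) (hD : ∀ k c, 1 ≤ D k c ∧ D k c ≤ k + 5) (k : ℕ) :
    frW D (111 + 27 * k) = frP k := by
  induction k with
  | zero => rw [frW_init D _ (by omega)]; simp [frP]
  | succ k ih =>
    have h := frGap_hi D k 9 (by omega)
    have h1 := frW_digits D k 8 le_rfl
    have h2 := frW_18 D k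
    have h3 := frT_le D hD k
    have hp := fr_arith k
    have hA : frA D k 9 = 241 * 2 ^ k - 27 - (72 * 2 ^ k + 8 * k + 48) - frT D k := by
      simp [frA]
    have h' : frW D (111 + 27 * (k + 1)) =
      frW D (111 + 27 * k + 18 + 8) + frGap D (111 + 27 * k + 17 + 9) + 1 := by
      rw [show 111 + 27 * (k + 1) = 111 + 27 * k + 26 + 1 by omega]; rfl
    have hs : ∑ x ∈ Finset.range 8, (D k x + 1) = frT D k + 8 := by
      rw [Finset.sum_add_distrib]; simp [frT]
    rw [h', h, h1, h2, hA, hs, ih, frP_succ]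
    simp only [frP]
    omega

/-- First nonmarker position after the last marker of group `k`. -/
def frZ (D : ℕ → ℕ → ℕ) (k : ℕ) : ℕ := frP k + 18 + (72 * 2 ^ k + 8 * k + 48) + frT D k + 9

theorem frW_26 (D : ℕ → ℕ → ℕ) (hD : ∀ k c, 1 ≤ D k c ∧ D k c ≤ k + 5) (k : ℕ) :
    frW D (111 + 27 * k + 26) + 1 = frZ D k := by
  have h1 := frW_digits D k 8 le_rfl
  have h2 := frW_18 D k
  have hs : ∑ x ∈ Finset.range 8, (D k x + 1) = frT D k + 8 := by
    rw [Finset.sum_add_distrib]; simp [frT]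
  have e : frW D (111 + 27 * k + 26) = frW D (111 + 27 * k + 18 + 8) := rfl
  rw [e, h1, h2, hs, frW_base D hD]
  simp only [frZ]; omega

/-! ### The word -/

/-- The initial part of the word (index `0` is a dummy). -/
def frTbl : List (Fin 3) :=
  [2, 0, 1, 1, 0, 2, 0, 2] ++ List.replicate 7 0 ++ [2] ++ List.replicate 4 0 ++
    List.replicate 12 2 ++ List.replicate 3 0 ++ List.replicate 29 2 ++ List.replicate 2 0 ++
    List.replicate 62 2 ++ [0]

open Classical in
/-- The letters of the word. -/
noncomputable def frS (D : ℕ → ℕ → ℕ) (x : ℕ) : Fin 3 :=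
  if x ≤ 128 then frTbl.getD x 2 else if ∃ n, frW D n = x then 2 else 1

open Classical in
/-- Number of markers before position `x`. -/
noncomputable def frC (D : ℕ → ℕ → ℕ) (x : ℕ) : ℕ := Nat.count (fun y => ∃ n, frW D n = y) x

theorem frC_mono (D : ℕ → ℕ → ℕ) : Monotone (frC D) := by
  classical
  intro a b h
  exact Nat.count_monotone _ h

open Classical in
theorem frC_succ (D : ℕ → ℕ → ℕ) (x : ℕ) :
    frC D (x + 1) = frC D x + if ∃ n, frW D n = x then 1 else 0 := by
  simp only [frC, Nat.count_succ]

theorem frW_ge (D : ℕ → ℕ → ℕ) (n : ℕ) : 129 ≤ frW D n :=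
  (frW_strictMono D).monotone (Nat.zero_le n)

theorem frC_W (D : ℕ → ℕ → ℕ) (n : ℕ) : frC D (frW D n) = n := by
  classical
  induction n with
  | zero =>
    have : ∀ x ≤ 129, frC D x = 0 := by
      intro x
      induction x with
      | zero => intro _; simp [frC]
      | succ x ih =>
        intro hx
        rw [frC_succ, ih (by omega), if_neg]
        rintro ⟨n, hn⟩
        have := frW_ge D n
        omega
    exact this _ le_rfl
  | succ n ih =>
    have : ∀ y ≤ frGap D n, frC D (frW D n + 1 + y) = n + 1 := by
      intro y
      induction y with
      | zero =>
        intro _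
        rw [add_zero, frC_succ, ih, if_pos ⟨n, rfl⟩]
      | succ y ihy =>
        intro hy
        rw [← add_assoc, frC_succ, ihy (by omega), if_neg]
        rintro ⟨m, hm⟩
        have h1 : n < m := (frW_strictMono D).lt_iff_lt.1 (by omega)
        have h2 : m < n + 1 := (frW_strictMono D).lt_iff_lt.1 (by simp only [frW]; omega)
        omega
    have e : frW D (n + 1) = frW D n + 1 + frGap D n := by simp only [frW]; omega
    rw [e]
    exact this _ le_rfl

theorem frC_lt (D : ℕ → ℕ → ℕ) (n x : ℕ) : n < frC D x ↔ frW D n < x := by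
  classical
  constructor
  · intro h
    by_contra hx
    have := frC_mono D (not_lt.1 hx)
    rw [frC_W] at this; omega
  · intro h
    have h1 := frC_mono D (Nat.succ_le_of_lt h)
    rw [Nat.succ_eq_add_one, frC_succ, frC_W, if_pos ⟨n, rfl⟩] at h1
    omega

/-- A marker at `x` is the marker with index `frC D x`. -/
theorem frS_two (D : ℕ → ℕ → ℕ) (x : ℕ) (hx : 128 < x) (h : frS D x = 2) :
    frW D (frC D x) = x := by
  simp only [frS] at h
  rw [if_neg (by omega)] at h
  split_ifs at h with h1
  · obtain ⟨n, rfl⟩ := h1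
    rw [frC_W]
  · exact absurd h (by decide)

theorem frS_W (D : ℕ → ℕ → ℕ) (n : ℕ) : frS D (frW D n) = 2 := by
  have := frW_ge D n
  simp only [frS]
  rw [if_neg (by omega), if_pos ⟨n, rfl⟩]

theorem frS_one_of (D : ℕ → ℕ → ℕ) (x n : ℕ) (h1 : frW D n < x) (h2 : x < frW D (n + 1)) :
    frS D x = 1 ∧ frC D x = n + 1 := by
  have := frW_ge D n
  refine ⟨?_, ?_⟩
  · simp only [frS]
    rw [if_neg (by omega), if_neg]
    rintro ⟨m, rfl⟩
    have a := (frW_strictMono D).lt_iff_lt.1 h1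
    have b := (frW_strictMono D).lt_iff_lt.1 h2
    omega
  · have a := (frC_lt D n x).2 h1
    have b := (frC_lt D (n + 1) x).not.2 (by omega)
    omega

/-- A nonmarker lies in one of the nonempty gaps. -/
theorem frS_one (D : ℕ → ℕ → ℕ) (x : ℕ) (hx : 128 < x) (h : frS D x = 1) :
    ∃ k c, c ≤ 9 ∧ frC D x = 111 + 27 * k + 18 + c ∧ frW D (111 + 27 * k + 17 + c) < x ∧
      x < frW D (111 + 27 * k + 18 + c) := by
  have hne : ∀ n, frW D n ≠ x := by
    intro n hn
    rw [← hn, frS_W] at h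
    exact absurd h (by decide)
  have h0 : frW D 0 < x := lt_of_le_of_ne (by simp only [frW]; omega) (hne 0)
  have h1 := (frC_lt D 0 x).2 h0
  obtain ⟨n, hn⟩ : ∃ n, frC D x = n + 1 := ⟨frC D x - 1, by omega⟩
  have a := (frC_lt D n x).1 (by omega)
  have b := (frC_lt D (n + 1) x).not.1 (by omega)
  have b' := hne (n + 1)
  have hg : 0 < frGap D n := by simp only [frW] at b b'; omega
  obtain ⟨k, c, hc, rfl⟩ := frGap_pos D n hg
  have e : 111 + 27 * k + 17 + c + 1 = 111 + 27 * k + 18 + c := by omega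
  rw [e] at b b' hn
  exact ⟨k, c, hc, hn, a, by omega⟩

theorem frS_cases (D : ℕ → ℕ → ℕ) (x : ℕ) (hx : 128 < x) : frS D x = 1 ∨ frS D x = 2 := by
  simp only [frS]
  rw [if_neg (by omega)]
  split_ifs <;> simp

/-- An embedding of window `i` into window `j`. -/
structure FrEmb (s : ℕ → Fin 3) (i j : ℕ) (f : ℕ → ℕ) : Prop where
  mono : ∀ x y, i ≤ x → x < y → y ≤ 2 * i → f x < f y
  lo : ∀ x, i ≤ x → x ≤ 2 * i → j ≤ f x
  hi : ∀ x, i ≤ x → x ≤ 2 * i → f x ≤ 2 * j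
  eq : ∀ x, i ≤ x → x ≤ 2 * i → s (f x) = s x

theorem FrEmb.shift {s : ℕ → Fin 3} {i j : ℕ} {f : ℕ → ℕ} (h : FrEmb s i j f) (x y : ℕ)
    (hx : i ≤ x) (hxy : x ≤ y) (hy : y ≤ 2 * i) : f x + y ≤ f y + x := by
  induction y, hxy using Nat.le_induction with
  | base => exact le_rfl
  | succ y hxy ih =>
    have := h.mono y (y + 1) (by omega) (by omega) hy
    have := ih (by omega)
    omega

theorem FrEmb.adv {s : ℕ → Fin 3} {i j : ℕ} {f : ℕ → ℕ} (h : FrEmb s i j f) (x : ℕ)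
    (hx : i ≤ x) (hy : x ≤ 2 * i) : j + x ≤ f x + i := by
  have := h.shift i x le_rfl hx hy
  have := h.lo i le_rfl (by omega)
  omega

theorem FrEmb.count {D : ℕ → ℕ → ℕ} {i j : ℕ} {f : ℕ → ℕ} (h : FrEmb (frS D) i j f)
    (hj : 128 < j) (x y : ℕ)
    (hx : i ≤ x) (hxy : x ≤ y) (hy : y ≤ 2 * i) :
    frC D y + frC D (f x) ≤ frC D (f y) + frC D x := by
  classical
  induction y, hxy using Nat.le_induction with
  | base => omega
  | succ y hxy ih =>
    have h1 := h.mono y (y + 1) (by omega) (by omega) hy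
    have h2 := ih (by omega)
    have h3 := frC_mono D (Nat.succ_le_of_lt h1)
    rw [Nat.succ_eq_add_one, frC_succ] at h3
    rw [frC_succ]
    by_cases hO : ∃ n, frW D n = y
    · have hs : frS D y = 2 := by obtain ⟨n, rfl⟩ := hO; exact frS_W D n
      have h4 := frS_two D (f y) (by have := h.lo y (by omega) (by omega); omega)
        ((h.eq y (by omega) (by omega)).trans hs)
      rw [if_pos ⟨_, h4⟩] at h3
      rw [if_pos hO]; omega
    · rw [if_neg hO]; omega

/-! ### Windows in the main part -/

/-- Position of the first marker of group `k` behind the initial run. -/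
def frE (k : ℕ) : ℕ := frP k + 18 + (72 * 2 ^ k + 8 * k + 48)

theorem frE_ge (k : ℕ) : frP k + 138 ≤ frE k := by
  have := fr_arith k
  simp only [frE]; omega

theorem frW_E (D : ℕ → ℕ → ℕ) (hD : ∀ k c, 1 ≤ D k c ∧ D k c ≤ k + 5) (k : ℕ) :
    frW D (111 + 27 * k + 18) = frE k := by
  rw [frW_18, frW_base D hD]; rfl

theorem frZ_lt (D : ℕ → ℕ → ℕ) (hD : ∀ k c, 1 ≤ D k c ∧ D k c ≤ k + 5) (k : ℕ) :
    frZ D k < frP (k + 1) := by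
  have := fr_arith k
  have := frT_le D hD k
  rw [frP_succ]
  simp only [frZ, frP]; omega

theorem frZ_growth (D : ℕ → ℕ → ℕ) (hD : ∀ k c, 1 ≤ D k c ∧ D k c ≤ k + 5) (k : ℕ) :
    frZ D (k + 1) ≤ 2 * frE k := by
  have := fr_arith k
  have := frT_le D hD (k + 1)
  simp only [frZ, frE, frP, pow_succ]; omega

theorem frZ_zero (D : ℕ → ℕ → ℕ) (hD : ∀ k c, 1 ≤ D k c ∧ D k c ≤ k + 5) :
    frZ D 0 ≤ 444 := by
  have := frT_le D hD 0
  simp only [frZ, frP]; omega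

theorem frC_P (D : ℕ → ℕ → ℕ) (hD : ∀ k c, 1 ≤ D k c ∧ D k c ≤ k + 5) (k x : ℕ) (hx : x ≤ 18) :
    frC D (frP k + x) = 111 + 27 * k + x := by
  classical
  rcases Nat.lt_or_ge x 18 with h | h
  · rw [← frW_base D hD, ← frW_run D k x (by omega), frC_W]
  · obtain rfl : x = 18 := by omega
    have h1 := frW_run D k 17 le_rfl
    rw [frW_base D hD] at h1
    rw [show frP k + 18 = frP k + 17 + 1 by omega, ← h1, frC_succ, frC_W, if_pos ⟨_, rfl⟩]

theorem frP_find (j : ℕ) (hj : 240 < j) : ∃ l, frP l < j ∧ j ≤ frP (l + 1) := by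
  have hex : ∃ m, j ≤ frP m := ⟨j, by have := frP_ge j; omega⟩
  classical
  have h1 := Nat.find_spec hex
  have h2 : Nat.find hex ≠ 0 := by
    intro h0; rw [h0, frP_zero] at h1; omega
  obtain ⟨l, hl⟩ := Nat.exists_eq_succ_of_ne_zero h2
  refine ⟨l, ?_, by rw [hl] at h1; exact h1⟩
  have := Nat.find_min hex (show l < Nat.find hex by omega)
  omega

/-- Nonmarkers visible in a target window. -/
theorem fr_target (D : ℕ → ℕ → ℕ) (hD : ∀ k c, 1 ≤ D k c ∧ D k c ≤ k + 5) (j l y : ℕ)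
    (h1 : frP l < j) (h2 : j ≤ frP (l + 1)) (hy1 : j ≤ y) (hy2 : y ≤ 2 * j)
    (hs : frS D y = 1) :
    ∃ l' c, (l' = l ∨ l' = l + 1) ∧ c ≤ 9 ∧ frC D y = 111 + 27 * l' + 18 + c := by
  have hp := frP_ge l
  obtain ⟨l', c, hc, hC, -, -⟩ := frS_one D y (by omega) hs
  refine ⟨l', c, ?_, hc, hC⟩
  have a : 111 + 27 * l < frC D y := (frC_lt D _ _).2 (by rw [frW_base D hD]; omega)
  have b := (frC_lt D (111 + 27 * (l + 2)) y).not.2 (by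
    rw [frW_base D hD, frP_succ (l + 1)]; omega)
  omega

theorem fr_target_pre (D : ℕ → ℕ → ℕ) (hD : ∀ k c, 1 ≤ D k c ∧ D k c ≤ k + 5) (j y : ℕ)
    (h1 : 128 < j) (h2 : j ≤ 240) (hy1 : j ≤ y) (hy2 : y ≤ 2 * j)
    (hs : frS D y = 1) :
    ∃ c, c ≤ 9 ∧ frC D y = 111 + 18 + c := by
  obtain ⟨l', c, hc, hC, -, -⟩ := frS_one D y (by omega) hs
  refine ⟨c, hc, ?_⟩
  have b := (frC_lt D (111 + 27 * (0 + 1)) y).not.2 (by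
    rw [frW_base D hD, frP_succ 0, frP_zero]; omega)
  omega

/-- Exact alignment of two groups forces the digits to be ordered. -/
theorem fr_aligned (D : ℕ → ℕ → ℕ) (hD : ∀ k c, 1 ≤ D k c ∧ D k c ≤ k + 5) (i j k l : ℕ)
    (f : ℕ → ℕ) (h : FrEmb (frS D) i j f) (hj : 128 < j) (x1 x2 : ℕ)
    (hx1 : i ≤ x1) (hx2 : x2 ≤ 2 * i) (c1 : frC D x1 = 111 + 27 * k + 18)
    (c2 : frC D x2 = 111 + 27 * k + 27) (d1 : frC D (f x1) = 111 + 27 * l + 18)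
    (d2 : frC D (f x2) = 111 + 27 * l + 27) (c : ℕ) (hc : c < 8) : D k c ≤ D l c := by
  have gk : ∀ k, frW D (111 + 27 * k + 19 + c) = frW D (111 + 27 * k + 18 + c) + D k c + 1 := by
    intro k
    have a := frW_digits D k c (by omega)
    have b := frW_digits D k (c + 1) (by omega)
    rw [Finset.sum_range_succ] at b
    rw [show 111 + 27 * k + 19 + c = 111 + 27 * k + 18 + (c + 1) by omega]
    omega
  have g1 := gk k
  have g2 := gk l
  have hp := (hD k c).1
  obtain ⟨sx, cx⟩ := frS_one_of D (frW D (111 + 27 * k + 18 + c) + 1) (111 + 27 * k + 18 + c)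
    (by omega) (by rw [show 111 + 27 * k + 18 + c + 1 = 111 + 27 * k + 19 + c by omega]; omega)
  obtain ⟨sy, cy⟩ := frS_one_of D (frW D (111 + 27 * k + 18 + c) + D k c) (111 + 27 * k + 18 + c)
    (by omega) (by rw [show 111 + 27 * k + 18 + c + 1 = 111 + 27 * k + 19 + c by omega]; omega)
  generalize hX : frW D (111 + 27 * k + 18 + c) + 1 = x at *
  generalize hY : frW D (111 + 27 * k + 18 + c) + D k c = y at *
  have lx : x1 ≤ x := by
    by_contra hh
    have := frC_mono D (show x ≤ x1 by omega)
    omega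
  have ly : y ≤ x2 := by
    by_contra hh
    have := frC_mono D (show x2 ≤ y by omega)
    omega
  have m1 := h.count hj x1 x hx1 lx (by omega)
  have m2 := h.count hj x y (by omega) (by omega) (by omega)
  have m3 := h.count hj y x2 (by omega) ly hx2
  have sh := h.shift x y (by omega) (by omega) (by omega)
  have u1 := (frC_lt D (111 + 27 * l + 18 + c) (f x)).1 (by omega)
  have u2 := (frC_lt D (111 + 27 * l + 19 + c) (f y)).not.1 (by omega)
  have u3 : f y ≠ frW D (111 + 27 * l + 19 + c) := by
    intro e
    have := h.eq y (by omega) (by omega)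
    rw [e, frS_W, sy] at this
    exact absurd this (by decide)
  omega

/-- Sources starting in the initial run of group `k` or in the first gap. -/
theorem fr_typeA (D : ℕ → ℕ → ℕ) (hD : ∀ k c, 1 ≤ D k c ∧ D k c ≤ k + 5) (L : ℕ)
    (hbad : ∀ k l, k < l → l ≤ L → ∃ c < 8, D l c < D k c) (i j k l : ℕ)
    (f : ℕ → ℕ) (h : FrEmb (frS D) i j f) (hij : i < j) (hl : l ≤ L)
    (i1 : frP k < i) (i2 : i < frE k) (j1 : frP l < j) (j2 : j ≤ frP (l + 1)) : False := by
  have hpk := frP_ge k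
  have hpl := frP_ge l
  have sk := frP_succ k
  have sl := frP_succ l
  have sl2 := frP_succ (l + 1)
  have ek := frE_ge k
  have zk := frZ_lt D hD k
  have hkl : k ≤ l := by
    by_contra hh
    have := frP_mono.monotone (show l + 1 ≤ k by omega)
    omega
  have hj : 128 < j := by omega
  -- the last letter of the first gap
  have w17 := frW_run D k 17 le_rfl
  rw [frW_base D hD] at w17
  obtain ⟨s1, c1⟩ := frS_one_of D (frE k - 1) (111 + 27 * k + 17) (by omega)
    (by rw [show 111 + 27 * k + 17 + 1 = 111 + 27 * k + 18 by omega, frW_E D hD]; omega)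
  have w26 := frW_26 D hD k
  have eZ : frE k < frZ D k := by simp only [frE, frZ]; omega
  obtain ⟨s2, c2⟩ := frS_one_of D (frP (k + 1) - 1) (111 + 27 * k + 26) (by omega)
    (by rw [show 111 + 27 * k + 26 + 1 = 111 + 27 * (k + 1) by omega, frW_base D hD]; omega)
  generalize hx1 : frE k - 1 = x1 at *
  generalize hx2 : frP (k + 1) - 1 = x2 at *
  have ey1 := (h.eq x1 (by omega) (by omega)).trans s1
  have ey2 := (h.eq x2 (by omega) (by omega)).trans s2
  obtain ⟨l1, c', hl1, hc', C1⟩ := fr_target D hD j l (f x1) j1 j2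
    (h.lo x1 (by omega) (by omega)) (h.hi x1 (by omega) (by omega)) ey1
  obtain ⟨l2, c'', hl2, hc'', C2⟩ := fr_target D hD j l (f x2) j1 j2
    (h.lo x2 (by omega) (by omega)) (h.hi x2 (by omega) (by omega)) ey2
  have m12 := h.count hj x1 x2 (by omega) (by omega) (by omega)
  -- the marker following `x2`
  have cp := frC_P D hD (k + 1) 0 (by omega)
  have mp := h.count hj x2 (frP (k + 1)) (by omega) (by omega) (by omega)
  rw [add_zero] at cp
  have sp : frS D (frP (k + 1)) = 2 := by rw [← frW_base D hD]; exact frS_W D _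
  have ep := frS_two D (f (frP (k + 1)))
    (by have := h.lo (frP (k + 1)) (by omega) (by omega); omega)
    ((h.eq (frP (k + 1)) (by omega) (by omega)).trans sp)
  have lp := h.hi (frP (k + 1)) (by omega) (by omega)
  have mono2 := h.mono x2 (frP (k + 1)) (by omega) (by omega) (by omega)
  have wl2 := frW_base D hD (l + 2)
  have sm := (frW_strictMono D).monotone
  have sl2 : frP (l + 2) = 2 * frP (l + 1) + 1 := frP_succ (l + 1)
  rcases hl1 with hl1 | hl1
  · rw [hl1] at C1
    clear hl1
    rcases hl2 with hl2 | hl2 <;> rw [hl2] at C2 <;> clear hl2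
    · -- aligned
      have e1 : c' = 0 := by omega
      have e2 : c'' = 9 := by omega
      subst e1 e2
      rcases Nat.lt_or_ge k l with hlt | hge
      · obtain ⟨c, hc, hlt'⟩ := hbad k l hlt hl
        have := fr_aligned D hD i j k l f h hj x1 x2 (by omega) (by omega) (by omega) (by omega)
          (by omega) (by omega) c hc
        omega
      · have ekl : l = k := by omega
        rw [ekl] at C1 C2
        have ad := h.adv x1 (by omega) (by omega)
        have u2 := (frC_lt D (111 + 27 * k + 18) (f x1)).not.1 (by omega)
        rw [frW_E D hD] at u2
        have u3 : f x1 ≠ frE k := by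
          intro e
          rw [e, ← frW_E D hD, frS_W] at ey1
          exact absurd ey1 (by decide)
        omega
    · -- `x1` goes to group `l`, `x2` to group `l + 1`
      rcases Nat.lt_or_ge i (frP k + 9) with hs | hs
      · obtain ⟨s, rfl⟩ : ∃ s, i = frP k + s := ⟨i - frP k, by omega⟩
        have ci := frC_P D hD k s (by omega)
        have m0 := h.count hj (frP k + s) x1 (by omega) (by omega) (by omega)
        have cj := frC_mono D (h.lo (frP k + s) (by omega) (by omega))
        have u := (frC_lt D (111 + 27 * l + 17) j).not.1 (by omega)
        have w17' := frW_run D l 17 le_rfl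
        rw [frW_base D hD] at w17'
        have el := frE_ge (l + 1)
        -- no marker of the window lies behind the initial run of group `l + 1`
        have v1 : ¬ 111 + 27 * (l + 1) + 18 ≤ frC D (f (frP (k + 1))) := by
          intro hh
          have := sm hh
          rw [frW_E D hD, ep] at this
          omega
        omega
      · have cq := frC_P D hD (k + 1) 17 (by omega)
        have mq := h.count hj x2 (frP (k + 1) + 17) (by omega) (by omega) (by omega)
        have sq : frS D (frP (k + 1) + 17) = 2 := by
          rw [← frW_base D hD, ← frW_run D (k + 1) 17 le_rfl]; exact frS_W D _
        have eq := frS_two D (f (frP (k + 1) + 17))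
          (by have := h.lo (frP (k + 1) + 17) (by omega) (by omega); omega)
          ((h.eq (frP (k + 1) + 17) (by omega) (by omega)).trans sq)
        have lq := h.hi (frP (k + 1) + 17) (by omega) (by omega)
        have := sm (show 111 + 27 * (l + 2) ≤ frC D (f (frP (k + 1) + 17)) by omega)
        rw [wl2] at this
        omega
  · have := sm (show 111 + 27 * (l + 2) ≤ frC D (f (frP (k + 1))) by omega)
    rw [wl2] at this
    omega

/-- Sources containing the whole initial run of group `k` and all its markers. -/
theorem fr_typeB (D : ℕ → ℕ → ℕ) (hD : ∀ k c, 1 ≤ D k c ∧ D k c ≤ k + 5) (L : ℕ)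
    (hbad : ∀ k l, k < l → l ≤ L → ∃ c < 8, D l c < D k c) (i j k : ℕ)
    (f : ℕ → ℕ) (h : FrEmb (frS D) i j f) (hij : i < j) (hi : 128 < i) (hk : k = 0 ∨ frP (k - 1) < i)
    (i1 : i ≤ frP k) (i2 : frZ D k ≤ 2 * i) (hjL : j ≤ frP L) : False := by
  have hpk := frP_ge k
  have ek := frE_ge k
  have zk := frZ_lt D hD k
  have hj : 128 < j := by omega
  have w17 := frW_run D k 17 le_rfl
  rw [frW_base D hD] at w17
  obtain ⟨s1, c1⟩ := frS_one_of D (frP k + 18) (111 + 27 * k + 17) (by omega)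
    (by rw [show 111 + 27 * k + 17 + 1 = 111 + 27 * k + 18 by omega, frW_E D hD]; omega)
  have w26 := frW_26 D hD k
  have eZ : frE k < frZ D k := by simp only [frE, frZ]; omega
  obtain ⟨s2, c2⟩ := frS_one_of D (frZ D k) (111 + 27 * k + 26) (by omega)
    (by rw [show 111 + 27 * k + 26 + 1 = 111 + 27 * (k + 1) by omega, frW_base D hD]; omega)
  generalize hx2 : frZ D k = x2 at *
  have ey1 := (h.eq (frP k + 18) (by omega) (by omega)).trans s1
  have ey2 := (h.eq x2 (by omega) (by omega)).trans s2
  have m12 := h.count hj (frP k + 18) x2 (by omega) (by omega) (by omega)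
  have c0 := frC_P D hD k 0 (by omega)
  rw [add_zero] at c0
  have m01 := h.count hj (frP k) (frP k + 18) (by omega) (by omega) (by omega)
  have cj := frC_mono D (h.lo (frP k) (by omega) (by omega))
  -- alignment with group `k` itself is impossible
  have self : frC D (f (frP k + 18)) ≠ 111 + 27 * k + 18 := by
    intro e
    have c17 := frC_P D hD k 17 (by omega)
    have m := h.count hj (frP k + 17) (frP k + 18) (by omega) (by omega) (by omega)
    have ad := h.adv (frP k + 17) (by omega) (by omega)
    have := (frC_lt D (111 + 27 * k + 17) (f (frP k + 17))).2 (by omega)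
    omega
  rcases Nat.lt_or_ge 240 j with hj0 | hj0
  · obtain ⟨l, j1, j2⟩ := frP_find j hj0
    have hlL : l < L := frP_mono.lt_iff_lt.1 (by omega)
    have hkl : k ≤ l + 1 := by
      rcases hk with hk | hk
      · omega
      · have : frP (k - 1) < frP (l + 1) := by omega
        have := frP_mono.lt_iff_lt.1 this
        omega
    have sl := frP_succ l
    have cjl : 111 + 27 * l < frC D j := (frC_lt D _ _).2 (by rw [frW_base D hD]; omega)
    obtain ⟨l1, c', hl1, hc', C1⟩ := fr_target D hD j l (f (frP k + 18)) j1 j2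
      (h.lo _ (by omega) (by omega)) (h.hi _ (by omega) (by omega)) ey1
    obtain ⟨l2, c'', hl2, hc'', C2⟩ := fr_target D hD j l (f x2) j1 j2
      (h.lo x2 (by omega) (by omega)) (h.hi x2 (by omega) (by omega)) ey2
    rcases hl2 with rfl | rfl
    · omega
    · rcases hl1 with rfl | rfl
      · have u := (frC_lt D (111 + 27 * l1 + 9) j).not.1 (by omega)
        have w9 := frW_run D l1 9 (by omega)
        rw [frW_base D hD] at w9
        have w17' := frW_run D (l1 + 1) 17 le_rfl
        rw [frW_base D hD] at w17'
        have u2 := (frC_lt D (111 + 27 * (l1 + 1) + 17) (f x2)).1 (by omega)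
        have := h.hi x2 (by omega) (by omega)
        omega
      · have e1 : c' = 0 := by omega
        have e2 : c'' = 9 := by omega
        subst e1 e2
        rcases Nat.lt_or_ge k (l + 1) with hlt | hge
        · obtain ⟨c, hc, hlt'⟩ := hbad k (l + 1) hlt hlL
          have := fr_aligned D hD i j k (l + 1) f h hj (frP k + 18) x2 (by omega) (by omega)
            (by omega) (by omega) (by omega) (by omega) c hc
          omega
        · obtain rfl : k = l + 1 := by omega
          omega
  · have hk0 : k = 0 := by
      by_contra hk0
      rcases hk with hk | hk
      · omega
      · have := frP_ge (k - 1); omega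
    subst hk0
    obtain ⟨c', hc', C1⟩ := fr_target_pre D hD j (f (frP 0 + 18)) hj hj0
      (h.lo _ (by omega) (by omega)) (h.hi _ (by omega) (by omega)) ey1
    obtain ⟨c'', hc'', C2⟩ := fr_target_pre D hD j (f x2) hj hj0
      (h.lo x2 (by omega) (by omega)) (h.hi x2 (by omega) (by omega)) ey2
    omega

/-- Early sources, which contain at least `37` consecutive markers. -/
theorem fr_early (D : ℕ → ℕ → ℕ) (hD : ∀ k c, 1 ≤ D k c ∧ D k c ≤ k + 5) (i j : ℕ)
    (f : ℕ → ℕ) (h : FrEmb (frS D) i j f) (hij : i < j) (hi : 128 < i) (hi2 : i ≤ 221) :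
    False := by
  have hj : 128 < j := by omega
  have p0 := frP_zero
  have e0 := frE_ge 0
  have wi : ∀ n, n ≤ 128 → frW D n = 129 + n := by
    intro n hn
    rcases Nat.lt_or_ge n 111 with hh | hh
    · exact frW_init D n (by omega)
    · have := frW_run D 0 (n - 111) (by omega)
      rw [frW_base D hD] at this
      rw [show n = 111 + 27 * 0 + (n - 111) by omega, this]; omega
  have ci : ∀ y, 128 < y → y ≤ 257 → frC D y = y - 129 := by
    intro y h1 h2
    have := wi (y - 129) (by omega)
    rw [show y = frW D (y - 129) by omega, frC_W]; omega
  have ciI := ci i (by omega) (by omega)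
  have ci257 := ci 257 (by omega) (by omega)
  have m := h.count hj i 257 (by omega) (by omega) (by omega)
  have cj := frC_mono D (h.lo i (by omega) (by omega))
  rcases Nat.lt_or_ge 240 j with hj0 | hj0
  · obtain ⟨l, j1, j2⟩ := frP_find j hj0
    have sl := frP_succ l
    have sl2 : frP (l + 2) = 2 * frP (l + 1) + 1 := frP_succ (l + 1)
    have el := frE_ge (l + 1)
    have hf := h.hi 257 (by omega) (by omega)
    have s257 : frS D 257 = 2 := by
      have := frS_W D 128
      rwa [wi 128 le_rfl] at this
    have ef := frS_two D (f 257) (by have := h.lo 257 (by omega) (by omega); omega)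
      ((h.eq 257 (by omega) (by omega)).trans s257)
    have sm := frW_strictMono D
    rcases Nat.lt_or_ge (frP l + 9) j with q | q
    · rcases Nat.lt_or_ge (frP l + 18) j with q2 | q2
      · have a := frC_mono D q2.le
        rw [frC_P D hD l 18 le_rfl] at a
        have b : frC D (f 257) < 111 + 27 * (l + 2) := by
          apply sm.lt_iff_lt.1
          rw [ef, frW_base D hD]; omega
        omega
      · have a := frC_mono D (show frP l + 10 ≤ j by omega)
        rw [frC_P D hD l 10 (by omega)] at a
        have b : frC D (f 257) < 111 + 27 * (l + 1) + 18 := by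
          apply sm.lt_iff_lt.1
          rw [ef, frW_E D hD]; omega
        omega
    · obtain ⟨s, rfl⟩ : ∃ s, j = frP l + s := ⟨j - frP l, by omega⟩
      have a := frC_P D hD l s (by omega)
      have b := frC_mono D (show f 257 ≤ frP (l + 1) + (2 * s - 1) by omega)
      rw [frC_P D hD (l + 1) (2 * s - 1) (by omega)] at b
      omega
  · have cjj := ci j hj (by omega)
    obtain ⟨s1, c1⟩ := frS_one_of D 258 128 (by rw [wi 128 le_rfl]; omega)
      (by
        have := frW_E D hD 0
        rw [show 128 + 1 = 111 + 27 * 0 + 18 by omega, this]; omega)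
    have ey := (h.eq 258 (by omega) (by omega)).trans s1
    obtain ⟨c', hc', C1⟩ := fr_target_pre D hD j (f 258) hj hj0
      (h.lo _ (by omega) (by omega)) (h.hi _ (by omega) (by omega)) ey
    have m2 := h.count hj i 258 (by omega) (by omega) (by omega)
    have u := (frC_lt D (111 + 27 * 0 + 18) (f 258)).1 (by omega)
    have w0 := frW_E D hD 0
    rw [w0] at u
    have sh := h.shift 258 (2 * i) (by omega) (by omega) (by omega)
    have := h.hi (2 * i) (by omega) (by omega)
    omega

theorem fr_main (D : ℕ → ℕ → ℕ) (hD : ∀ k c, 1 ≤ D k c ∧ D k c ≤ k + 5) (L : ℕ)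
    (hbad : ∀ k l, k < l → l ≤ L → ∃ c < 8, D l c < D k c) (i j : ℕ)
    (f : ℕ → ℕ) (h : FrEmb (frS D) i j f) (hij : i < j) (hi : 128 < i) (hjL : j ≤ frP L) :
    False := by
  rcases Nat.lt_or_ge 240 i with h0 | h0
  · obtain ⟨k, i1, i2⟩ := frP_find i h0
    rcases Nat.lt_or_ge i (frE k) with hA | hB
    · obtain ⟨l, j1, j2⟩ := frP_find j (by omega)
      have hlL : l < L := frP_mono.lt_iff_lt.1 (by omega)
      exact fr_typeA D hD L hbad i j k l f h hij (by omega) i1 hA j1 j2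
    · have := frZ_growth D hD k
      exact fr_typeB D hD L hbad i j (k + 1) f h hij hi (Or.inr (by simpa using i1)) i2
        (by omega) hjL
  · rcases Nat.lt_or_ge 221 i with h1 | h1
    · have := frZ_zero D hD
      exact fr_typeB D hD L hbad i j 0 f h hij hi (Or.inl rfl) (by rw [frP_zero]; omega)
        (by omega) hjL
    · exact fr_early D hD i j f h hij hi h1

/-! ### The initial part of the word and the conclusion -/

/-- The first `257` letters (index `0` is a dummy). -/
def frFull : List (Fin 3) := frTbl ++ List.replicate 128 2

/-- The segment of `frFull` of length `n` starting at `x`. -/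
def frSeg (x n : ℕ) : List (Fin 3) := (frFull.drop x).take n

theorem frFull_length : frFull.length = 257 := by decide +kernel

theorem frTbl_length : frTbl.length = 129 := by decide +kernel

theorem frS_tail (D : ℕ → ℕ → ℕ) (y : ℕ) (h1 : 128 < y) (h2 : y ≤ 256) : frS D y = 2 := by
  obtain ⟨n, rfl⟩ : ∃ n, y = 129 + n := ⟨y - 129, by omega⟩
  have hw : frW D n = 129 + n := by
    rcases Nat.lt_or_ge n 111 with hn | hn
    · exact frW_init D n hn.le
    · have := frW_run D 0 (n - 111) (by omega)
      have h0 : frW D (111 + 27 * 0) = 129 + 111 := frW_init D 111 le_rfl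
      rw [h0] at this
      rw [show n = 111 + 27 * 0 + (n - 111) by omega, this]; omega
  rw [← hw]
  exact frS_W D n

theorem frS_full (D : ℕ → ℕ → ℕ) (y : ℕ) (h : y < 257) :
    frFull[y]'(by rw [frFull_length]; exact h) = frS D y := by
  rcases Nat.lt_or_ge 128 y with h1 | h1
  · rw [frS_tail D y h1 (by omega)]
    simp only [frFull]
    rw [List.getElem_append_right (by rw [frTbl_length]; omega), List.getElem_replicate]
  · simp only [frFull, frS]
    rw [if_pos h1, List.getElem_append_left (by rw [frTbl_length]; omega),
      List.getD_eq_getElem _ _ (by rw [frTbl_length]; omega)]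

theorem frSeg_eq (D : ℕ → ℕ → ℕ) (x n : ℕ) (h : x + n ≤ 257) :
    (List.range' x n).map (frS D) = frSeg x n := by
  have hl : frFull.length = 257 := frFull_length
  apply List.ext_getElem
  · simp [frSeg, hl]; omega
  · intro m h1 h2
    simp only [List.length_map, List.length_range'] at h1
    simp only [frSeg, List.getElem_map, List.getElem_range', List.getElem_take,
      List.getElem_drop, one_mul]
    exact (frS_full D (x + m) (by omega)).symm

theorem fr_sublist (s : ℕ → Fin 3) (f : ℕ → ℕ) (n : ℕ) : ∀ x a m,
    (∀ y z, x ≤ y → y < z → z < x + n → f y < f z) →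
    (∀ y, x ≤ y → y < x + n → a ≤ f y ∧ f y < a + m ∧ s (f y) = s y) →
    ((List.range' x n).map s).Sublist ((List.range' a m).map s) := by
  induction n with
  | zero => intro x a m _ _; simp
  | succ n ih =>
    intro x a m hm hf
    obtain ⟨h1, h2, h3⟩ := hf x le_rfl (by omega)
    have e : m = (f x - a) + (1 + (a + m - (f x + 1))) := by omega
    have e2 : List.range' a m = List.range' a (f x - a) ++
        f x :: List.range' (f x + 1) (a + m - (f x + 1)) := by
      conv_lhs => rw [e]
      rw [← List.range'_append_1, show a + (f x - a) = f x by omega, Nat.add_comm 1,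
        List.range'_succ]
    rw [e2, List.range'_succ, List.map_cons, List.map_append, List.map_cons, h3]
    refine List.Sublist.trans ?_ (List.sublist_append_right _ _)
    apply List.Sublist.cons_cons
    apply ih
    · intro y z hy hyz hz
      exact hm y z (by omega) hyz (by omega)
    · intro y hy hy2
      obtain ⟨g1, g2, g3⟩ := hf y (by omega) (by omega)
      have := hm x y le_rfl (by omega) (by omega)
      exact ⟨by omega, by omega, g3⟩

theorem fr_check_a : ∀ i < 64, ∀ j < 64, 1 ≤ i → i < j →
    (frSeg i (i + 1)).isSublist (frSeg j (j + 1)) = false := by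
  decide +kernel

theorem fr_check_b : ∀ i < 64, 1 ≤ i → ∃ n < i + 1,
    (frSeg i (n + 1)).isSublist (frSeg 64 65) = false ∧ frFull.getD (i + n) 0 ≠ 2 := by
  decide +kernel

theorem fr_check_c : ∀ i < 64, 1 ≤ i → ∃ n < i + 1, frFull.getD (i + n) 1 = 0 := by
  decide +kernel

theorem frS_128 (D : ℕ → ℕ → ℕ) : frS D 128 = 0 := by
  rw [← frS_full D 128 (by omega)]
  decide

/-- Windows starting in the initial part. -/
theorem fr_initial (D : ℕ → ℕ → ℕ) (i j : ℕ) (f : ℕ → ℕ) (h : FrEmb (frS D) i j f)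
    (h1 : 1 ≤ i) (hij : i < j) (hi : i ≤ 128) : False := by
  have gd : ∀ y d, y < 257 → frFull.getD y d = frS D y := by
    intro y d hy
    rw [List.getD_eq_getElem _ _ (by rw [frFull_length]; exact hy), frS_full D y hy]
  have key : ∀ x, i ≤ x → x ≤ 2 * i → frS D x = 0 → f x ≤ 128 := by
    intro x hx hx2 hs
    by_contra hc
    have e := h.eq x hx hx2
    rw [hs] at e
    rcases frS_cases D (f x) (by omega) with h0 | h0 <;> rw [h0] at e <;>
      exact absurd e (by decide)
  rcases Nat.lt_or_ge i 64 with hi64 | hi64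
  · rcases Nat.lt_or_ge j 64 with hj64 | hj64
    · have hc := fr_check_a i hi64 j hj64 h1 hij
      rw [← frSeg_eq D i (i + 1) (by omega), ← frSeg_eq D j (j + 1) (by omega)] at hc
      have hs := fr_sublist (frS D) f (i + 1) i j (j + 1)
        (fun y z a b c => h.mono y z a b (by omega))
        (fun y a b => ⟨h.lo y a (by omega), by
          have := h.hi y a (by omega)
          omega, h.eq y a (by omega)⟩)
      rw [← List.isSublist_iff_sublist, hc] at hs
      exact absurd hs (by decide)
    · rcases Nat.lt_or_ge 128 j with hj | hj
      · obtain ⟨n, hn, hz⟩ := fr_check_c i hi64 h1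
        rw [gd _ _ (by omega)] at hz
        have := key (i + n) (by omega) (by omega) hz
        have := h.lo (i + n) (by omega) (by omega)
        omega
      · obtain ⟨n, hn, hc, hz⟩ := fr_check_b i hi64 h1
        rw [gd _ _ (by omega)] at hz
        have hb : f (i + n) ≤ 128 := by
          by_contra hcon
          have := h.hi (i + n) (by omega) (by omega)
          rw [← h.eq (i + n) (by omega) (by omega)] at hz
          exact hz (frS_tail D _ (by omega) (by omega))
        rw [← frSeg_eq D i (n + 1) (by omega), ← frSeg_eq D 64 65 (by omega)] at hc
        have hs := fr_sublist (frS D) f (n + 1) i 64 65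
          (fun y z a b c => h.mono y z a b (by omega))
          (fun y a b => ⟨by
            have := h.lo y a (by omega)
            omega, by
            have := h.shift y (i + n) a (by omega) (by omega)
            omega, h.eq y a (by omega)⟩)
        rw [← List.isSublist_iff_sublist, hc] at hs
        exact absurd hs (by decide)
  · have := key 128 hi (by omega) (frS_128 D)
    have := h.adv 128 hi (by omega)
    omega

/-- The final word. -/
noncomputable def frWord (D : ℕ → ℕ → ℕ) (N : ℕ) : List (Fin 3) :=
  (List.range N).map fun x => frS D (x + 1)

theorem frWord_block (D : ℕ → ℕ → ℕ) (N i : ℕ) (h1 : 1 ≤ i) (h2 : 2 * i ≤ N) (m : ℕ) :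
    (friedmanBlock (frWord D N) i)[m]? = if m ≤ i then some (frS D (i + m)) else none := by
  simp only [friedmanBlock, frWord]
  split_ifs with hm
  · rw [List.getElem?_take_of_lt (by omega), List.getElem?_drop, List.getElem?_map,
      List.getElem?_range (by omega)]
    simp only [Option.map_some]
    congr 2
    omega
  · apply List.getElem?_eq_none
    simp
    omega

theorem frWord_emb (D : ℕ → ℕ → ℕ) (N i j : ℕ) (h1 : 1 ≤ i) (hij : i < j) (h2 : 2 * j ≤ N)
    (h : (friedmanBlock (frWord D N) i).Sublist (friedmanBlock (frWord D N) j)) :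
    ∃ f, FrEmb (frS D) i j f := by
  obtain ⟨g, hg⟩ := List.sublist_iff_exists_orderEmbedding_getElem?_eq.1 h
  have key : ∀ m ≤ i, g m ≤ j ∧ frS D (j + g m) = frS D (i + m) := by
    intro m hm
    have := hg m
    rw [frWord_block D N i h1 (by omega), frWord_block D N j (by omega) h2, if_pos hm] at this
    split_ifs at this with hc
    exact ⟨hc, (Option.some.inj this).symm⟩
  refine ⟨fun x => j + g (x - i), ?_, ?_, ?_, ?_⟩
  · intro x y hx hxy hy
    have : g (x - i) < g (y - i) := g.strictMono (by omega)
    show j + g (x - i) < j + g (y - i)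
    omega
  · intro x _ _
    show j ≤ j + g (x - i)
    omega
  · intro x hx hy
    have := (key (x - i) (by omega)).1
    show j + g (x - i) ≤ 2 * j
    omega
  · intro x hx hy
    have := (key (x - i) (by omega)).2
    rwa [show i + (x - i) = x by omega] at this

/-- n(3) > A(7,184): there is a word over a three-letter alphabet of length
greater than `A(7,184)` satisfying (*). -/
theorem friedman_n3_gt_A7_184 :
    ∃ s : List (Fin 3), SatisfiesStar s ∧ ackF 7 184 < s.length := by
  obtain ⟨L, D, hL, hD, hbad⟩ := fr_digits
  have hlen : (frWord D (2 * frP L)).length = 2 * frP L := by simp [frWord]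
  refine ⟨frWord D (2 * frP L), ?_, ?_⟩
  · intro i j h1 hij h2 hs
    rw [hlen] at h2
    obtain ⟨f, hf⟩ := frWord_emb D _ i j h1 hij h2 hs
    rcases Nat.lt_or_ge 128 i with hi | hi
    · exact fr_main D hD L hbad i j f hf hij hi (by omega)
    · exact fr_initial D i j f hf h1 hij hi
  · rw [hlen]
    have := frP_ge L
    omega
end

section
/- n(3) > A(7198, 158386): there exists a word over a three-letter alphabet of length greater than A(7198, 158386) satisfying property (*). -/
namespace FN3

/-- The three letters. -/
abbrev M : Fin 3 := 0
/-- Second letter. -/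
abbrev F : Fin 3 := 1
/-- Third letter. -/
abbrev S : Fin 3 := 2

open List

theorem block_eq {A B C : List (Fin 3)} {i : ℕ} (hA : A.length = i - 1)
    (hB : B.length = i + 1) : friedmanBlock (A ++ (B ++ C)) i = B := by
  unfold friedmanBlock
  rw [← hA, List.drop_left, ← hB, List.take_left]

/-! ### Part 1: the head of the word -/

/-- The segment of positions `a .. e` with `S` exactly at the listed positions, `M` elsewhere. -/
def seg : ℕ → List ℕ → ℕ → List (Fin 3)
  | a, [], e => replicate (e + 1 - a) M
  | a, q :: ps, e => replicate (q - a) M ++ S :: seg (q + 1) ps e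

/-- Well-formedness of a segment. -/
def good : ℕ → List ℕ → ℕ → Bool
  | a, [], e => Nat.ble a (e + 1)
  | a, q :: ps, e => Nat.ble a q && good (q + 1) ps e

theorem good_mono {ps : List ℕ} : ∀ {a a' e e' : ℕ}, good a ps e = true → a' ≤ a → e ≤ e' →
    good a' ps e' = true := by
  induction ps with
  | nil => intro a a' e e' h h1 h2; simp [good] at *; omega
  | cons q ps ih =>
    intro a a' e e' h h1 h2
    simp only [good, Bool.and_eq_true, Nat.ble_eq] at *
    exact ⟨by omega, ih h.2 le_rfl h2⟩

theorem good_le {ps : List ℕ} : ∀ {a e : ℕ}, good a ps e = true → a + ps.length ≤ e + 1 := by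
  induction ps with
  | nil => intro a e h; simp [good] at *; omega
  | cons q ps ih =>
    intro a e h
    simp only [good, Bool.and_eq_true, Nat.ble_eq] at h
    have := ih h.2
    simp; omega

theorem seg_length {ps : List ℕ} : ∀ {a e : ℕ}, good a ps e = true →
    (seg a ps e).length = e + 1 - a := by
  induction ps with
  | nil => intro a e h; simp [seg]
  | cons q ps ih =>
    intro a e h
    simp only [good, Bool.and_eq_true, Nat.ble_eq] at h
    have h1 := ih h.2
    have h2 := good_le h.2
    simp [seg, h1]; omega

theorem seg_append {ps₁ ps₂ : List ℕ} : ∀ {a m e : ℕ}, good a ps₁ m = true →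
    good (m + 1) ps₂ e = true →
    seg a (ps₁ ++ ps₂) e = seg a ps₁ m ++ seg (m + 1) ps₂ e := by
  induction ps₁ with
  | nil =>
    intro a m e h1 h2
    simp only [good, Nat.ble_eq] at h1
    cases ps₂ with
    | nil =>
      simp only [good, Nat.ble_eq] at h2
      simp only [seg, List.append_nil, List.replicate_append_replicate]
      congr 1; omega
    | cons q ps =>
      simp only [good, Bool.and_eq_true, Nat.ble_eq] at h2
      simp only [seg, List.nil_append, ← List.append_assoc, List.replicate_append_replicate]
      congr 2; omega
  | cons q ps ih =>
    intro a m e h1 h2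
    simp only [good, Bool.and_eq_true, Nat.ble_eq] at h1
    simp [seg, ih h1.2 h2]

theorem good_append {ps₁ ps₂ : List ℕ} {m e : ℕ} (h2 : good (m + 1) ps₂ e = true) :
    ∀ {a : ℕ}, good a ps₁ m = true → good a (ps₁ ++ ps₂) e = true := by
  induction ps₁ with
  | nil =>
    intro a h1
    simp only [good, Nat.ble_eq] at h1
    exact good_mono h2 h1 le_rfl
  | cons q ps ih =>
    intro a h1
    simp only [good, Bool.and_eq_true, Nat.ble_eq, List.cons_append] at *
    exact ⟨h1.1, ih h1.2⟩

theorem F_not_mem_seg {ps : List ℕ} : ∀ {a e : ℕ}, F ∉ seg a ps e := by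
  induction ps with
  | nil => intro a e; simp [seg, F, M]
  | cons q ps ih => intro a e; simp [seg, F, M, S, ih]

theorem count_S_seg {ps : List ℕ} : ∀ {a e : ℕ}, (seg a ps e).count S = ps.length := by
  induction ps with
  | nil => intro a e; simp [seg, S, M, List.count_replicate]
  | cons q ps ih => intro a e; simp [seg, M, S, ih, List.count_replicate]

theorem count_M_seg {ps : List ℕ} : ∀ {a e : ℕ}, good a ps e = true →
    (seg a ps e).count M + ps.length = e + 1 - a := by
  induction ps with
  | nil => intro a e h; simp [seg, M]
  | cons q ps ih =>
    intro a e h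
    simp only [good, Bool.and_eq_true, Nat.ble_eq] at h
    have h1 := ih h.2
    have h2 := good_le h.2
    simp [seg, M, S] at *; omega

theorem fact1 {m : Fin 3} (hm : m ≠ S) {R V : List (Fin 3)} : ∀ {h g : ℕ},
    replicate g m ++ S :: R <+ replicate h m ++ S :: V → R <+ V := by
  intro h
  induction h with
  | zero =>
    intro g H
    cases g with
    | zero => simpa using H
    | succ g =>
      rw [List.replicate_succ, List.cons_append] at H
      simp only [replicate_zero, List.nil_append] at H
      have H2 := (List.sublist_cons_iff.1 H)
      rcases H2 with H2 | ⟨r, hr, _⟩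
      · refine Sublist.trans ?_ H2
        exact ((List.sublist_cons_self _ _).trans (List.sublist_append_right _ _)).trans
          (List.sublist_cons_self _ _)
      · simp only [List.cons.injEq] at hr; exact absurd hr.1 hm
  | succ h ih =>
    intro g H
    cases g with
    | zero =>
      rw [List.replicate_succ, List.cons_append] at H
      simp only [replicate_zero, List.nil_append] at H
      rcases List.sublist_cons_iff.1 H with H2 | ⟨r, hr, _⟩
      · exact ih (g := 0) (by simpa using H2)
      · simp only [List.cons.injEq] at hr; exact absurd hr.1.symm hm
    | succ g =>
      rw [List.replicate_succ, List.replicate_succ, List.cons_append, List.cons_append,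
        List.cons_sublist_cons] at H
      exact ih H

theorem fact2 {m : Fin 3} (hm : m ≠ S) {R V : List (Fin 3)} : ∀ {h g : ℕ}, h < g →
    replicate g m ++ S :: R <+ replicate h m ++ S :: V →
    replicate g m ++ S :: R <+ replicate h m ++ V := by
  intro h
  induction h with
  | zero =>
    intro g hg H
    obtain ⟨g, rfl⟩ : ∃ k, g = k + 1 := ⟨g - 1, by omega⟩
    rw [List.replicate_succ, List.cons_append] at *
    simp only [replicate_zero, List.nil_append] at *
    rcases List.sublist_cons_iff.1 H with H2 | ⟨r, hr, _⟩
    · exact H2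
    · simp only [List.cons.injEq] at hr; exact absurd hr.1 hm
  | succ h ih =>
    intro g hg H
    obtain ⟨g, rfl⟩ : ∃ k, g = k + 1 := ⟨g - 1, by omega⟩
    rw [List.replicate_succ, List.replicate_succ, List.cons_append, List.cons_append,
        List.cons_sublist_cons] at *
    exact ih (by omega) H

/-- Greedy matcher. -/
def mr (H : ℕ) : List ℕ → List ℕ → ℕ → ℕ → ℕ → Bool
  | qs, [], pp, c, b => Nat.blt (H + pp + c + 1) (b + qs.length)
  | [], _ :: _, _, _, _ => true
  | q :: qs, p :: ps, pp, c, b =>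
    bif Nat.ble (p - (pp + 1)) (c + (q - b)) then mr H qs ps p 0 (q + 1)
    else mr H qs (p :: ps) pp (c + (q - b)) (q + 1)
termination_by structural qs => qs

theorem mr_sound {H : ℕ} {qs : List ℕ} : ∀ {ps : List ℕ} {pp c b eu ev : ℕ},
    mr H qs ps pp c b = true → good (pp + 1) ps eu = true → good b qs ev = true →
    ev ≤ eu + H →
    ¬ (seg (pp + 1) ps eu <+ replicate c M ++ seg b qs ev) := by
  induction qs with
  | nil =>
    intro ps pp c b eu ev h gu gv hH hs
    cases ps with
    | nil =>
      have h1 := hs.count_le M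
      have h2 := count_M_seg gu
      have h3 := count_M_seg gv
      have h4 := good_le gv
      have h5 := good_le gu
      simp [mr] at h h2 h3 h4 h5
      rw [List.count_append, List.count_replicate_self] at h1
      omega
    | cons p ps =>
      have h1 := hs.count_le S
      rw [List.count_append, count_S_seg, count_S_seg] at h1
      simp [S, M, List.count_replicate] at h1
  | cons q qs ih =>
    intro ps pp c b eu ev h gu gv hH hs
    cases ps with
    | nil =>
      have h1 := hs.count_le M
      have h2 := count_M_seg gu
      have h3 := count_M_seg gv
      have h4 := good_le gv
      have h5 := good_le gu
      simp [mr] at h h2 h3 h4 h5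
      rw [List.count_append, List.count_replicate_self] at h1
      omega
    | cons p ps =>
      simp only [good, Bool.and_eq_true, Nat.ble_eq] at gu gv
      simp only [seg] at hs
      rw [← List.append_assoc, List.replicate_append_replicate] at hs
      rw [mr] at h
      by_cases hc : p - (pp + 1) ≤ c + (q - b)
      · rw [show Nat.ble (p - (pp + 1)) (c + (q - b)) = true by
          rw [Nat.ble_eq]; exact hc, cond_true] at h
        have := fact1 (by decide) hs
        exact ih h gu.2 gv.2 hH (by simpa using this)
      · rw [show Nat.ble (p - (pp + 1)) (c + (q - b)) = false by
          rw [← Bool.not_eq_true, Nat.ble_eq]; exact hc, cond_false] at h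
        have := fact2 (by decide) (by omega) hs
        refine ih h (by simp [good]; exact gu) gv.2 hH ?_
        simpa [seg] using this

/-- Truncated minimum through `Nat.ble`. -/
def bmin (a b : ℕ) : ℕ := bif Nat.ble a b then a else b
/-- Maximum through `Nat.ble`. -/
def bmax (a b : ℕ) : ℕ := bif Nat.ble a b then b else a

theorem le_bmin {a b c : ℕ} (h : c ≤ a) (h' : c ≤ b) : c ≤ bmin a b := by
  unfold bmin; cases Nat.ble a b <;> simpa

theorem bmax_le {a b c : ℕ} (h : a ≤ c) (h' : b ≤ c) : bmax a b ≤ c := by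
  unfold bmax; cases Nat.ble a b <;> simpa

/-- Check of a pair of phases. `g = j0 - i1` lower bound, `w = j1 - i0` upper bound of `j - i`. -/
def st (g w p0 : ℕ) (ps : List ℕ) : List ℕ → ℕ → Bool
  | [], _ => true
  | q :: qs, k =>
    Nat.blt qs.length ps.length ||
      ((Nat.blt q (p0 + k + bmax 1 g) || mr (2 * bmin (q - p0 - k) w) qs ps p0 0 (q + 1))
        && st g w p0 ps qs (k + 1))

theorem st_sound {g w p0 : ℕ} {ps qs : List ℕ} : ∀ {k i j b c : ℕ},
    st g w p0 ps qs k = true → i < j → g ≤ j - i → j - i ≤ w → i ≤ p0 →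
    good (p0 + 1) ps (2 * i) = true → good b qs (2 * j) = true → c + k + j = b →
    ¬ (replicate (p0 - i) M ++ S :: seg (p0 + 1) ps (2 * i) <+
      replicate c M ++ seg b qs (2 * j)) := by
  induction qs with
  | nil =>
    intro k i j b c _ _ _ _ _ _ _ _ hs
    have h1 := hs.count_le S
    rw [List.count_append, List.count_append, count_S_seg, List.count_cons] at h1
    simp [S, M, List.count_replicate] at h1
  | cons q qs ih =>
    intro k i j b c h hij hg hw hi gu gv hc hs
    simp only [st, Bool.and_eq_true, Bool.or_eq_true] at h
    rcases h with h | h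
    · simp only [Nat.blt_eq] at h
      have h1 := hs.count_le S
      rw [List.count_append, List.count_append, count_S_seg, List.count_cons, count_S_seg] at h1
      simp [S, M, List.count_replicate] at h1
      omega
    obtain ⟨h1, h2⟩ := h
    simp only [good, Bool.and_eq_true, Nat.ble_eq] at gv
    simp only [seg] at hs
    rw [← List.append_assoc, List.replicate_append_replicate] at hs
    have hm : bmax 1 g ≤ j - i := bmax_le (by omega) hg
    by_cases hq : p0 - i ≤ c + (q - b)
    · rcases h1 with h1 | h1
      · simp only [Nat.blt_eq] at h1; omega
      · have hb : j - i ≤ bmin (q - p0 - k) w := le_bmin (by omega) hw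
        exact mr_sound h1 gu gv.2 (by omega) (by simpa using fact1 (by decide) hs)
    · exact ih h2 hij hg hw hi gu gv.2 (by omega) (fact2 (by decide) (by omega) hs)


/-- End of the head. -/
def pp : ℕ := 106493
/-- Last index of a head block containing a code. -/
def s1 : ℕ := 53246

theorem pp_val : pp = 106493 := rfl
theorem s1_val : s1 = 53246 := rfl

/-- Positions of the letter `S` in the head of the word. -/
def pos : List ℕ :=
  [5, 8, 10, 11, 12, 13, 15, 16, 17, 19, 20, 21, 22, 23, 24, 25, 26, 27, 28, 29, 30, 31,
   32, 33, 34, 35, 50, 51, 52, 53, 54, 55, 56, 57, 58, 59, 60, 102, 103, 104, 105, 106,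
   107, 108, 109, 110, 111, 206, 207, 208, 209, 210, 211, 212, 213, 214, 414, 415, 416,
   417, 418, 419, 420, 421, 830, 831, 832, 833, 834, 835, 836, 1662, 1663, 1664, 1665,
   1666, 1667, 3326, 3327, 3328, 3329, 3330, 6654, 6655, 6656, 6657, 13310, 13311, 13312,
   26622, 26623, 53246]

/-- Phases: `(last index, offset in pos, S-positions)`. -/
def phases : List (ℕ × ℕ × List ℕ) := [
  (4, 0, [5, 8]),
  (5, 0, [5, 8, 10]),
  (6, 1, [8, 10, 11, 12]),
  (7, 1, [8, 10, 11, 12, 13]),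
  (8, 1, [8, 10, 11, 12, 13, 15, 16]),
  (9, 2, [10, 11, 12, 13, 15, 16, 17]),
  (10, 2, [10, 11, 12, 13, 15, 16, 17, 19, 20]),
  (11, 3, [11, 12, 13, 15, 16, 17, 19, 20, 21, 22]),
  (12, 4, [12, 13, 15, 16, 17, 19, 20, 21, 22, 23, 24]),
  (13, 5, [13, 15, 16, 17, 19, 20, 21, 22, 23, 24, 25, 26]),
  (14, 6, [15, 16, 17, 19, 20, 21, 22, 23, 24, 25, 26, 27, 28]),
  (15, 6, [15, 16, 17, 19, 20, 21, 22, 23, 24, 25, 26, 27, 28, 29, 30]),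
  (16, 7, [16, 17, 19, 20, 21, 22, 23, 24, 25, 26, 27, 28, 29, 30, 31, 32]),
  (17, 8, [17, 19, 20, 21, 22, 23, 24, 25, 26, 27, 28, 29, 30, 31, 32, 33, 34]),
  (19, 9, [19, 20, 21, 22, 23, 24, 25, 26, 27, 28, 29, 30, 31, 32, 33, 34, 35]),
  (20, 10, [20, 21, 22, 23, 24, 25, 26, 27, 28, 29, 30, 31, 32, 33, 34, 35]),
  (21, 11, [21, 22, 23, 24, 25, 26, 27, 28, 29, 30, 31, 32, 33, 34, 35]),
  (22, 12, [22, 23, 24, 25, 26, 27, 28, 29, 30, 31, 32, 33, 34, 35]),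
  (23, 13, [23, 24, 25, 26, 27, 28, 29, 30, 31, 32, 33, 34, 35]),
  (24, 14, [24, 25, 26, 27, 28, 29, 30, 31, 32, 33, 34, 35]),
  (25, 15, [25, 26, 27, 28, 29, 30, 31, 32, 33, 34, 35, 50]),
  (26, 16, [26, 27, 28, 29, 30, 31, 32, 33, 34, 35, 50, 51, 52]),
  (27, 17, [27, 28, 29, 30, 31, 32, 33, 34, 35, 50, 51, 52, 53, 54]),
  (28, 18, [28, 29, 30, 31, 32, 33, 34, 35, 50, 51, 52, 53, 54, 55, 56]),
  (29, 19, [29, 30, 31, 32, 33, 34, 35, 50, 51, 52, 53, 54, 55, 56, 57, 58]),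
  (30, 20, [30, 31, 32, 33, 34, 35, 50, 51, 52, 53, 54, 55, 56, 57, 58, 59, 60]),
  (31, 21, [31, 32, 33, 34, 35, 50, 51, 52, 53, 54, 55, 56, 57, 58, 59, 60]),
  (32, 22, [32, 33, 34, 35, 50, 51, 52, 53, 54, 55, 56, 57, 58, 59, 60]),
  (33, 23, [33, 34, 35, 50, 51, 52, 53, 54, 55, 56, 57, 58, 59, 60]),
  (34, 24, [34, 35, 50, 51, 52, 53, 54, 55, 56, 57, 58, 59, 60]),
  (35, 25, [35, 50, 51, 52, 53, 54, 55, 56, 57, 58, 59, 60]),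
  (50, 26, [50, 51, 52, 53, 54, 55, 56, 57, 58, 59, 60]),
  (51, 27, [51, 52, 53, 54, 55, 56, 57, 58, 59, 60, 102]),
  (52, 28, [52, 53, 54, 55, 56, 57, 58, 59, 60, 102, 103, 104]),
  (53, 29, [53, 54, 55, 56, 57, 58, 59, 60, 102, 103, 104, 105, 106]),
  (54, 30, [54, 55, 56, 57, 58, 59, 60, 102, 103, 104, 105, 106, 107, 108]),
  (55, 31, [55, 56, 57, 58, 59, 60, 102, 103, 104, 105, 106, 107, 108, 109, 110]),
  (56, 32, [56, 57, 58, 59, 60, 102, 103, 104, 105, 106, 107, 108, 109, 110, 111]),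
  (57, 33, [57, 58, 59, 60, 102, 103, 104, 105, 106, 107, 108, 109, 110, 111]),
  (58, 34, [58, 59, 60, 102, 103, 104, 105, 106, 107, 108, 109, 110, 111]),
  (59, 35, [59, 60, 102, 103, 104, 105, 106, 107, 108, 109, 110, 111]),
  (60, 36, [60, 102, 103, 104, 105, 106, 107, 108, 109, 110, 111]),
  (102, 37, [102, 103, 104, 105, 106, 107, 108, 109, 110, 111]),
  (103, 38, [103, 104, 105, 106, 107, 108, 109, 110, 111, 206]),
  (104, 39, [104, 105, 106, 107, 108, 109, 110, 111, 206, 207, 208]),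
  (105, 40, [105, 106, 107, 108, 109, 110, 111, 206, 207, 208, 209, 210]),
  (106, 41, [106, 107, 108, 109, 110, 111, 206, 207, 208, 209, 210, 211, 212]),
  (107, 42, [107, 108, 109, 110, 111, 206, 207, 208, 209, 210, 211, 212, 213, 214]),
  (108, 43, [108, 109, 110, 111, 206, 207, 208, 209, 210, 211, 212, 213, 214]),
  (109, 44, [109, 110, 111, 206, 207, 208, 209, 210, 211, 212, 213, 214]),
  (110, 45, [110, 111, 206, 207, 208, 209, 210, 211, 212, 213, 214]),
  (111, 46, [111, 206, 207, 208, 209, 210, 211, 212, 213, 214]),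
  (206, 47, [206, 207, 208, 209, 210, 211, 212, 213, 214]),
  (207, 48, [207, 208, 209, 210, 211, 212, 213, 214, 414]),
  (208, 49, [208, 209, 210, 211, 212, 213, 214, 414, 415, 416]),
  (209, 50, [209, 210, 211, 212, 213, 214, 414, 415, 416, 417, 418]),
  (210, 51, [210, 211, 212, 213, 214, 414, 415, 416, 417, 418, 419, 420]),
  (211, 52, [211, 212, 213, 214, 414, 415, 416, 417, 418, 419, 420, 421]),
  (212, 53, [212, 213, 214, 414, 415, 416, 417, 418, 419, 420, 421]),
  (213, 54, [213, 214, 414, 415, 416, 417, 418, 419, 420, 421]),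
  (214, 55, [214, 414, 415, 416, 417, 418, 419, 420, 421]),
  (414, 56, [414, 415, 416, 417, 418, 419, 420, 421]),
  (415, 57, [415, 416, 417, 418, 419, 420, 421, 830]),
  (416, 58, [416, 417, 418, 419, 420, 421, 830, 831, 832]),
  (417, 59, [417, 418, 419, 420, 421, 830, 831, 832, 833, 834]),
  (418, 60, [418, 419, 420, 421, 830, 831, 832, 833, 834, 835, 836]),
  (419, 61, [419, 420, 421, 830, 831, 832, 833, 834, 835, 836]),
  (420, 62, [420, 421, 830, 831, 832, 833, 834, 835, 836]),
  (421, 63, [421, 830, 831, 832, 833, 834, 835, 836]),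
  (830, 64, [830, 831, 832, 833, 834, 835, 836]),
  (831, 65, [831, 832, 833, 834, 835, 836, 1662]),
  (832, 66, [832, 833, 834, 835, 836, 1662, 1663, 1664]),
  (833, 67, [833, 834, 835, 836, 1662, 1663, 1664, 1665, 1666]),
  (834, 68, [834, 835, 836, 1662, 1663, 1664, 1665, 1666, 1667]),
  (835, 69, [835, 836, 1662, 1663, 1664, 1665, 1666, 1667]),
  (836, 70, [836, 1662, 1663, 1664, 1665, 1666, 1667]),
  (1662, 71, [1662, 1663, 1664, 1665, 1666, 1667]),
  (1663, 72, [1663, 1664, 1665, 1666, 1667, 3326]),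
  (1664, 73, [1664, 1665, 1666, 1667, 3326, 3327, 3328]),
  (1665, 74, [1665, 1666, 1667, 3326, 3327, 3328, 3329, 3330]),
  (1666, 75, [1666, 1667, 3326, 3327, 3328, 3329, 3330]),
  (1667, 76, [1667, 3326, 3327, 3328, 3329, 3330]),
  (3326, 77, [3326, 3327, 3328, 3329, 3330]),
  (3327, 78, [3327, 3328, 3329, 3330, 6654]),
  (3328, 79, [3328, 3329, 3330, 6654, 6655, 6656]),
  (3329, 80, [3329, 3330, 6654, 6655, 6656, 6657]),
  (3330, 81, [3330, 6654, 6655, 6656, 6657]),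
  (6654, 82, [6654, 6655, 6656, 6657]),
  (6655, 83, [6655, 6656, 6657, 13310]),
  (6656, 84, [6656, 6657, 13310, 13311, 13312]),
  (6657, 85, [6657, 13310, 13311, 13312]),
  (13310, 86, [13310, 13311, 13312]),
  (13311, 87, [13311, 13312, 26622]),
  (13312, 88, [13312, 26622, 26623]),
  (26622, 89, [26622, 26623]),
  (26623, 90, [26623, 53246]),
  (53246, 91, [53246])]


/-- Boolean list equality through `Nat.beq`. -/
def leq : List ℕ → List ℕ → Bool
  | [], [] => true
  | a :: l, b :: m => Nat.beq a b && leq l m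
  | _, _ => false

theorem leq_eq : ∀ {l m : List ℕ}, leq l m = true → l = m
  | [], [], _ => rfl
  | a :: l, b :: m, h => by
    simp only [leq, Bool.and_eq_true, Nat.beq_eq] at h
    rw [h.1, leq_eq h.2]
  | [], _ :: _, h => by simp [leq] at h
  | _ :: _, [], h => by simp [leq] at h

/-- Well-formedness of one phase. -/
def pok (i0 i1 a : ℕ) (ps : List ℕ) : Bool :=
  leq (pos.take a ++ (ps ++ pos.drop (a + ps.length))) pos && good 4 (pos.take a) (i0 - 1) &&
    good i1 ps (2 * i0) && good (2 * i1 + 1) (pos.drop (a + ps.length)) pp &&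
    (match ps with | [] => false | p0 :: ps => Nat.blt (p0 + ps.length) (2 * i0))

/-- All phases are fine and cover everything. -/
def poks : ℕ → List (ℕ × ℕ × List ℕ) → Bool
  | s, [] => Nat.beq s (s1 + 1)
  | s, (i1, a, ps) :: L => Nat.ble s i1 && pok s i1 a ps && poks (i1 + 1) L

/-- One phase against all later ones. -/
def chkV (i0 i1 p0 : ℕ) (ps : List ℕ) : ℕ → List (ℕ × ℕ × List ℕ) → Bool
  | _, [] => true
  | s, (j1, _, qs) :: L => st (s - i1) (j1 - i0) p0 ps qs 0 && chkV i0 i1 p0 ps (j1 + 1) L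

/-- All pairs of phases. -/
def chk : ℕ → List (ℕ × ℕ × List ℕ) → Bool
  | _, [] => true
  | s, (i1, _, p0 :: ps) :: L => chkV s i1 p0 ps (i1 + 1) L && chk (i1 + 1) L
  | _, (_, _, []) :: _ => false

theorem poks_phases : poks 4 phases = true := by decide +kernel
theorem chk_phases : chk 4 phases = true := by decide +kernel

/-- The head of the word. -/
def head : List (Fin 3) := [M, F, F] ++ seg 4 pos pp

theorem good_pos : good 4 pos s1 = true := by decide +kernel

theorem head_length : head.length = pp := by
  have := seg_length (good_mono good_pos le_rfl (show s1 ≤ pp by decide))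
  have h := pp_val
  rw [head, List.length_append, this]
  simp only [List.length_cons, List.length_nil]
  omega

/-- Information on a block in a phase. -/
structure PhaseInfo (T : List (Fin 3)) (i : ℕ) (ps : List ℕ) : Prop where
  good : good i ps (2 * i) = true
  block : friedmanBlock (head ++ T) i = seg i ps (2 * i)
  last : ∃ p0 ps', ps = p0 :: ps' ∧ p0 + ps'.length < 2 * i

theorem pok_info {i0 i1 a : ℕ} {ps : List ℕ} (h : pok i0 i1 a ps = true) (T : List (Fin 3))
    {i : ℕ} (h0 : i0 ≤ i) (h1 : i ≤ i1) (h4 : 4 ≤ i0) : PhaseInfo T i ps := by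
  simp only [pok, Bool.and_eq_true] at h
  obtain ⟨⟨⟨⟨e, g1⟩, g2⟩, g3⟩, g4⟩ := h
  have e := leq_eq e
  have g1 : FN3.good 4 (pos.take a) (i - 1) = true := good_mono g1 le_rfl (by omega)
  have g2 : FN3.good i ps (2 * i) = true := good_mono g2 h1 (by omega)
  have g3 : FN3.good (2 * i + 1) (pos.drop (a + ps.length)) pp = true :=
    good_mono g3 (by omega) le_rfl
  have l1 := good_le g3
  have hi : i - 1 + 1 = i := by omega
  refine ⟨g2, ?_, ?_⟩
  · have e1 := seg_append g2 g3
    have g23 := good_append g3 g2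
    have e2 := seg_append g1 (by rw [hi]; exact g23)
    rw [hi, e1, e] at e2
    have : head ++ T = ([M, F, F] ++ seg 4 (pos.take a) (i - 1)) ++ (seg i ps (2 * i) ++
        (seg (2 * i + 1) (pos.drop (a + ps.length)) pp ++ T)) := by
      rw [head, e2]; simp
    rw [this]
    apply block_eq
    · rw [List.length_append, seg_length g1]; simp; omega
    · rw [seg_length g2]; omega
  · cases ps with
    | nil => simp at g4
    | cons p0 ps' =>
      simp only [Nat.blt_eq] at g4
      exact ⟨p0, ps', rfl, by omega⟩

theorem poks_info {L : List (ℕ × ℕ × List ℕ)} : ∀ {s : ℕ}, poks s L = true → 4 ≤ s →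
    ∀ (T : List (Fin 3)) {i : ℕ}, s ≤ i → i ≤ s1 → ∃ ps, PhaseInfo T i ps := by
  induction L with
  | nil => intro s h _ T i h1 h2; simp [poks] at h; omega
  | cons x L ih =>
    obtain ⟨i1, a, ps⟩ := x
    intro s h h4 T i h1 h2
    simp only [poks, Bool.and_eq_true, Nat.ble_eq] at h
    by_cases hi : i ≤ i1
    · exact ⟨ps, pok_info h.1.2 T h1 hi h4⟩
    · exact ih h.2 (by omega) T (by omega) h2

theorem chkV_sound {i0 i1 p0 : ℕ} {ps : List ℕ} {T : List (Fin 3)} {i : ℕ}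
    (hi0 : i0 ≤ i) (hi1 : i ≤ i1) (hu : PhaseInfo T i (p0 :: ps))
    {L : List (ℕ × ℕ × List ℕ)} : ∀ {s : ℕ}, poks s L = true → chkV i0 i1 p0 ps s L = true →
    4 ≤ s → ∀ {j : ℕ}, i < j → s ≤ j → j ≤ s1 →
      ¬ (friedmanBlock (head ++ T) i <+ friedmanBlock (head ++ T) j) := by
  induction L with
  | nil => intro s h _ _ j _ h1 h2; simp [poks] at h; omega
  | cons x L ih =>
    obtain ⟨j1, b, qs⟩ := x
    intro s h hc h4 j hij h1 h2
    simp only [poks, chkV, Bool.and_eq_true, Nat.ble_eq] at h hc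
    by_cases hj : j ≤ j1
    · have hv := pok_info h.1.2 T h1 hj h4
      rw [hu.block, hv.block]
      have gu := hu.good
      simp only [good, Bool.and_eq_true, Nat.ble_eq] at gu
      have := st_sound (c := 0) hc.1 hij (by omega) (by omega) gu.1 gu.2 hv.good (by omega)
      simpa [seg] using this
    · exact ih h.2 hc.2 (by omega) hij (by omega) h2

theorem chk_sound {T : List (Fin 3)}
    {L : List (ℕ × ℕ × List ℕ)} : ∀ {s : ℕ}, poks s L = true → chk s L = true →
    4 ≤ s → ∀ {i j : ℕ}, i < j → s ≤ i → j ≤ s1 →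
      ¬ (friedmanBlock (head ++ T) i <+ friedmanBlock (head ++ T) j) := by
  induction L with
  | nil => intro s h _ _ i j _ h1 h2; simp [poks] at h; omega
  | cons x L ih =>
    obtain ⟨i1, a, ps⟩ := x
    intro s h hc h4 i j hij h1 h2
    cases ps with
    | nil => simp [chk] at hc
    | cons p0 ps =>
      simp only [poks, chk, Bool.and_eq_true, Nat.ble_eq] at h hc
      by_cases hi : i ≤ i1
      · have hu := pok_info h.1.2 T h1 hi h4
        by_cases hj : j ≤ i1
        · have hv := pok_info h.1.2 T (by omega) hj h4
          rw [hu.block, hv.block]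
          intro hs
          -- same phase: count of `S` forces leading parts to embed
          have gu := hu.good
          have gv := hv.good
          simp only [good, Bool.and_eq_true, Nat.ble_eq] at gu gv
          simp only [seg] at hs
          have := fact2 (by decide) (by omega) hs
          have := this.count_le S
          simp [List.count_append, count_S_seg, S, M, List.count_replicate] at this
        · exact chkV_sound h1 hi hu h.2 hc.1 (by omega) hij (by omega) h2
      · exact ih h.2 hc.2 (by omega) hij (by omega) h2

theorem head_split : head = ([M, F, F] ++ seg 4 pos s1) ++ replicate (s1 + 1) M := by
  have h : good (s1 + 1) [] pp = true := by decide
  have := seg_append good_pos h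
  rw [List.append_nil] at this
  rw [head, this, ← List.append_assoc]
  have e : pp + 1 - (s1 + 1) = s1 + 1 := rfl
  rw [show seg (s1 + 1) [] pp = replicate (pp + 1 - (s1 + 1)) M from rfl, e]

theorem block_late_aux {Hd T : List (Fin 3)} {p s i : ℕ} (hp : p = 2 * s + 1)
    (hd : Hd.length = s) (h1 : s < i) (h2 : i ≤ p) :
    friedmanBlock ((Hd ++ replicate (s + 1) M) ++ (replicate p S ++ T)) i
      = replicate (p + 1 - i) M ++ replicate (2 * i - p) S := by
  have e1 : replicate (s + 1) M = replicate (i - (s + 1)) M ++ replicate (p + 1 - i) M := by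
    rw [List.replicate_append_replicate, show i - (s + 1) + (p + 1 - i) = s + 1 by omega]
  have e2 : replicate p S = replicate (2 * i - p) S ++ replicate (2 * p - 2 * i) S := by
    rw [List.replicate_append_replicate, show 2 * i - p + (2 * p - 2 * i) = p by omega]
  have : (Hd ++ replicate (s + 1) M) ++ (replicate p S ++ T) = (Hd ++
      replicate (i - (s + 1)) M) ++ ((replicate (p + 1 - i) M ++ replicate (2 * i - p) S) ++
      (replicate (2 * p - 2 * i) S ++ T)) := by
    rw [e1, e2]; simp only [List.append_assoc]
  rw [this]
  apply block_eq
  · simp only [List.length_append, hd, List.length_replicate]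
    omega
  · simp only [List.length_append, List.length_replicate]; omega

theorem block_late {T : List (Fin 3)} {i : ℕ} (h1 : s1 < i) (h2 : i ≤ pp) :
    friedmanBlock (head ++ (replicate pp S ++ T)) i
      = replicate (pp + 1 - i) M ++ replicate (2 * i - pp) S := by
  have v : pp = 2 * s1 + 1 := by rw [pp_val, s1_val]
  have hd : ([M, F, F] ++ seg 4 pos s1).length = s1 := by
    have v2 := s1_val
    rw [List.length_append, seg_length good_pos, List.length_cons, List.length_cons,
      List.length_cons, List.length_nil]
    omega
  rw [head_split]
  exact block_late_aux v hd h1 h2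

theorem PhaseInfo.SM {T : List (Fin 3)} {i : ℕ} {ps : List ℕ} (h : PhaseInfo T i ps) :
    [S, M] <+ friedmanBlock (head ++ T) i := by
  obtain ⟨g, b, p0, ps', rfl, hl⟩ := h
  rw [b, seg]
  refine Sublist.trans ?_ (List.sublist_append_right _ _)
  rw [List.cons_sublist_cons, List.singleton_sublist]
  simp only [FN3.good, Bool.and_eq_true, Nat.ble_eq] at g
  have := count_M_seg g.2
  rw [← List.count_pos_iff]
  omega

theorem not_SM {x y : ℕ} : ¬ ([S, M] <+ replicate x M ++ replicate y S) := by
  intro h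
  have := fact1 (m := M) (by decide) (g := 0) (R := [M]) (V := replicate y S) (h := x) (by
    simp only [replicate_zero, List.nil_append]
    refine h.trans (Sublist.append_left (List.sublist_cons_self _ _) _))
  rw [List.singleton_sublist] at this
  have := List.eq_of_mem_replicate this
  simp [M, S] at this

theorem block_early (T : List (Fin 3)) :
    friedmanBlock (head ++ T) 1 = [M, F] ∧ friedmanBlock (head ++ T) 2 = [F, F, M] ∧
    friedmanBlock (head ++ T) 3 = [F, M, S, M] := by
  have : ∃ X, head = [M, F, F, M, S, M] ++ X := by
    refine ⟨seg 7 (pos.drop 1) pp, ?_⟩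
    rw [head]
    have e := seg_append (a := 4) (ps₁ := [5]) (ps₂ := pos.drop 1) (m := 6) (e := pp)
      (by decide) (by decide +kernel)
    have e' : [5] ++ pos.drop 1 = pos := by decide +kernel
    rw [e'] at e
    rw [e]; rfl
  obtain ⟨X, hX⟩ := this
  rw [hX]
  refine ⟨rfl, rfl, rfl⟩

/-- Blocks with index in `[4, pp]` contain `M` and do not contain `F`. -/
theorem block_mid (T : List (Fin 3)) {i : ℕ} (h4 : 4 ≤ i) (hi : i ≤ pp) :
    M ∈ friedmanBlock (head ++ (replicate pp S ++ T)) i ∧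
    F ∉ friedmanBlock (head ++ (replicate pp S ++ T)) i := by
  by_cases h : i ≤ s1
  · obtain ⟨ps, hp⟩ := poks_info poks_phases le_rfl (replicate pp S ++ T) h4 h
    refine ⟨hp.SM.subset (by simp), ?_⟩
    rw [hp.block]; exact F_not_mem_seg
  · rw [block_late (by omega) hi]
    constructor
    · simp; left; omega
    · simp [M, F, S]

theorem part1 {T : List (Fin 3)} (hT : M ∉ T) {i j : ℕ} (hi1 : 1 ≤ i) (hij : i < j)
    (hi : i ≤ pp) :
    ¬ (friedmanBlock (head ++ (replicate pp S ++ T)) i <+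
      friedmanBlock (head ++ (replicate pp S ++ T)) j) := by
  intro hs
  have late : pp < j → M ∉ friedmanBlock (head ++ (replicate pp S ++ T)) j := by
    intro hj hm
    have h1 := List.mem_of_mem_take hm
    rw [List.drop_append, List.drop_eq_nil_of_le (by rw [head_length]; omega),
      List.nil_append] at h1
    have h2 := List.mem_of_mem_drop h1
    rw [List.mem_append] at h2
    rcases h2 with h2 | h2
    · have := List.eq_of_mem_replicate h2
      simp [M, S] at this
    · exact hT h2
  obtain ⟨b1, b2, b3⟩ := block_early (replicate pp S ++ T)
  by_cases h4 : 4 ≤ i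
  · by_cases hj : j ≤ pp
    · by_cases hj1 : j ≤ s1
      · exact chk_sound poks_phases chk_phases le_rfl hij h4 hj1 hs
      · by_cases hi' : i ≤ s1
        · obtain ⟨ps, hp⟩ := poks_info poks_phases le_rfl (replicate pp S ++ T) h4 hi'
          rw [block_late (by omega) hj] at hs
          exact not_SM (hp.SM.trans hs)
        · rw [block_late (by omega) hi, block_late (by omega) hj] at hs
          have := hs.count_le M
          simp [List.count_append, List.count_replicate, M, S] at this
          omega
    · exact late (by omega) (hs.subset (block_mid T h4 hi).1)
  · have hMF : M ∈ friedmanBlock (head ++ (replicate pp S ++ T)) i ∧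
        F ∈ friedmanBlock (head ++ (replicate pp S ++ T)) i := by
      interval_cases i
      · rw [b1]; simp
      · rw [b2]; simp
      · rw [b3]; simp
    by_cases hj4 : 4 ≤ j
    · by_cases hj : j ≤ pp
      · exact (block_mid T hj4 hj).2 (hs.subset hMF.2)
      · exact late (by omega) (hs.subset hMF.1)
    · have : (i = 1 ∧ j = 2) ∨ (i = 1 ∧ j = 3) ∨ (i = 2 ∧ j = 3) := by omega
      rcases this with ⟨rfl, rfl⟩ | ⟨rfl, rfl⟩ | ⟨rfl, rfl⟩
      · rw [b1, b2] at hs; revert hs; decide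
      · rw [b1, b3] at hs; revert hs; decide
      · rw [b2, b3] at hs; revert hs; decide


/-! ### The modified Ackermann function and bad sequences -/

theorem ackF_one (c : ℕ) : ackF 1 c = 2 * c := by rw [ackF]
theorem ackF_one_right (f : ℕ) : ackF (f + 1) 1 = 2 := by
  cases f with
  | zero => rw [ackF]
  | succ f => rw [ackF]
theorem ackF_succ (f c : ℕ) : ackF (f + 2) (c + 2) = ackF (f + 1) (ackF (f + 2) (c + 1)) := by
  rw [ackF]

theorem ackF_ge (f : ℕ) : ∀ c : ℕ, 1 ≤ c → 2 * c ≤ ackF (f + 1) c := by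
  induction f with
  | zero => intro c _; rw [ackF_one]
  | succ f ih =>
    intro c hc
    induction c, hc using Nat.le_induction with
    | base => rw [ackF_one_right]
    | succ c hc ihc =>
      obtain ⟨c, rfl⟩ : ∃ k, c = k + 1 := ⟨c - 1, by omega⟩
      have ihc : 2 * (c + 1) ≤ ackF (f + 2) (c + 1) := ihc
      rw [ackF_succ]
      have := ih (ackF (f + 2) (c + 1)) (by omega)
      omega

theorem ackF_lt_succ (f c : ℕ) (hc : 1 ≤ c) : ackF (f + 1) c < ackF (f + 1) (c + 1) := by
  cases f with
  | zero => rw [ackF_one, ackF_one]; omega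
  | succ f =>
    obtain ⟨c, rfl⟩ : ∃ k, c = k + 1 := ⟨c - 1, by omega⟩
    change ackF (f + 2) (c + 1) < ackF (f + 2) (c + 2)
    rw [ackF_succ]
    have h1 : 2 * (c + 1) ≤ ackF (f + 2) (c + 1) := ackF_ge (f + 1) (c + 1) hc
    have h2 := ackF_ge f (ackF (f + 2) (c + 1)) (by omega)
    omega

theorem ackF_mono (f : ℕ) {a b : ℕ} (ha : 1 ≤ a) (hab : a ≤ b) :
    ackF (f + 1) a ≤ ackF (f + 1) b := by
  induction b, hab using Nat.le_induction with
  | base => exact le_rfl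
  | succ b hb ih => exact ih.trans (ackF_lt_succ f b (by omega)).le

theorem ackF_two (f : ℕ) : ackF (f + 1) 2 = 4 := by
  induction f with
  | zero => rw [ackF_one]
  | succ f ih => rw [ackF_succ, ackF_one_right, ih]

theorem ackF_three (f : ℕ) : ackF (f + 2) 3 = ackF (f + 1) 4 := by
  rw [ackF_succ, ackF_two]

theorem ackF_four (f : ℕ) : 2 ^ f * 8 ≤ ackF (f + 1) 4 := by
  induction f with
  | zero => rw [ackF_one]; norm_num
  | succ f ih =>
    rw [ackF_succ, ackF_three]
    have := ackF_ge f (ackF (f + 1) 4) (by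
      have : 1 ≤ 2 ^ f := Nat.one_le_two_pow
      omega)
    rw [pow_succ]; omega

theorem ackF_four' {f : ℕ} (hf : 15 ≤ f) : 158386 ≤ ackF (f + 1) 4 := by
  refine le_trans ?_ (ackF_four f)
  calc 158386 ≤ 2 ^ 15 * 8 := by norm_num
    _ ≤ 2 ^ f * 8 := Nat.mul_le_mul_right _ (Nat.pow_le_pow_right (by norm_num) hf)

theorem ack_bound : ackF 7198 158386 ≤ ackF 7200 3 := by
  rw [ackF_three 7198, ackF_succ 7197 2, ackF_three 7197]
  refine ackF_mono 7197 (by norm_num) ?_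
  exact ackF_four' (by norm_num)

/-- A bad sequence of `k`-tuples indexed by `[c, e)` with entries bounded by the index. -/
structure BadSeq (k c e : ℕ) (t : ℕ → List ℕ) : Prop where
  len : ∀ i, c ≤ i → i < e → (t i).length = k
  bd : ∀ i, c ≤ i → i < e → ∀ x ∈ t i, x ≤ i
  bad : ∀ i j, c ≤ i → i < j → j < e → ¬ Forall₂ (· ≤ ·) (t i) (t j)

theorem ackF_iterate (f x : ℕ) (hx : 1 ≤ x) (n : ℕ) :
    ackF (f + 2) (n + 1) ≤ (ackF (f + 1))^[n + 1] x := by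
  induction n with
  | zero =>
    have := ackF_ge f x hx
    rw [ackF_one_right, Function.iterate_one]; omega
  | succ n ih =>
    rw [ackF_succ, Function.iterate_succ_apply']
    exact ackF_mono f (by
      have : 2 * (n + 1) ≤ ackF (f + 2) (n + 1) := ackF_ge (f + 1) (n + 1) (by omega)
      omega) ih

theorem iterate_mono (f : ℕ) (n : ℕ) : ∀ {a b : ℕ}, 1 ≤ a → a ≤ b →
    (ackF (f + 1))^[n] a ≤ (ackF (f + 1))^[n] b := by
  induction n with
  | zero => intro a b _ h; simpa
  | succ n ih =>
    intro a b ha h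
    rw [Function.iterate_succ_apply, Function.iterate_succ_apply]
    exact ih (by have := ackF_ge f a ha; omega) (ackF_mono f ha h)

theorem badSeq_step {f : ℕ} (H : ∀ c, 1 ≤ c → ∃ e t, ackF (f + 1) c ≤ e ∧ BadSeq (f + 1) c e t)
    (a : ℕ) : ∀ c, 1 ≤ c → a ≤ c → ∃ e t, (ackF (f + 1))^[a] c ≤ e ∧ BadSeq (f + 2) c e t ∧
      ∀ i, c ≤ i → i < e → ∃ h r, t i = h :: r ∧ h < a := by
  induction a with
  | zero =>
    intro c _ _
    refine ⟨c, fun _ => [], le_rfl, ⟨?_, ?_, ?_⟩, ?_⟩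
    · intro i _ _; omega
    · intro i _ _; omega
    · intro i j _ _ _; omega
    · intro i _ _; omega
  | succ a ih =>
    intro c hc hac
    obtain ⟨e₁, t₁, he₁, b₁⟩ := H c hc
    have hce : c ≤ e₁ := by have := ackF_ge f c hc; omega
    obtain ⟨e₂, t₂, he₂, b₂, hd₂⟩ := ih e₁ (by omega) (by omega)
    refine ⟨e₂, fun i => if i < e₁ then a :: t₁ i else t₂ i, ?_, ⟨?_, ?_, ?_⟩, ?_⟩
    · rw [Function.iterate_succ_apply]
      exact (iterate_mono f a (by have := ackF_ge f c hc; omega) he₁).trans he₂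
    · intro i h1 h2
      by_cases h : i < e₁
      · simp [h, b₁.len i h1 h]
      · simp [h, b₂.len i (by omega) h2]
    · intro i h1 h2 x hx
      by_cases h : i < e₁
      · simp only [h, if_true, List.mem_cons] at hx
        rcases hx with rfl | hx
        · omega
        · exact b₁.bd i h1 h x hx
      · simp only [h, if_false] at hx
        exact b₂.bd i (by omega) h2 x hx
    · intro i j h1 hij h2
      by_cases h : i < e₁
      · by_cases h' : j < e₁
        · simp only [h, h', if_true]
          intro hf
          rw [List.forall₂_cons] at hf
          exact b₁.bad i j h1 hij h' hf.2
        · obtain ⟨y, r, hy, hya⟩ := hd₂ j (by omega) h2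
          simp only [h, h', if_true, if_false, hy]
          intro hf
          rw [List.forall₂_cons] at hf
          omega
      · have h' : ¬ j < e₁ := by omega
        simp only [h, h', if_false]
        exact b₂.bad i j (by omega) hij h2
    · intro i h1 h2
      by_cases h : i < e₁
      · exact ⟨a, t₁ i, by simp [h], by omega⟩
      · obtain ⟨y, r, hy, hya⟩ := hd₂ i (by omega) h2
        exact ⟨y, r, by simp [h, hy], by omega⟩

theorem badSeq_exists (f : ℕ) : ∀ c, 1 ≤ c →
    ∃ e t, ackF (f + 1) c ≤ e ∧ BadSeq (f + 1) c e t := by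
  induction f with
  | zero =>
    intro c hc
    refine ⟨2 * c, fun i => [2 * c - 1 - i], by rw [ackF_one], ⟨?_, ?_, ?_⟩⟩
    · intro i _ _; simp
    · intro i _ _ x hx
      simp only [List.mem_singleton] at hx; omega
    · intro i j _ _ _ hf
      rw [List.forall₂_cons] at hf
      omega
  | succ f ih =>
    intro c hc
    obtain ⟨e, t, he, hb, _⟩ := badSeq_step ih c c hc le_rfl
    refine ⟨e, t, le_trans ?_ he, hb⟩
    obtain ⟨n, rfl⟩ : ∃ k, c = k + 1 := ⟨c - 1, by omega⟩
    exact ackF_iterate f (n + 1) hc n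

/-- The sequence used in the tail. -/
structure VSeq (N : ℕ) (v : ℕ → List ℕ) : Prop where
  len : ∀ j, (v j).length = 7201
  sum0 : (v 0).sum = 1
  sum : ∀ j, 1 ≤ j → (v j).sum ≤ 7200 * (j + 2)
  bad : ∀ j l, j < l → l ≤ N → ¬ Forall₂ (· ≤ ·) (v j) (v l)

theorem sum_le_of_bd {l : List ℕ} {b : ℕ} (h : ∀ x ∈ l, x ≤ b) : l.sum ≤ l.length * b := by
  simpa using List.sum_le_card_nsmul l b h

theorem vseq_aux {K e : ℕ} {t : ℕ → List ℕ} (hb : BadSeq K 3 e t) :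
    ∃ v : ℕ → List ℕ, (∀ j, (v j).length = K + 1) ∧ (v 0).sum = 1 ∧
      (∀ j, 1 ≤ j → (v j).sum ≤ K * (j + 2)) ∧
      ∀ j l, j < l → l + 2 < e → ¬ Forall₂ (· ≤ ·) (v j) (v l) := by
  refine ⟨fun j => if j = 0 then 1 :: replicate K 0 else
    if j + 2 < e then 0 :: t (j + 2) else replicate (K + 1) 0, ?_, ?_, ?_, ?_⟩ <;> beta_reduce
  · intro j
    by_cases h0 : j = 0
    · rw [if_pos h0, List.length_cons, List.length_replicate]
    · by_cases h1 : j + 2 < e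
      · rw [if_neg h0, if_pos h1, List.length_cons, hb.len _ (by omega) h1]
      · rw [if_neg h0, if_neg h1, List.length_replicate]
  · rw [if_pos rfl, List.sum_cons, List.sum_replicate, smul_zero, Nat.add_zero]
  · intro j hj
    by_cases h1 : j + 2 < e
    · rw [if_neg (by omega), if_pos h1, List.sum_cons, Nat.zero_add]
      have h2 := sum_le_of_bd (hb.bd (j + 2) (by omega) h1)
      rw [hb.len _ (by omega) h1] at h2
      exact h2
    · rw [if_neg (by omega), if_neg h1, List.sum_replicate, smul_zero]
      exact Nat.zero_le _
  · intro j l hjl h1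
    rw [if_neg (show ¬ l = 0 by omega), if_pos h1]
    by_cases h0 : j = 0
    · rw [if_pos h0, List.forall₂_cons]
      omega
    · rw [if_neg h0, if_pos (by omega), List.forall₂_cons]
      exact fun h => hb.bad (j + 2) (l + 2) (by omega) (by omega) h1 h.2

theorem vseq_exists : ∃ N v, VSeq N v ∧ ackF 7198 158386 ≤ N + 3 ∧ 1 ≤ N := by
  obtain ⟨e, t, he, hb⟩ := badSeq_exists 7199 3 (by norm_num)
  have he' : ackF 7198 158386 ≤ e := ack_bound.trans he
  have h6 : 6 ≤ e := le_trans (ackF_ge 7199 3 (by norm_num)) he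
  clear he
  obtain ⟨v, v1, v2, v3, v4⟩ := vseq_aux hb
  generalize ackF 7198 158386 = A at *
  exact ⟨e - 3, v, ⟨v1, v2, v3, fun j l h h' => v4 j l h (by omega)⟩, by omega, by omega⟩

/-! ### Embedding lemmas for the tail -/

/-- Coding of a tuple. -/
def D : List ℕ → List (Fin 3)
  | [] => [S]
  | a :: v => S :: (replicate a F ++ D v)

theorem D_cons (v : List ℕ) : ∃ R, D v = S :: R := by
  cases v with
  | nil => exact ⟨[], rfl⟩
  | cons a v => exact ⟨_, rfl⟩

theorem D_length (v : List ℕ) : (D v).length = v.length + 1 + v.sum := by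
  induction v with
  | nil => rfl
  | cons a v ih => simp [D, ih]; omega

theorem D_count (v : List ℕ) : (D v).count S = v.length + 1 := by
  induction v with
  | nil => rfl
  | cons a v ih => simp [D, ih, S, F, List.count_replicate] at *

theorem M_not_mem_D (v : List ℕ) : M ∉ D v := by
  induction v with
  | nil => simp [D, M, S]
  | cons a v ih => simp [D, ih, S, F, M] at *

theorem S_mem_D (v : List ℕ) : S ∈ D v := by
  obtain ⟨R, hR⟩ := D_cons v
  rw [hR]; simp

theorem D_embed {v : List ℕ} : ∀ {v' : List ℕ} {a b : ℕ}, v.length = v'.length →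
    D v <+ replicate a F ++ (D v' ++ replicate b F) → Forall₂ (· ≤ ·) v v' := by
  induction v with
  | nil =>
    intro v' a b h _
    rw [List.length_nil] at h
    rw [List.length_eq_zero_iff.1 h.symm]
    exact Forall₂.nil
  | cons x v ih =>
    intro v' a b h hs
    cases v' with
    | nil => simp at h
    | cons y v' =>
      have hl : v.length = v'.length := by simpa using h
      have h1 : replicate x F ++ D v <+ replicate y F ++ (D v' ++ replicate b F) := by
        have := fact1 (m := F) (by decide) (g := 0) (h := a) (R := replicate x F ++ D v)
          (V := replicate y F ++ (D v' ++ replicate b F)) (by simpa [D] using hs)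
        exact this
      refine Forall₂.cons ?_ (ih hl ((List.sublist_append_right _ _).trans h1))
      by_contra hxy
      obtain ⟨R₁, e₁⟩ := D_cons v
      obtain ⟨R₂, e₂⟩ := D_cons v'
      have c₁ := D_count v
      have c₂ := D_count v'
      rw [e₁, e₂, List.cons_append] at h1
      have h2 := (fact2 (m := F) (by decide) (by omega) h1).count_le S
      rw [← e₁, List.count_append, c₁, List.count_append, List.count_append] at h2
      rw [e₂, List.count_cons_self] at c₂
      simp [S, F, List.count_replicate] at h2 c₂
      omega

theorem stripF {Y B : List (Fin 3)} : ∀ {k : ℕ}, F :: Y <+ replicate k S ++ B → F :: Y <+ B := by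
  intro k
  induction k with
  | zero => intro h; simpa using h
  | succ k ih =>
    intro h
    rw [List.replicate_succ, List.cons_append] at h
    rcases List.sublist_cons_iff.1 h with h | ⟨r, hr, _⟩
    · exact ih h
    · simp [F, S] at hr

theorem stripS {Y B : List (Fin 3)} : ∀ {k : ℕ}, S :: Y <+ replicate k F ++ B → S :: Y <+ B := by
  intro k
  induction k with
  | zero => intro h; simpa using h
  | succ k ih =>
    intro h
    rw [List.replicate_succ, List.cons_append] at h
    rcases List.sublist_cons_iff.1 h with h | ⟨r, hr, _⟩
    · exact ih h
    · simp [F, S] at hr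

theorem splitF {X Y A B : List (Fin 3)} {k : ℕ} (h : X ++ F :: Y <+ A ++ (replicate k S ++ B)) :
    X ++ [F] <+ A ∨ Y <+ B := by
  obtain ⟨l₁, l₂, he, h1, h2⟩ := List.sublist_append_iff.1 h
  rcases List.append_eq_append_iff.1 he with ⟨a', e1, e2⟩ | ⟨c', e1, e2⟩
  · cases a' with
    | nil =>
      right
      simp only [List.nil_append] at e2
      rw [← e2] at h2
      exact (List.sublist_cons_self _ _).trans (stripF h2)
    | cons z a' =>
      left
      simp only [List.cons_append, List.cons.injEq] at e2
      refine Sublist.trans ?_ h1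
      rw [e1, ← e2.1]
      exact Sublist.append_left (by simp) _
  · right
    have : F :: Y <+ l₂ := by rw [e2]; exact List.sublist_append_right _ _
    exact (List.sublist_cons_self _ _).trans (stripF (this.trans h2))

theorem strip2 {x x' : ℕ} {Y A : List (Fin 3)}
    (h : replicate x S ++ F :: Y <+ replicate x' S ++ A) : Y <+ A := by
  rcases splitF (A := []) (by simpa using h) with h | h
  · simp at h
  · exact h

theorem cancelS {x x' : ℕ} {Y A : List (Fin 3)} (hx : x' ≤ x)
    (h : replicate x S ++ Y <+ replicate x' S ++ A) : replicate (x - x') S ++ Y <+ A := by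
  induction x' generalizing x with
  | zero => simpa using h
  | succ x' ih =>
    obtain ⟨x, rfl⟩ : ∃ k, x = k + 1 := ⟨x - 1, by omega⟩
    rw [List.replicate_succ, List.replicate_succ, List.cons_append, List.cons_append,
      List.cons_sublist_cons] at h
    rw [Nat.add_sub_add_right]
    exact ih (by omega) h

theorem count_S_replicate_F (n : ℕ) : (replicate n F).count S = 0 := by
  simp [S, F, List.count_replicate]

theorem count_S_replicate_S (n : ℕ) : (replicate n S).count S = n := by
  simp

theorem embXX {P₀ A B B' : List (Fin 3)} {r k : ℕ}
    (h : (P₀ ++ [F]) ++ (replicate r S ++ B) <+ A ++ (replicate k S ++ B'))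
    (hc : B'.count S < r) : P₀ ++ [F] <+ A := by
  rw [List.append_assoc, List.singleton_append] at h
  rcases splitF h with h | h
  · exact h
  · have := h.count_le S
    rw [List.count_append, count_S_replicate_S] at this
    omega

theorem embX2 {P A Y B' : List (Fin 3)} {r k : ℕ}
    (h : P ++ (replicate r S ++ F :: Y) <+ A ++ (replicate k S ++ B'))
    (hc : A.count S < r) : Y <+ B' := by
  rw [← List.append_assoc] at h
  rcases splitF h with h | h
  · have := h.count_le S
    rw [List.count_append, List.count_append, count_S_replicate_S] at this
    omega
  · exact h

theorem embX2' {P₀ A Y B' : List (Fin 3)} {r x k : ℕ}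
    (h : (P₀ ++ [F]) ++ (replicate r S ++ F :: Y) <+
      (replicate x S ++ A) ++ (replicate k S ++ B'))
    (hc : A.count S < r) : Y <+ B' := by
  rw [← List.append_assoc] at h
  rcases splitF h with h | h
  · have h1 : P₀ ++ F :: replicate r S <+ [] ++ (replicate x S ++ A) := by
      refine Sublist.trans ?_ h
      simp
    rcases splitF h1 with h1 | h1
    · simp at h1
    · have := h1.count_le S
      rw [count_S_replicate_S] at this
      omega
  · exact h

/-- Normal form of windows of the first kind. -/
def cls1 (x a : ℕ) (E : List (Fin 3)) (c y : ℕ) : List (Fin 3) :=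
  replicate x S ++ (replicate (a + 1) F ++ (E ++ (replicate (c + 1) F ++ replicate y S)))

theorem cls1_last (x a : ℕ) (E : List (Fin 3)) (c y : ℕ) : cls1 x a E c y =
    (replicate x S ++ (replicate (a + 1) F ++ (E ++ replicate c F))) ++ F :: replicate y S := by
  rw [cls1, List.replicate_succ' (n := c)]
  simp only [List.append_assoc, List.singleton_append]

theorem cls1_first (x a : ℕ) (E : List (Fin 3)) (c y : ℕ) : cls1 x a E c y =
    replicate x S ++ F :: (replicate a F ++ (E ++ (replicate (c + 1) F ++ replicate y S))) := by
  rw [cls1, List.replicate_succ (n := a)]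
  simp only [List.cons_append]

theorem embIX {x a c y k d : ℕ} {E A B : List (Fin 3)}
    (h : cls1 x a E c y <+ A ++ (replicate k S ++ B)) (hx : 1 ≤ x) (hA : A.count S ≤ d)
    (hB : B.count S ≤ d) (hE : E.count S = d) (hxy : 2 * d + 1 ≤ x + y) : E <+ B := by
  have h' := h
  rw [cls1_last] at h
  rw [cls1_first] at h'
  have hy : y ≤ d := by
    rcases splitF h with h | h
    · have := h.count_le S
      simp only [List.count_append, count_S_replicate_S] at this
      omega
    · have := h.count_le S
      rw [count_S_replicate_S] at this
      omega
  rcases splitF h' with h | h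
  · have := h.count_le S
    simp only [List.count_append, count_S_replicate_S] at this
    omega
  · refine Sublist.trans ?_ h
    exact (List.sublist_append_left _ _).trans (List.sublist_append_right _ _)

theorem embII {x a c y x' k c' d r : ℕ} {E A : List (Fin 3)}
    (h : cls1 x a E c y <+ (replicate x' S ++ A) ++ (replicate k S ++ replicate c' F))
    (hy : 1 ≤ y ∨ r + d < x) (hx' : x' ≤ r) (hA : A.count S ≤ d) (hE : S ∈ E) :
    replicate x S ++ (replicate (a + 1) F ++ (E ++ replicate (c + 1) F)) <+
      replicate x' S ++ A := by
  rcases hy with hy | hy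
  · rw [cls1_last] at h
    rcases splitF h with h | h
    · rw [List.replicate_succ' (n := c)]
      simpa only [List.append_assoc] using h
    · have := h.count_le S
      rw [count_S_replicate_S, count_S_replicate_F] at this
      omega
  · rw [cls1_first] at h
    rcases splitF h with h | h
    · have := h.count_le S
      simp only [List.count_append, count_S_replicate_S] at this
      omega
    · have h1 : S ∈ replicate c' F := h.subset (by simp [hE])
      have := List.eq_of_mem_replicate h1
      simp [S, F] at this


/-! ### The tail of the word -/

/-- Length of the separating runs. -/
def RR : ℕ := 14406
theorem RR_val : RR = 14406 := rfl

/-- Length of the first run of `F` in a round. -/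
def LL : ℕ → ℕ
  | 0 => 120000
  | j + 1 => 30000 + 7200 * (j + 1)

/-- Start (minus one) of round `j + 1`. -/
def sg : ℕ → ℕ
  | 0 => 382756
  | j + 1 => 2 * sg j

/-- Length of the part of round `j` after the run of `S`. -/
def gg : ℕ → ℕ
  | 0 => 169770
  | j + 1 => sg j - RR

/-- Length of `pre`. -/
def PL : ℕ → ℕ
  | 0 => 2 * pp
  | j + 1 => sg j + RR

theorem sg_ge (j : ℕ) : 382756 * (j + 1) ≤ sg j := by
  induction j with
  | zero => simp [sg]
  | succ j ih => simp only [sg]; omega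

theorem PL_succ (j : ℕ) : PL (j + 1) = PL j + gg j + RR := by
  have h1 := RR_val
  have h2 := pp_val
  cases j with
  | zero => simp only [PL, gg, sg]; omega
  | succ j =>
    have := sg_ge j
    simp only [PL, gg, sg]; omega

theorem PL_mono {j l : ℕ} (h : j ≤ l) : PL j ≤ PL l := by
  induction l, h using Nat.le_induction with
  | base => exact le_rfl
  | succ l _ ih => rw [PL_succ]; omega

section word
variable (v : ℕ → List ℕ)

/-- Number of trailing `F`. -/
def nn (j : ℕ) : ℕ := gg j - LL j - (D (v j)).length

/-- Round `j` without its leading run of `S`. -/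
def GG (j : ℕ) : List (Fin 3) := replicate (LL j) F ++ (D (v j) ++ replicate (nn v j) F)

/-- Prefix of the word up to and including the run of `S` of round `j`. -/
def pre : ℕ → List (Fin 3)
  | 0 => head ++ replicate pp S
  | j + 1 => pre j ++ (GG v j ++ replicate RR S)

end word

variable {v : ℕ → List ℕ} {N : ℕ}

theorem VSeq.w_zero (hv : VSeq N v) : (D (v 0)).length = 7203 := by
  rw [D_length, hv.len, hv.sum0]

theorem VSeq.w_succ (hv : VSeq N v) (j : ℕ) :
    (D (v (j + 1))).length ≤ 7202 + 7200 * (j + 3) := by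
  rw [D_length, hv.len]
  have := hv.sum (j + 1) (by omega)
  omega

theorem VSeq.count (hv : VSeq N v) (j : ℕ) : (D (v j)).count S = 7202 := by
  rw [D_count, hv.len]

theorem VSeq.n_pos (hv : VSeq N v) (j : ℕ) : LL j + (D (v j)).length + 1 ≤ gg j := by
  have h1 := RR_val
  cases j with
  | zero => rw [hv.w_zero]; simp [LL, gg]
  | succ j =>
    have h2 := hv.w_succ j
    have h3 := sg_ge j
    simp only [LL, gg]; omega

theorem LL_pos (j : ℕ) : 1 ≤ LL j := by
  cases j <;> simp only [LL] <;> omega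

theorem VSeq.GG_length (hv : VSeq N v) (j : ℕ) : (GG v j).length = gg j := by
  have := hv.n_pos j
  simp only [GG, List.length_append, List.length_replicate, nn]
  omega

theorem VSeq.GG_count (hv : VSeq N v) (j : ℕ) : (GG v j).count S = 7202 := by
  simp only [GG, List.count_append, count_S_replicate_F, hv.count j]

theorem VSeq.pre_length (hv : VSeq N v) (j : ℕ) : (pre v j).length = PL j := by
  induction j with
  | zero =>
    rw [pre, List.length_append, head_length, List.length_replicate, PL]; omega
  | succ j ih =>
    rw [pre, List.length_append, List.length_append, ih, hv.GG_length, List.length_replicate,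
      PL_succ]; omega

theorem pre_split {j J : ℕ} (h : j < J) :
    ∃ T, pre v J = pre v j ++ (GG v j ++ (replicate RR S ++ T)) := by
  induction J, h using Nat.le_induction with
  | base => exact ⟨[], by rw [pre, List.append_nil]⟩
  | succ J hJ ih =>
    obtain ⟨T, hT⟩ := ih
    refine ⟨T ++ (GG v J ++ replicate RR S), ?_⟩
    rw [pre, hT]; simp only [List.append_assoc]

theorem pre_split2 {j J : ℕ} (h : j + 1 < J) :
    ∃ T, pre v J = pre v j ++ (GG v j ++ (replicate RR S ++ (GG v (j + 1) ++ T))) := by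
  obtain ⟨T, hT⟩ := pre_split (v := v) h
  refine ⟨replicate RR S ++ T, ?_⟩
  rw [hT, pre]; simp only [List.append_assoc]

theorem M_not_mem_GG (j : ℕ) : M ∉ GG v j := by
  have := M_not_mem_D (v j)
  simp [GG, this, M, F]

theorem pre_head (J : ℕ) : ∃ T, pre v J = head ++ (replicate pp S ++ T) ∧ M ∉ T := by
  induction J with
  | zero => exact ⟨[], by rw [pre, List.append_nil], by simp⟩
  | succ J ih =>
    obtain ⟨T, hT, hM⟩ := ih
    refine ⟨T ++ (GG v J ++ replicate RR S), ?_, ?_⟩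
    · rw [pre, hT]; simp only [List.append_assoc]
    · have h1 := M_not_mem_GG (v := v) J
      simp [hM, h1, M, S]

/-- Windows of class X. -/
structure WX (v : ℕ → List ℕ) (U : List (Fin 3)) (i j : ℕ) (P₀ B : List (Fin 3)) : Prop where
  lo : PL j < i
  hi : i ≤ PL j + gg j
  eq : U = (P₀ ++ [F]) ++ (replicate RR S ++ B)
  subP : P₀ ++ [F] <+ GG v j
  subB : B <+ GG v (j + 1)
  len : (P₀ ++ [F]).length = PL j + gg j + 1 - i
  alt : (∃ a, P₀ ++ [F] = replicate (a + 1) F ++ (D (v j) ++ replicate (nn v j) F)) ∨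
    (∃ a Bt, B = F :: (replicate a F ++ (D (v (j + 1)) ++ Bt)))

/-- Windows of class I. -/
structure WI (v : ℕ → List ℕ) (U : List (Fin 3)) (i j x y c : ℕ) : Prop where
  j_pos : 1 ≤ j
  lo : PL j < i + RR
  hi : i ≤ PL j
  eq : U = (replicate x S ++ GG v j) ++ (replicate y S ++ replicate c F)
  x_eq : x = PL j + 1 - i
  y_pos : 1 ≤ y
  y_le : y ≤ RR
  xy : 14405 ≤ x + y

theorem VSeq.WX_exists (hv : VSeq N v) {J i j : ℕ} (hJ : j + 1 < J) (lo : PL j < i)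
    (hi : i ≤ PL j + gg j) : ∃ P₀ B, WX v (friedmanBlock (pre v J) i) i j P₀ B := by
  have hR := RR_val
  have hpp := pp_val
  obtain ⟨T, hT⟩ := pre_split2 (v := v) hJ
  have hn := hv.n_pos j
  have hn' := hv.n_pos (j + 1)
  -- numerical facts
  have f1 : gg j + RR ≤ PL j + 2 := by
    cases j with
    | zero => simp only [PL, gg]; omega
    | succ j => have := sg_ge j; simp only [PL, gg]; omega
  have f2 : PL j + gg j = gg (j + 1) + RR := by
    have e := PL_succ j
    have e' : PL (j + 1) = sg j + RR := rfl
    have e'' : gg (j + 1) = sg j - RR := rfl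
    have := sg_ge j
    omega
  have f3 : LL (j + 1) + (D (v (j + 1))).length + gg j + RR ≤ PL j + 2 + 2 * LL j := by
    have := hv.w_succ j
    cases j with
    | zero => simp only [PL, gg, LL]; omega
    | succ j => have := sg_ge j; simp only [PL, gg, LL]; omega
  obtain ⟨t, rfl⟩ : ∃ t, i = PL j + 1 + t := ⟨i - (PL j + 1), by omega⟩
  have ht : t < gg j := by omega
  obtain ⟨q, hq⟩ : ∃ q, q + gg j + RR = PL j + 2 + 2 * t := ⟨PL j + 2 + 2 * t - gg j - RR, by omega⟩
  have hq' : q ≤ gg (j + 1) := by omega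
  have hblock : friedmanBlock (pre v J) (PL j + 1 + t) =
      (GG v j).drop t ++ (replicate RR S ++ (GG v (j + 1)).take q) := by
    have e : pre v J = (pre v j ++ (GG v j).take t) ++
        (((GG v j).drop t ++ (replicate RR S ++ (GG v (j + 1)).take q)) ++
          ((GG v (j + 1)).drop q ++ T)) := by
      have e1 : GG v j ++ (replicate RR S ++ (GG v (j + 1) ++ T)) =
          ((GG v j).take t ++ (GG v j).drop t) ++ (replicate RR S ++
          (((GG v (j + 1)).take q ++ (GG v (j + 1)).drop q) ++ T)) := by
        rw [List.take_append_drop, List.take_append_drop]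
      rw [hT, e1]; simp only [List.append_assoc]
    rw [e]
    apply block_eq
    · rw [List.length_append, hv.pre_length, List.length_take, hv.GG_length]; omega
    · rw [List.length_append, List.length_append, List.length_drop, hv.GG_length,
        List.length_replicate, List.length_take, hv.GG_length]; omega
  -- last letter of the first part
  have hF : ∃ P₀, (GG v j).drop t = P₀ ++ [F] := by
    have e : GG v j = (replicate (LL j) F ++ (D (v j) ++ replicate (nn v j - 1) F)) ++ [F] := by
      have : nn v j = (nn v j - 1) + 1 := by unfold nn; omega
      rw [GG]
      conv_lhs => rw [this, List.replicate_succ']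
      simp only [List.append_assoc]
    have el := congrArg List.length e
    rw [hv.GG_length, List.length_append, List.length_singleton] at el
    exact ⟨(replicate (LL j) F ++ (D (v j) ++ replicate (nn v j - 1) F)).drop t, by
      rw [e, List.drop_append_of_le_length (by omega)]⟩
  obtain ⟨P₀, hP⟩ := hF
  refine ⟨P₀, (GG v (j + 1)).take q, ⟨by omega, by omega, ?_, ?_, List.take_sublist _ _, ?_, ?_⟩⟩
  · rw [hblock, hP]
  · rw [← hP]; exact List.drop_sublist _ _
  · rw [← hP, List.length_drop, hv.GG_length]; omega
  · by_cases h : t < LL j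
    · left
      refine ⟨LL j - t - 1, ?_⟩
      rw [← hP, GG, List.drop_append_of_le_length (by simp; omega), List.drop_replicate,
        show LL j - t - 1 + 1 = LL j - t by omega]
    · right
      have hL := LL_pos (j + 1)
      refine ⟨LL (j + 1) - 1, (replicate (nn v (j + 1)) F).take
        (q - LL (j + 1) - (D (v (j + 1))).length), ?_⟩
      have e2 : F :: (replicate (LL (j + 1) - 1) F) = replicate (LL (j + 1)) F := by
        rw [← List.replicate_succ, show LL (j + 1) - 1 + 1 = LL (j + 1) by omega]
      rw [← List.cons_append, e2, GG, List.take_append, List.take_append,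
        List.take_of_length_le (by simp; omega), List.length_replicate,
        List.take_of_length_le (by omega)]

theorem VSeq.WI_exists (hv : VSeq N v) {J i j : ℕ} (hJ : j + 1 < J) (hj : 1 ≤ j)
    (lo : PL j < i + RR) (hi : i ≤ PL j) :
    ∃ x y c, WI v (friedmanBlock (pre v J) i) i j x y c := by
  have hR := RR_val
  obtain ⟨T, hT⟩ := pre_split2 (v := v) hJ
  obtain ⟨j, rfl⟩ : ∃ k, j = k + 1 := ⟨j - 1, by omega⟩
  have hs := sg_ge j
  have hPL : PL (j + 1) = sg j + RR := rfl
  have hgg : gg (j + 1) = sg j - RR := rfl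
  obtain ⟨t, rfl⟩ : ∃ t, i = sg j + 1 + t := ⟨i - (sg j + 1), by omega⟩
  have ht : t < RR := by omega
  obtain ⟨y, c, hyc, hy1, hy2, hc, hxy⟩ : ∃ y c, y + c = 2 * t + 2 ∧ 1 ≤ y ∧ y ≤ RR ∧
      (c = 0 ∨ y = RR) ∧ 14405 ≤ RR - t + y := by
    by_cases h : 2 * t + 2 ≤ RR
    · exact ⟨2 * t + 2, 0, by omega, by omega, by omega, by omega, by omega⟩
    · exact ⟨RR, 2 * t + 2 - RR, by omega, by omega, by omega, by omega, by omega⟩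
  have hcL : c ≤ LL (j + 2) := by simp only [LL]; omega
  refine ⟨RR - t, y, c, ⟨hj, lo, hi, ?_, by omega, hy1, hy2, hxy⟩⟩
  have e : ∃ T', pre v J = ((pre v j ++ GG v j) ++ replicate t S) ++
      (((replicate (RR - t) S ++ GG v (j + 1)) ++ (replicate y S ++ replicate c F)) ++ T') := by
    have e1 : replicate RR S = replicate t S ++ replicate (RR - t) S := by
      rw [List.replicate_append_replicate, show t + (RR - t) = RR by omega]
    have e2 : ∃ T', replicate RR S ++ (GG v (j + 1 + 1) ++ T) =
        (replicate y S ++ replicate c F) ++ T' := by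
      rcases hc with rfl | rfl
      · refine ⟨replicate (RR - y) S ++ (GG v (j + 1 + 1) ++ T), ?_⟩
        rw [replicate_zero, List.append_nil, ← List.append_assoc (replicate y S),
          List.replicate_append_replicate, show y + (RR - y) = RR by omega]
      · refine ⟨replicate (LL (j + 2) - c) F ++
          (D (v (j + 2)) ++ replicate (nn v (j + 2)) F ++ T), ?_⟩
        rw [GG]
        have : replicate (LL (j + 2)) F = replicate c F ++ replicate (LL (j + 2) - c) F := by
          rw [List.replicate_append_replicate, show c + (LL (j + 2) - c) = LL (j + 2) by omega]
        rw [show j + 1 + 1 = j + 2 from rfl, this]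
        simp only [List.append_assoc]
    obtain ⟨T', e2⟩ := e2
    refine ⟨T', ?_⟩
    rw [hT, e2]
    have e3 : pre v (j + 1) = pre v j ++ (GG v j ++ (replicate t S ++ replicate (RR - t) S)) := by
      rw [← e1]; rfl
    rw [e3]
    simp only [List.append_assoc]
  obtain ⟨T', e⟩ := e
  rw [e]
  have hl := hv.pre_length (j + 1)
  rw [pre, List.length_append, List.length_append, List.length_replicate] at hl
  apply block_eq
  · rw [List.length_append, List.length_append, List.length_replicate]; omega
  · simp only [List.length_append, List.length_replicate, hv.GG_length]; omega


/-! ### Comparison of windows -/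

theorem VSeq.no (hv : VSeq N v) {j l : ℕ} (h : j < l) (hl : l ≤ N) {X : List (Fin 3)}
    (h1 : D (v j) <+ X) (h2 : X <+ GG v l) : False :=
  hv.bad j l h hl (D_embed (by rw [hv.len, hv.len]) (h1.trans h2))

/-- The first part of the tail. -/
def ZZ (v : ℕ → List ℕ) : List (Fin 3) := GG v 0 ++ (replicate RR S ++ replicate (LL 1) F)

theorem LL_one : LL 1 = 37200 := rfl

theorem VSeq.W0_eq (hv : VSeq N v) {J i : ℕ} (hJ : 1 < J) (lo : pp < i) (hi : i ≤ 2 * pp) :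
    friedmanBlock (pre v J) i =
      replicate (2 * pp + 1 - i) S ++ (ZZ v).take (2 * (i - pp)) := by
  have hR := RR_val
  have hpp := pp_val
  obtain ⟨T, hT⟩ := pre_split2 (v := v) (j := 0) hJ
  have hL := LL_one
  have hg : gg 0 = 169770 := rfl
  have e : pre v J = (head ++ replicate (i - pp - 1) S) ++
      ((replicate (2 * pp + 1 - i) S ++ (ZZ v).take (2 * (i - pp))) ++
      ((ZZ v).drop (2 * (i - pp)) ++ (D (v 1) ++ replicate (nn v 1) F ++ T))) := by
    have e1 : replicate pp S = replicate (i - pp - 1) S ++ replicate (2 * pp + 1 - i) S := by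
      rw [List.replicate_append_replicate, show i - pp - 1 + (2 * pp + 1 - i) = pp by omega]
    have e2 : GG v 0 ++ (replicate RR S ++ (GG v (0 + 1) ++ T)) =
        ((ZZ v).take (2 * (i - pp)) ++ (ZZ v).drop (2 * (i - pp))) ++
          (D (v 1) ++ replicate (nn v 1) F ++ T) := by
      rw [List.take_append_drop, ZZ, show GG v (0 + 1) = replicate (LL 1) F ++
        (D (v 1) ++ replicate (nn v 1) F) from rfl]
      simp only [List.append_assoc]
    rw [hT, e2, pre, e1]
    simp only [List.append_assoc]
  rw [e]
  apply block_eq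
  · rw [List.length_append, head_length, List.length_replicate]; omega
  · rw [List.length_append, List.length_replicate, List.length_take, ZZ, List.length_append,
      hv.GG_length, List.length_append, List.length_replicate, List.length_replicate]; omega

/-- Windows containing a normal form of the first kind. -/
structure C1 (v : ℕ → List ℕ) (U : List (Fin 3)) (j x y : ℕ) : Prop where
  sub : ∃ a c, cls1 x a (D (v j)) c y <+ U
  x_pos : 1 ≤ x
  xy : 14405 ≤ x + y
  y_or : 1 ≤ y ∨ RR + 7202 < x

theorem VSeq.cls1_GG (hv : VSeq N v) (j x y : ℕ) :
    ∃ a c, cls1 x a (D (v j)) c y = replicate x S ++ (GG v j ++ replicate y S) := by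
  refine ⟨LL j - 1, nn v j - 1, ?_⟩
  have h1 := LL_pos j
  have h2 := hv.n_pos j
  have h3 : nn v j - 1 + 1 = nn v j := by unfold nn; omega
  rw [cls1, GG, h3, show LL j - 1 + 1 = LL j by omega]
  simp only [List.append_assoc]

theorem VSeq.W0_C1 (hv : VSeq N v) {J i : ℕ} (hJ : 1 < J) (lo : pp < i) (hi : i ≤ 2 * pp)
    (hk : 2 * pp + 1 - i ≤ 36014) :
    ∃ x y, C1 v (friedmanBlock (pre v J) i) 0 x y := by
  have hR := RR_val
  have hpp := pp_val
  have hg : gg 0 = 169770 := rfl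
  have hL : LL 0 = 120000 := rfl
  have hw := hv.w_zero
  rw [hv.W0_eq hJ lo hi]
  by_cases h : 2 * pp + 1 - i ≤ 21608
  · obtain ⟨y, hy, hyR, hy1, hxy⟩ : ∃ y, y ≤ 2 * (i - pp) - gg 0 ∧ y ≤ RR ∧ 1 ≤ y ∧
        14405 ≤ 2 * pp + 1 - i + y := by
      by_cases h' : 2 * (i - pp) - gg 0 ≤ RR
      · exact ⟨_, le_rfl, h', by omega, by omega⟩
      · exact ⟨RR, by omega, le_rfl, by omega, by omega⟩
    refine ⟨2 * pp + 1 - i, y, ⟨?_, by omega, hxy, Or.inl hy1⟩⟩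
    obtain ⟨a, c, e⟩ := hv.cls1_GG 0 (2 * pp + 1 - i) y
    refine ⟨a, c, ?_⟩
    rw [e]
    apply Sublist.append_left
    have hz : ZZ v = (GG v 0 ++ replicate y S) ++
        (replicate (RR - y) S ++ replicate (LL 1) F) := by
      have : replicate RR S = replicate y S ++ replicate (RR - y) S := by
        rw [List.replicate_append_replicate, show y + (RR - y) = RR by omega]
      rw [ZZ, this]; simp only [List.append_assoc]
    rw [hz, List.take_append, List.take_of_length_le (by
      rw [List.length_append, hv.GG_length, List.length_replicate]; omega)]
    exact List.sublist_append_left _ _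
  · have hx : RR + 7202 < 2 * pp + 1 - i := by
      rw [hR]; exact not_le.1 h
    refine ⟨2 * pp + 1 - i, 0, ⟨⟨LL 0 - 1, 0, ?_⟩, by omega, by omega, Or.inr hx⟩⟩
    rw [cls1]
    apply Sublist.append_left
    have hz : ZZ v = (replicate (LL 0 - 1 + 1) F ++ (D (v 0) ++ (replicate (0 + 1) F ++
        replicate 0 S))) ++ (replicate (nn v 0 - 1) F ++
          (replicate RR S ++ replicate (LL 1) F)) := by
      have h2 := hv.n_pos 0
      have : replicate (nn v 0) F = replicate (0 + 1) F ++ replicate (nn v 0 - 1) F := by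
        rw [List.replicate_append_replicate, show 0 + 1 + (nn v 0 - 1) = nn v 0 by
          unfold nn; omega]
      rw [ZZ, GG, this, show LL 0 - 1 + 1 = LL 0 by omega, List.replicate_zero, List.append_nil]
      simp only [List.append_assoc]
    rw [hz, List.take_append, List.take_of_length_le (by
      simp only [List.length_append, List.length_replicate]; omega)]
    exact List.sublist_append_left _ _

theorem VSeq.WI_C1 (hv : VSeq N v) {U : List (Fin 3)} {i j x y c : ℕ} (h : WI v U i j x y c) :
    C1 v U j x y := by
  have hR := RR_val
  obtain ⟨a, c', e⟩ := hv.cls1_GG j x y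
  refine ⟨⟨a, c', ?_⟩, ?_, h.xy, Or.inl h.y_pos⟩
  · rw [e, h.eq, ← List.append_assoc, ← List.append_assoc]
    exact List.sublist_append_left _ _
  · have := h.x_eq; have := h.hi; omega

theorem cmp_XX (hv : VSeq N v) {U V : List (Fin 3)} {i j i' l : ℕ} {P B P' B' : List (Fin 3)}
    (hU : WX v U i j P B) (hV : WX v V i' l P' B') (hii : i < i') (hjl : j ≤ l) (hl : l + 1 ≤ N)
    (hs : U <+ V) : False := by
  have hR := RR_val
  have hB : B'.count S ≤ 7202 := (hV.subB.count_le S).trans (hv.GG_count _).le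
  have hP : (P' ++ [F]).count S ≤ 7202 := (hV.subP.count_le S).trans (hv.GG_count _).le
  have hs' := hs
  rw [hU.eq, hV.eq] at hs'
  have h1 := embXX hs' (by omega)
  rcases Nat.lt_or_eq_of_le hjl with hjl | rfl
  · rcases hU.alt with ⟨a, ha⟩ | ⟨a, B'', hb⟩
    · refine hv.no hjl (by omega) ?_ (h1.trans hV.subP)
      rw [ha]
      exact (List.sublist_append_left _ _).trans (List.sublist_append_right _ _)
    · rw [hb] at hs'
      have h2 := embX2 hs' (by omega)
      refine hv.no (j := j + 1) (l := l + 1) (by omega) (by omega) ?_ (h2.trans hV.subB)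
      exact (List.sublist_append_left _ _).trans (List.sublist_append_right _ _)
  · have := h1.length_le
    rw [hU.len, hV.len] at this
    have := hV.hi
    omega

theorem cmp_XI (hv : VSeq N v) {U V : List (Fin 3)} {i j i' l x y c : ℕ} {P B : List (Fin 3)}
    (hU : WX v U i j P B) (hV : WI v V i' l x y c) (hjl : j < l) (hl : l ≤ N)
    (hs : U <+ V) : False := by
  have hR := RR_val
  rw [hU.eq, hV.eq] at hs
  rcases hU.alt with ⟨a, ha⟩ | ⟨a, B'', hb⟩
  · have h1 := embXX hs (by rw [count_S_replicate_F]; omega)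
    rw [ha, List.replicate_succ, List.cons_append] at h1
    have h2 := strip2 (x := 0) (by simpa only [List.replicate_zero, List.nil_append] using h1)
    refine hv.no hjl hl ?_ h2
    exact (List.sublist_append_left _ _).trans (List.sublist_append_right _ _)
  · rw [hb] at hs
    have h2 := embX2' hs (by rw [hv.GG_count]; omega)
    have h3 : S ∈ replicate c F := h2.subset (by simp [S_mem_D])
    have := List.eq_of_mem_replicate h3
    simp [S, F] at this

theorem cmp_CX (hv : VSeq N v) {U V : List (Fin 3)} {j x y i' l : ℕ} {P' B' : List (Fin 3)}
    (hU : C1 v U j x y) (hV : WX v V i' l P' B') (hjl : j ≤ l) (hl : l + 1 ≤ N)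
    (hs : U <+ V) : False := by
  have hB : B'.count S ≤ 7202 := (hV.subB.count_le S).trans (hv.GG_count _).le
  have hP : (P' ++ [F]).count S ≤ 7202 := (hV.subP.count_le S).trans (hv.GG_count _).le
  obtain ⟨a, c, h⟩ := hU.sub
  rw [hV.eq] at hs
  have h1 := embIX (h.trans hs) hU.x_pos hP hB (hv.count j) hU.xy
  exact hv.no (by omega) hl h1 hV.subB

theorem cmp_CI (hv : VSeq N v) {U V : List (Fin 3)} {j x y i' l x' y' c' : ℕ}
    (hU : C1 v U j x y) (hV : WI v V i' l x' y' c') (hjl : j < l ∨ x' < x) (hl : l ≤ N)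
    (hs : U <+ V) : False := by
  obtain ⟨a, c, h⟩ := hU.sub
  rw [hV.eq] at hs
  have hx' : x' ≤ RR := by
    have := hV.x_eq; have := hV.lo; have := hV.hi; omega
  have h1 := embII (h.trans hs) hU.y_or hx' (hv.GG_count l).le (S_mem_D _)
  rcases hjl with hjl | hx
  · rw [List.replicate_succ, List.cons_append] at h1
    refine hv.no hjl hl ?_ (strip2 h1)
    exact (List.sublist_append_left _ _).trans (List.sublist_append_right _ _)
  · have := h1.count_le S
    simp only [List.count_append, count_S_replicate_S, count_S_replicate_F, hv.GG_count,
      hv.count] at this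
    omega

theorem cmp_00 (hv : VSeq N v) {J i i' : ℕ} (hJ : 1 < J) (lo : pp < i) (hii : i < i')
    (hi' : i' ≤ 2 * pp) (hs : friedmanBlock (pre v J) i <+ friedmanBlock (pre v J) i') :
    False := by
  have hR := RR_val
  have hpp := pp_val
  have hL : LL 0 = 120000 := rfl
  have hL1 := LL_one
  have hg : gg 0 = 169770 := rfl
  rw [hv.W0_eq hJ lo (by omega), hv.W0_eq hJ (by omega) hi'] at hs
  have h1 := cancelS (by omega) hs
  have hlen : (ZZ v).length = 221376 := by
    rw [ZZ, List.length_append, hv.GG_length, List.length_append, List.length_replicate,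
      List.length_replicate]
    omega
  have hcount : (ZZ v).count S = 21608 := by
    rw [ZZ, List.count_append, hv.GG_count, List.count_append, count_S_replicate_S,
      count_S_replicate_F]
    omega
  have hδ : 2 * pp + 1 - i - (2 * pp + 1 - i') = i' - i := by omega
  rw [hδ] at h1
  have h2 : i' - i ≤ 21608 := by
    have a1 := h1.count_le S
    have a2 := ((List.take_sublist (2 * (i' - pp)) (ZZ v))).count_le S
    rw [List.count_append, count_S_replicate_S] at a1
    omega
  have hz : ZZ v = replicate (LL 0) F ++ (D (v 0) ++ replicate (nn v 0) F ++
      (replicate RR S ++ replicate (LL 1) F)) := by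
    rw [ZZ, GG]; simp only [List.append_assoc]
  have hlenz := hlen
  rw [hz, List.length_append, List.length_replicate] at hlenz
  have h3 : S :: (replicate (i' - i - 1) S ++ (ZZ v).take (2 * (i - pp))) <+
      replicate (min (2 * (i' - pp)) (LL 0)) F ++ ((D (v 0) ++ replicate (nn v 0) F ++
      (replicate RR S ++ replicate (LL 1) F)).take (2 * (i' - pp) - LL 0)) := by
    have e : i' - i = i' - i - 1 + 1 := by omega
    rw [e, List.replicate_succ, List.cons_append] at h1
    refine h1.trans ?_
    conv_lhs => rw [hz]
    rw [List.take_append, List.length_replicate, List.take_replicate]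
  have h4 := (stripS h3).length_le
  rw [List.length_cons, List.length_append, List.length_replicate, List.length_take,
    List.length_take, hlen] at h4
  have hm1 := Nat.min_le_left (2 * (i' - pp) - LL 0)
    (D (v 0) ++ replicate (nn v 0) F ++ (replicate RR S ++ replicate (LL 1) F)).length
  have hm2 := Nat.min_le_right (2 * (i' - pp) - LL 0)
    (D (v 0) ++ replicate (nn v 0) F ++ (replicate RR S ++ replicate (LL 1) F)).length
  have h5 := h4.trans hm1
  have h6 := h4.trans hm2
  clear hm1 hm2 h4 h3 hz hs h1 hcount hδ
  generalize (D (v 0) ++ replicate (nn v 0) F ++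
    (replicate RR S ++ replicate (LL 1) F)).length = z at *
  generalize LL 0 = a at *
  generalize pp = p at *
  obtain ⟨d, rfl⟩ : ∃ d, i' = i + d := ⟨i' - i, by omega⟩
  obtain ⟨t, rfl⟩ : ∃ t, i = p + t := ⟨i - p, by omega⟩
  have e1 : p + t + d - p = t + d := by omega
  have e2 : p + t - p = t := by omega
  have e3 : p + t + d - (p + t) = d := by omega
  rw [e1, e2, e3] at h5
  rw [e2, e3] at h6
  rw [e3] at h2
  clear e1 e2 e3
  rcases le_total (2 * t) 221376 with h | h
  · rw [Nat.min_eq_left h] at h5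
    omega
  · omega

theorem cmp_0_late (hv : VSeq N v) {J i : ℕ} (hJ : 1 < J) (lo : pp < i) (hi : i ≤ 2 * pp)
    {V : List (Fin 3)} (hV : V.count S ≤ 36014) (hs : friedmanBlock (pre v J) i <+ V) :
    ∃ x y, C1 v (friedmanBlock (pre v J) i) 0 x y := by
  by_cases hk : 2 * pp + 1 - i ≤ 36014
  · exact hv.W0_C1 hJ lo hi hk
  · exfalso
    rw [hv.W0_eq hJ lo hi] at hs
    have := hs.count_le S
    rw [List.count_append, count_S_replicate_S] at this
    omega

theorem WX.count (hv : VSeq N v) {U : List (Fin 3)} {i j : ℕ} {P B : List (Fin 3)}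
    (h : WX v U i j P B) : U.count S ≤ 36014 := by
  have hR := RR_val
  have hB : B.count S ≤ 7202 := (h.subB.count_le S).trans (hv.GG_count _).le
  have hP : (P ++ [F]).count S ≤ 7202 := (h.subP.count_le S).trans (hv.GG_count _).le
  rw [h.eq, List.count_append, List.count_append (l₁ := replicate RR S), count_S_replicate_S]
  omega

theorem WI.count (hv : VSeq N v) {U : List (Fin 3)} {i j x y c : ℕ}
    (h : WI v U i j x y c) : U.count S ≤ 36014 := by
  have hR := RR_val
  have := h.x_eq
  have := h.lo
  have := h.hi
  have := h.y_le
  rw [h.eq, List.count_append, List.count_append, List.count_append, count_S_replicate_S,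
    hv.GG_count, count_S_replicate_S, count_S_replicate_F]
  omega

theorem classify (n : ℕ) : ∀ i, PL 0 < i → i ≤ PL n + gg n →
    ∃ j, j ≤ n ∧ ((PL j < i ∧ i ≤ PL j + gg j) ∨ (1 ≤ j ∧ PL j < i + RR ∧ i ≤ PL j)) := by
  induction n with
  | zero => intro i h1 h2; exact ⟨0, le_rfl, Or.inl ⟨h1, h2⟩⟩
  | succ n ih =>
    intro i h1 h2
    have e := PL_succ n
    by_cases h : i ≤ PL n + gg n
    · obtain ⟨j, hj, H⟩ := ih i h1 h
      exact ⟨j, by omega, H⟩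
    · by_cases h' : i ≤ PL (n + 1)
      · exact ⟨n + 1, le_rfl, Or.inr ⟨by omega, by omega, h'⟩⟩
      · exact ⟨n + 1, le_rfl, Or.inl ⟨by omega, h2⟩⟩

theorem order_lt {j l : ℕ} (h : l < j) : PL l + gg l + RR ≤ PL j := by
  rw [← PL_succ]; exact PL_mono h

theorem part2 {n : ℕ} (hv : VSeq (n + 1) v) {i i' : ℕ} (lo : pp < i) (hii : i < i')
    (hi' : i' ≤ PL n + gg n)
    (hs : friedmanBlock (pre v (n + 2)) i <+ friedmanBlock (pre v (n + 2)) i') : False := by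
  have hR := RR_val
  by_cases h0' : i' ≤ 2 * pp
  · exact cmp_00 hv (by omega) lo hii h0' hs
  obtain ⟨l, hl, H'⟩ := classify n i' (by change 2 * pp < i'; omega) hi'
  by_cases h0 : i ≤ 2 * pp
  · rcases H' with ⟨a, b⟩ | ⟨a, b, c⟩
    · obtain ⟨P', B', hV⟩ := hv.WX_exists (J := n + 2) (by omega) a b
      obtain ⟨x, y, hU⟩ := cmp_0_late hv (by omega) lo h0 (hV.count hv) hs
      exact cmp_CX hv hU hV (by omega) (by omega) hs
    · obtain ⟨x', y', c', hV⟩ := hv.WI_exists (J := n + 2) (by omega) a b c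
      obtain ⟨x, y, hU⟩ := cmp_0_late hv (by omega) lo h0 (hV.count hv) hs
      exact cmp_CI hv hU hV (Or.inl (by omega)) (by omega) hs
  obtain ⟨j, hj, H⟩ := classify n i (by change 2 * pp < i; omega) (by omega)
  rcases H with ⟨a, b⟩ | ⟨a, b, c⟩
  · obtain ⟨P, B, hU⟩ := hv.WX_exists (J := n + 2) (by omega) a b
    rcases H' with ⟨a', b'⟩ | ⟨a', b', c'⟩
    · obtain ⟨P', B', hV⟩ := hv.WX_exists (J := n + 2) (by omega) a' b'
      have : j ≤ l := by
        by_contra hlt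
        have := order_lt (not_le.1 hlt)
        omega
      exact cmp_XX hv hU hV hii this (by omega) hs
    · obtain ⟨x', y', z', hV⟩ := hv.WI_exists (J := n + 2) (by omega) a' b' c'
      have : j < l := by
        by_contra hlt
        have := PL_mono (not_lt.1 hlt)
        omega
      exact cmp_XI hv hU hV this (by omega) hs
  · obtain ⟨x, y, z, hU⟩ := hv.WI_exists (J := n + 2) (by omega) a b c
    have hC := hv.WI_C1 hU
    have hjl : j ≤ l := by
      by_contra hlt
      have := order_lt (not_le.1 hlt)
      omega
    rcases H' with ⟨a', b'⟩ | ⟨a', b', c'⟩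
    · obtain ⟨P', B', hV⟩ := hv.WX_exists (J := n + 2) (by omega) a' b'
      exact cmp_CX hv hC hV hjl (by omega) hs
    · obtain ⟨x', y', z', hV⟩ := hv.WI_exists (J := n + 2) (by omega) a' b' c'
      refine cmp_CI hv hC hV ?_ (by omega) hs
      rcases Nat.lt_or_eq_of_le hjl with h | rfl
      · exact Or.inl h
      · right
        rw [hU.x_eq, hV.x_eq]; omega

theorem block_take {W : List (Fin 3)} {m i : ℕ} (h1 : 1 ≤ i) (h : 2 * i ≤ m) :
    friedmanBlock (W.take m) i = friedmanBlock W i := by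
  unfold friedmanBlock
  rw [List.drop_take, List.take_take, min_eq_left (by omega)]

theorem final : ∃ s : List (Fin 3), SatisfiesStar s ∧ ackF 7198 158386 < s.length := by
  obtain ⟨N, v, hv, hN, h1⟩ := vseq_exists
  obtain ⟨n, rfl⟩ : ∃ n, N = n + 1 := ⟨N - 1, by omega⟩
  generalize ackF 7198 158386 = Q at hN ⊢
  have hR := RR_val
  have hlen := hv.pre_length (n + 2)
  have e1 := PL_succ n
  have e2 : PL (n + 1) = sg n + RR := rfl
  have e3 : PL (n + 2) = 2 * sg n + RR := rfl
  have e4 := sg_ge n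
  have hl : ((pre v (n + 2)).take (2 * sg n)).length = 2 * sg n := by
    rw [List.length_take, hlen]; omega
  refine ⟨(pre v (n + 2)).take (2 * sg n), ?_, by omega⟩
  intro i j hi hij hj hs
  rw [hl] at hj
  rw [block_take hi (by omega), block_take (by omega) (by omega)] at hs
  by_cases hp : i ≤ pp
  · obtain ⟨T, hT, hM⟩ := pre_head (v := v) (n + 2)
    rw [hT] at hs
    exact part1 hM hi hij hp hs
  · exact part2 hv (by omega) hij (by omega) hs

end FN3

/-- n(3) > A(7198, 158386): there is a word over a three-letter alphabet of
length greater than `A(7198, 158386)` satisfying (*). -/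
theorem friedman_n3_gt_A7198_158386 :
    ∃ s : List (Fin 3), SatisfiesStar s ∧ ackF 7198 158386 < s.length := by
  exact FN3.final
end

section
/- n(4) > A^{(A(187196))}(1), where A(k) := A(k,k) is the diagonal one-argument Ackermann function and A^{(n)}(1) denotes its n-fold iterate applied to 1 (that is, A^{(1)}(1) = A(1) and A^{(n)}(1) = A(A^{(n−1)}(1))): there exists a word over a four-letter alphabet of length greater than A^{(A(187196))}(1) satisfying property (*). -/
/-- The diagonal one-argument Ackermann function `A(k) = A(k,k)`. -/
def ackDiag (k : ℕ) : ℕ := ackF k k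

namespace FriedmanFour

/-! ## Splitting subwords at a marker letter -/

theorem split_marker {α : Type} [DecidableEq α] {c : α} {l1 l2 r1 r2 : List α}
    (h : (l1 ++ c :: l2).Sublist (r1 ++ c :: r2)) (hr : c ∉ r1)
    (hc : l2.count c = r2.count c) (hl : c ∉ l1) : l1.Sublist r1 ∧ l2.Sublist r2 := by
  obtain ⟨x, y, hxy, hx, hy⟩ := List.sublist_append_iff.1 h
  have hcx : c ∉ x := fun hm => hr (hx.subset hm)
  rcases List.append_eq_append_iff.1 hxy with ⟨a, ha, hb⟩ | ⟨a, ha, hb⟩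
  · rcases a with _ | ⟨e, a⟩
    · simp at ha hb
      subst ha
      rw [← hb] at hy
      exact ⟨hx, List.cons_sublist_cons.1 hy⟩
    · simp at hb
      exact absurd (by rw [ha, ← hb.1]; simp) hcx
  · rcases a with _ | ⟨e, a⟩
    · simp at ha hb
      rw [ha]
      rw [hb] at hy
      exact ⟨hx, List.cons_sublist_cons.1 hy⟩
    · rw [hb] at hy
      have hec : e ≠ c := by
        rintro rfl
        exact hl (by rw [ha]; simp)
      have h3 := hy.count_le c
      simp [hec] at h3
      have h4 : (e :: (a ++ c :: l2)).Sublist r2 := by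
        rcases List.sublist_cons_iff.1 hy with h5 | ⟨r, h5, h6⟩
        · simpa using h5
        · simp at h5; exact absurd h5.1 hec
      have h7 := h4.count_le c
      simp [hec] at h7
      omega

/-! ## Encoding of lists of naturals -/

/-- `enc [v₁, …, v_k] = 2^{v₁} 0 2^{v₂} 0 … 2^{v_k} 0`. -/
def enc : List ℕ → List (Fin 4)
  | [] => []
  | v :: m => List.replicate v 2 ++ 0 :: enc m

/-- Pad with the letter `2` up to length `n`. -/
def padTo (n : ℕ) (l : List (Fin 4)) : List (Fin 4) :=
  l ++ List.replicate (n - l.length) 2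

theorem enc_count (m : List ℕ) : (enc m).count 0 = m.length := by
  induction m with
  | nil => simp [enc]
  | cons v m ih => simp [enc, ih, List.count_replicate]

theorem enc_length (m : List ℕ) (t : ℕ) (h : ∀ e ∈ m, e ≤ t) :
    (enc m).length ≤ m.length * (t + 1) := by
  induction m with
  | nil => simp [enc]
  | cons v m ih =>
    have h1 := ih (fun e he => h e (by simp [he]))
    have h2 := h v (by simp)
    simp [enc]
    nlinarith

theorem enc_letters (m : List ℕ) : ∀ x ∈ enc m, x = 0 ∨ x = 2 := by
  induction m with
  | nil => simp [enc]
  | cons v m ih =>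
    intro x hx
    simp [enc] at hx
    rcases hx with ⟨_, h⟩ | h | h
    · exact Or.inr h
    · exact Or.inl h
    · exact ih x h

theorem padTo_letters (n : ℕ) (m : List ℕ) : ∀ x ∈ padTo n (enc m), x = 0 ∨ x = 2 := by
  intro x hx
  simp [padTo] at hx
  rcases hx with h | ⟨_, h⟩
  · exact enc_letters m x h
  · exact Or.inr h

theorem padTo_length (n : ℕ) (l : List (Fin 4)) (h : l.length ≤ n) :
    (padTo n l).length = n := by
  simp [padTo]; omega

theorem padTo_count (n : ℕ) (m : List ℕ) : (padTo n (enc m)).count 0 = m.length := by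
  simp [padTo, enc_count, List.count_replicate]

theorem enc_sublist (m : List ℕ) : ∀ (m' : List ℕ) (a b : ℕ), m.length = m'.length →
    (enc m ++ List.replicate a 2).Sublist (enc m' ++ List.replicate b 2) → m ≤ m' := by
  induction m with
  | nil =>
    intro m' a b hl _
    have : m' = [] := List.length_eq_zero_iff.1 (by simpa using hl.symm)
    subst this; exact le_refl _
  | cons v m ih =>
    intro m' a b hl h
    rcases m' with _ | ⟨v', m'⟩
    · simp at hl
    · simp only [List.length_cons, Nat.add_right_cancel_iff] at hl
      simp only [enc, List.append_assoc, List.cons_append] at h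
      obtain ⟨h1, h2⟩ := split_marker h (by simp)
        (by simp [enc_count, hl, List.count_replicate]) (by simp)
      have h3 := h1.length_le
      simp at h3
      have h4 := ih m' a b hl h2
      rcases lt_or_eq_of_le h3 with h5 | h5
      · exact le_of_lt (List.Lex.rel h5)
      · subst h5
        rcases lt_or_eq_of_le h4 with h6 | h6
        · exact le_of_lt (List.Lex.cons h6)
        · rw [h6]

theorem padTo_sublist {m m' : List ℕ} {a b : ℕ} (hl : m.length = m'.length)
    (h : (padTo a (enc m)).Sublist (padTo b (enc m'))) : m ≤ m' :=
  enc_sublist m m' _ _ hl h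

/-! ## States and steps -/

/-- Slow component and fast component; `none` marks the end of a phase. -/
abbrev St := List ℕ × Option (List ℕ)

inductive Step (t : ℕ) : St → St → Prop
  | dec (p pre : List ℕ) (v : ℕ) (rest rest' : List ℕ) (hl : rest.length = rest'.length)
      (hb : ∀ e ∈ rest', e ≤ t + 1) :
      Step t (p, some (pre ++ (v + 1) :: rest)) (p, some (pre ++ v :: rest'))
  | spec (p m : List ℕ) : Step t (p, some m) (p, none)
  | phase (p p' m : List ℕ) (hp : p' < p) (hl : p'.length = 2) (hb : ∀ e ∈ p', e ≤ t + 1)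
      (h3 : 3 ≤ m.length) (hm : m.length ≤ t + 1) (hmb : ∀ e ∈ m, e ≤ t + 1) :
      Step t (p, none) (p', some m)

def Inv (t : ℕ) (σ : St) : Prop :=
  σ.1.length = 2 ∧ (∀ e ∈ σ.1, e ≤ t) ∧
    ∀ m, σ.2 = some m → 3 ≤ m.length ∧ m.length ≤ t ∧ ∀ e ∈ m, e ≤ t

theorem Inv.step {t : ℕ} {σ σ' : St} (h : Inv t σ) (hs : Step t σ σ') : Inv (t + 1) σ' := by
  obtain ⟨h1, h2, h3⟩ := h
  cases hs with
  | dec p pre v rest rest' hl hb =>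
    refine ⟨h1, fun e he => (h2 e he).trans (Nat.le_succ t), ?_⟩
    intro m hm
    obtain ⟨g1, g2, g3⟩ := h3 _ rfl
    simp only [Option.some.injEq] at hm
    subst hm
    simp only [List.length_append, List.length_cons] at g1 g2 ⊢
    refine ⟨by omega, by omega, ?_⟩
    intro e he
    simp only [List.mem_append, List.mem_cons] at he g3
    rcases he with he | he | he
    · have := g3 e (Or.inl he); omega
    · have := g3 (v + 1) (Or.inr (Or.inl rfl)); omega
    · exact hb e he
  | spec p m =>
    exact ⟨h1, fun e he => (h2 e he).trans (Nat.le_succ t), fun m hm => by simp at hm⟩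
  | phase p p' m hp hl hb h4 hm hmb =>
    refine ⟨hl, hb, ?_⟩
    intro m' hm'
    simp only [Option.some.injEq] at hm'
    subst hm'
    exact ⟨h4, hm, hmb⟩

def After (σ σ' : St) : Prop :=
  σ'.1 < σ.1 ∨ (σ'.1 = σ.1 ∧ ∃ m, σ.2 = some m ∧
    ∀ m', σ'.2 = some m' → m'.length = m.length ∧ m' < m)

theorem After.trans {σ σ' σ'' : St} (h : After σ σ') (h' : After σ' σ'') : After σ σ'' := by
  rcases h with h | ⟨h, m, hm, hh⟩
  · rcases h' with h' | ⟨h', -⟩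
    · exact Or.inl (h'.trans h)
    · exact Or.inl (by rw [h']; exact h)
  · rcases h' with h' | ⟨h', m', hm', hh'⟩
    · exact Or.inl (by rw [← h]; exact h')
    · refine Or.inr ⟨h'.trans h, m, hm, ?_⟩
      intro m'' hm''
      have a := hh m' hm'
      have b := hh' m'' hm''
      exact ⟨b.1.trans a.1, b.2.trans a.2⟩

theorem append_lex (pre : List ℕ) (v : ℕ) (r r' : List ℕ) :
    pre ++ v :: r' < pre ++ (v + 1) :: r := by
  induction pre with
  | nil => exact List.Lex.rel (Nat.lt_succ_self v)
  | cons a pre ih => exact List.Lex.cons ih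

theorem Step.after {t : ℕ} {σ σ' : St} (h : Step t σ σ') : After σ σ' := by
  cases h with
  | dec p pre v rest rest' hl hb =>
    refine Or.inr ⟨rfl, _, rfl, ?_⟩
    intro m' hm'
    simp only [Option.some.injEq] at hm'
    subst hm'
    exact ⟨by simp [hl], append_lex _ _ _ _⟩
  | spec p m => exact Or.inr ⟨rfl, m, rfl, fun m' hm' => by simp at hm'⟩
  | phase p p' m hp hl hb h3 hm hmb => exact Or.inl hp

/-! ## The words attached to states -/

def Pw (n : ℕ) (σ : St) : List (Fin 4) := padTo n (enc σ.1)

def Qw (n : ℕ) (σ : St) : List (Fin 4) :=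
  match σ.2 with
  | some m => padTo n (enc m)
  | none => List.replicate n 0

theorem Qw_some {n : ℕ} {σ : St} {m : List ℕ} (h : σ.2 = some m) : Qw n σ = padTo n (enc m) := by
  simp [Qw, h]

theorem Qw_none {n : ℕ} {σ : St} (h : σ.2 = none) : Qw n σ = List.replicate n 0 := by
  simp [Qw, h]

/-- Sufficient length at time `t`. -/
def Big (t n : ℕ) : Prop := t * (t + 1) + 1 ≤ n ∧ t + 2 ≤ n ∧ 2 * t + 2 ≤ n

theorem Inv.enc_lt {t n : ℕ} {σ : St} (h : Inv t σ) (hn : Big t n) {m : List ℕ}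
    (hm : σ.2 = some m) : (enc m).length + 1 ≤ n := by
  obtain ⟨-, g, g'⟩ := h.2.2 m hm
  have h1 := enc_length m t g'
  have := hn.1
  nlinarith

theorem Pw_length {t n : ℕ} {σ : St} (h : Inv t σ) (hn : Big t n) : (Pw n σ).length = n := by
  apply padTo_length
  have := enc_length σ.1 t h.2.1
  rw [h.1] at this
  have := hn.2.2
  omega

theorem Qw_length {t n : ℕ} {σ : St} (h : Inv t σ) (hn : Big t n) : (Qw n σ).length = n := by
  rcases hm : σ.2 with _ | m
  · simp [Qw_none hm]
  · rw [Qw_some hm]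
    apply padTo_length
    have := h.enc_lt hn hm
    omega

theorem Pw_letters (n : ℕ) (σ : St) : ∀ x ∈ Pw n σ, x = 0 ∨ x = 2 := padTo_letters _ _

theorem Qw_letters (n : ℕ) (σ : St) : ∀ x ∈ Qw n σ, x = 0 ∨ x = 2 := by
  rcases hm : σ.2 with _ | m
  · rw [Qw_none hm]
    intro x hx
    simp at hx
    exact Or.inl hx.2
  · rw [Qw_some hm]; exact padTo_letters _ _

theorem not_Q_P {t t' n n' : ℕ} {σ σ' : St} (h : Inv t σ) (h3 : 3 ≤ n)
    (h' : Inv t' σ') : ¬ (Qw n σ).Sublist (Pw n' σ') := by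
  intro hs
  have h1 := hs.count_le 0
  rw [Pw, padTo_count, h'.1] at h1
  rcases hm : σ.2 with _ | m
  · rw [Qw_none hm] at h1
    simp at h1; omega
  · rw [Qw_some hm, padTo_count] at h1
    have := (h.2.2 m hm).1
    omega

theorem Pw_le {t t' n n' : ℕ} {σ σ' : St} (h : Inv t σ) (h' : Inv t' σ')
    (hs : (Pw n σ).Sublist (Pw n' σ')) : σ.1 ≤ σ'.1 :=
  padTo_sublist (h.1.trans h'.1.symm) hs

theorem not_Q_Q {t n n' : ℕ} {σ σ' : St} (h : Inv t σ) (hn : Big t n)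
    (ha : After σ σ') (hp : σ'.1 = σ.1) : ¬ (Qw n σ).Sublist (Qw n' σ') := by
  intro hs
  rcases ha with ha | ⟨-, m, hm, hh⟩
  · rw [hp] at ha; exact lt_irrefl _ ha
  · have he := h.enc_lt hn hm
    rw [Qw_some hm] at hs
    rcases hm' : σ'.2 with _ | m'
    · rw [Qw_none hm'] at hs
      have : (2 : Fin 4) ∈ List.replicate n' (0 : Fin 4) := by
        apply hs.subset
        simp [padTo]
        right; omega
      simp at this
    · rw [Qw_some hm'] at hs
      obtain ⟨g1, g2⟩ := hh m' hm'
      exact absurd (padTo_sublist g1.symm hs) (not_le.2 g2)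

/-! ## Runs -/

theorem run_inv {st : ℕ → St} {a N : ℕ} (h0 : Inv a (st a))
    (hs : ∀ t, a ≤ t → t < N → Step t (st t) (st (t + 1))) :
    ∀ t, a ≤ t → t ≤ N → Inv t (st t) := by
  intro t ht
  induction t, ht using Nat.le_induction with
  | base => intro _; exact h0
  | succ t ht ih => intro hN; exact (ih (by omega)).step (hs t ht (by omega))

theorem run_after {st : ℕ → St} {a N : ℕ}
    (hs : ∀ t, a ≤ t → t < N → Step t (st t) (st (t + 1))) (t : ℕ) (hat : a ≤ t) :
    ∀ t', t + 1 ≤ t' → t' ≤ N → After (st t) (st t') := by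
  intro t' ht
  induction t', ht using Nat.le_induction with
  | base => intro hN; exact (hs t hat (by omega)).after
  | succ u hu ih =>
    intro hN
    exact (ih (by omega)).trans (hs u (by omega) (by omega)).after

theorem After.le {σ σ' : St} (h : After σ σ') : σ'.1 ≤ σ.1 := by
  rcases h with h | h
  · exact le_of_lt h
  · exact le_of_eq h.1

theorem run_even {st : ℕ → St} {a N : ℕ} (h0 : Inv a (st a))
    (hs : ∀ t, a ≤ t → t < N → Step t (st t) (st (t + 1))) {t t' n n' k k' : ℕ}
    (hat : a ≤ t) (htt : t < t') (ht' : t' ≤ N) (hn : Big t n) :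
    ¬ ((Pw k (st t)).Sublist (Pw k' (st t')) ∧ (Qw n (st t)).Sublist (Qw n' (st t'))) := by
  rintro ⟨h1, h2⟩
  have i1 := run_inv h0 hs t hat (by omega)
  have i2 := run_inv h0 hs t' (by omega) ht'
  have ha := run_after hs t hat t' htt ht'
  exact not_Q_Q i1 hn ha (le_antisymm ha.le (Pw_le i1 i2 h1)) h2

theorem run_odd {st : ℕ → St} {a N : ℕ} (h0 : Inv a (st a))
    (hs : ∀ t, a ≤ t → t < N → Step t (st t) (st (t + 1))) {t t' n n' k k' : ℕ}
    (hat : a ≤ t) (htt : t < t') (ht' : t' + 1 ≤ N) (hn : Big t n) :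
    ¬ ((Qw n (st t)).Sublist (Qw n' (st t')) ∧
      (Pw k (st (t + 1))).Sublist (Pw k' (st (t' + 1)))) := by
  rintro ⟨h1, h2⟩
  have i1 := run_inv h0 hs t hat (by omega)
  have i2 := run_inv h0 hs (t + 1) (by omega) (by omega)
  have i3 := run_inv h0 hs (t' + 1) (by omega) ht'
  have i4 := run_inv h0 hs t' (by omega) (by omega)
  have ha := run_after hs (t + 1) (by omega) (t' + 1) (by omega) ht'
  have hp1 : (st (t' + 1)).1 = (st (t + 1)).1 := le_antisymm ha.le (Pw_le i2 i3 h2)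
  have hle1 : (st (t' + 1)).1 ≤ (st t').1 := (hs t' (by omega) (by omega)).after.le
  have hmid : t' = t + 1 ∨ After (st (t + 1)) (st t') := by
    rcases Nat.lt_or_ge (t + 1) t' with h | h
    · exact Or.inr (run_after hs (t + 1) (by omega) t' h (by omega))
    · exact Or.inl (by omega)
  have hle2 : (st t').1 ≤ (st (t + 1)).1 := by
    rcases hmid with h | h
    · rw [h]
    · exact h.le
  have hp2 : (st t').1 = (st (t + 1)).1 := le_antisymm hle2 (hp1 ▸ hle1)
  have hst := hs t hat (by omega)
  by_cases hpt : (st (t + 1)).1 = (st t).1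
  · exact not_Q_Q i1 hn (run_after hs t hat t' htt (by omega)) (hp2.trans hpt) h1
  · have hnone : (st t).2 = none ∧ ∃ m, (st (t + 1)).2 = some m := by
      generalize st t = σ at hst hpt
      generalize st (t + 1) = σ' at hst hpt
      cases hst with
      | dec => exact absurd rfl hpt
      | spec => exact absurd rfl hpt
      | phase p p' m => exact ⟨rfl, m, rfl⟩
    obtain ⟨hn1, m, hm⟩ := hnone
    have hst' := hs t' (by omega) (by omega)
    have hsome : ∃ m', (st t').2 = some m' := by
      have hq : (st (t' + 1)).1 = (st t').1 := hp1.trans hp2.symm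
      generalize st t' = σ at hst' hq
      generalize st (t' + 1) = σ' at hst' hq
      cases hst' with
      | dec => exact ⟨_, rfl⟩
      | spec => exact ⟨_, rfl⟩
      | phase p p' m hp => exact absurd hq (ne_of_lt hp)
    obtain ⟨m', hm'⟩ := hsome
    have hlen : m'.length = m.length := by
      rcases hmid with h | h
      · subst h
        rw [hm] at hm'
        simp only [Option.some.injEq] at hm'
        rw [hm']
      · rcases h with h | ⟨-, m0, hm0, hh⟩
        · exact absurd hp2 (ne_of_lt h)
        · rw [hm] at hm0
          simp only [Option.some.injEq] at hm0
          subst hm0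
          exact (hh m' hm').1
    have hml := (i2.2.2 m hm).2.1
    rw [Qw_none hn1, Qw_some hm'] at h1
    have h5 := h1.count_le 0
    rw [padTo_count] at h5
    simp at h5
    have := hn.2.1
    omega

/-! ## Reachability and the growth of runs -/

def Reach : ℕ × St → ℕ × St → Prop :=
  Relation.ReflTransGen (fun a b => b.1 = a.1 + 1 ∧ Step a.1 a.2 b.2)

theorem Reach.run {a b : ℕ × St} (h : Reach a b) :
    a.1 ≤ b.1 ∧ ∃ st : ℕ → St, st a.1 = a.2 ∧ st b.1 = b.2 ∧
      ∀ t, a.1 ≤ t → t < b.1 → Step t (st t) (st (t + 1)) := by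
  induction h with
  | refl => exact ⟨le_refl _, fun _ => a.2, rfl, rfl, fun t h1 h2 => by omega⟩
  | @tail b c _ hbc ih =>
    obtain ⟨hle, st, h1, h2, h3⟩ := ih
    obtain ⟨hc, hs⟩ := hbc
    refine ⟨by omega, Function.update st c.1 c.2, ?_, by simp, ?_⟩
    · rw [Function.update_of_ne (by omega)]; exact h1
    · intro t ht htc
      rw [Function.update_of_ne (by omega)]
      by_cases htb : t = b.1
      · subst htb
        rw [← hc, Function.update_self, h2]
        exact hs
      · rw [Function.update_of_ne (by omega)]
        exact h3 t ht (by omega)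

def F : ℕ → ℕ → ℕ
  | 0 => fun t => t + 1
  | s + 1 => fun t => (F s)^[t + 1] (t + 1)

theorem iter_reach (s : ℕ)
    (ih : ∀ (p pre : List ℕ) (v t : ℕ), Reach (t, (p, some (pre ++ (v + 1) :: List.replicate s 0)))
      (F s t, (p, some (pre ++ v :: List.replicate s 0)))) (p pre : List ℕ) (n : ℕ) :
    ∀ t, Reach (t, (p, some (pre ++ n :: List.replicate s 0)))
      ((F s)^[n] t, (p, some (pre ++ 0 :: List.replicate s 0))) := by
  induction n with
  | zero => intro t; exact Relation.ReflTransGen.refl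
  | succ n ihn =>
    intro t
    exact Relation.ReflTransGen.trans (ih p pre n t) (ihn (F s t))

theorem dec_reach (s : ℕ) : ∀ (p pre : List ℕ) (v t : ℕ),
    Reach (t, (p, some (pre ++ (v + 1) :: List.replicate s 0)))
      (F s t, (p, some (pre ++ v :: List.replicate s 0))) := by
  induction s with
  | zero =>
    intro p pre v t
    exact Relation.ReflTransGen.single ⟨rfl, Step.dec p pre v _ _ rfl (by simp)⟩
  | succ s ih =>
    intro p pre v t
    have h1 : Reach (t, (p, some (pre ++ (v + 1) :: List.replicate (s + 1) 0)))
        (t + 1, (p, some (pre ++ v :: (t + 1) :: List.replicate s 0))) := by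
      refine Relation.ReflTransGen.single ⟨rfl, Step.dec p pre v _ _ (by simp) ?_⟩
      intro e he
      simp at he
      omega
    have h2 := iter_reach s ih p (pre ++ [v]) (t + 1) (t + 1)
    simp only [List.append_assoc, List.singleton_append] at h2
    exact Relation.ReflTransGen.trans h1 h2

def G (t : ℕ) : ℕ := (F t)^[t + 1] (t + 1) + 1

theorem phase_reach {p p' : List ℕ} {t : ℕ} (ht : 2 ≤ t) (hp : p' < p) (hl : p'.length = 2)
    (hb : ∀ e ∈ p', e ≤ t + 1) : Reach (t, (p, none)) (G t, (p', none)) := by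
  have h1 : Reach (t, (p, none)) (t + 1, (p', some ([] ++ (t + 1) :: List.replicate t 0))) := by
    refine Relation.ReflTransGen.single ⟨rfl, Step.phase p p' _ hp hl hb ?_ ?_ ?_⟩
    · simp; omega
    · simp
    · intro e he
      simp at he
      omega
  have h2 := iter_reach t (dec_reach t) p' [] (t + 1) (t + 1)
  have h3 : Reach ((F t)^[t + 1] (t + 1), (p', some ([] ++ 0 :: List.replicate t 0)))
      (G t, (p', none)) := Relation.ReflTransGen.single ⟨rfl, Step.spec _ _⟩
  exact (Relation.ReflTransGen.trans h1 h2).trans h3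

theorem iter_infl {f : ℕ → ℕ} (hf : ∀ t, t ≤ f t) (n t : ℕ) : t ≤ f^[n] t := by
  induction n with
  | zero => exact le_refl _
  | succ n ih => rw [Function.iterate_succ_apply']; exact ih.trans (hf _)

theorem iter_le_iter {f : ℕ → ℕ} (hf : ∀ t, t ≤ f t) {n n' : ℕ} (h : n ≤ n') (t : ℕ) :
    f^[n] t ≤ f^[n'] t := by
  obtain ⟨k, rfl⟩ := Nat.exists_eq_add_of_le' h
  rw [Function.iterate_add_apply]
  exact iter_infl hf _ _

theorem F_prop (s : ℕ) : (∀ t, t + 1 ≤ F s t) ∧ Monotone (F s) := by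
  induction s with
  | zero => exact ⟨fun t => le_refl _, fun a b h => Nat.succ_le_succ h⟩
  | succ s ih =>
    obtain ⟨h1, h2⟩ := ih
    have hi : ∀ t, t ≤ F s t := fun t => (Nat.le_succ t).trans (h1 t)
    refine ⟨fun t => iter_infl hi _ _, ?_⟩
    intro a b hab
    show (F s)^[a + 1] (a + 1) ≤ (F s)^[b + 1] (b + 1)
    exact (h2.iterate _ (Nat.succ_le_succ hab)).trans (iter_le_iter hi (by omega) _)

theorem F_le (s t : ℕ) : t ≤ F s t := (Nat.le_succ t).trans ((F_prop s).1 t)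

theorem succ_iter (n t : ℕ) : (F 0)^[n] t = t + n := by
  induction n with
  | zero => rfl
  | succ n ih => rw [Function.iterate_succ_apply', ih]; simp [F]; omega

theorem F_one (t : ℕ) : F 1 t = 2 * t + 2 := by
  show (F 0)^[t + 1] (t + 1) = _
  rw [succ_iter]; omega

theorem F_mono_left (s t : ℕ) : F s t ≤ F (s + 1) t := by
  show F s t ≤ (F s)^[t + 1] (t + 1)
  rw [Function.iterate_succ_apply']
  exact (F_prop s).2 ((Nat.le_succ t).trans (iter_infl (F_le s) _ _))

theorem F_mono_left' {s s' : ℕ} (h : s ≤ s') (t : ℕ) : F s t ≤ F s' t := by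
  induction s', h using Nat.le_induction with
  | base => exact le_refl _
  | succ u _ ih => exact ih.trans (F_mono_left u t)

theorem ackF_le (s : ℕ) : ∀ t, ackF s t ≤ F s t := by
  induction s with
  | zero => intro t; simp [ackF]
  | succ s ih =>
    rcases s with _ | s
    · intro t
      rw [F_one]; simp [ackF]
    · have key : ∀ c, ackF (s + 2) c ≤ (F (s + 1))^[c] 2 := by
        intro c
        induction c with
        | zero => simp [ackF]
        | succ c ihc =>
          rcases c with _ | c
          · simp only [ackF, zero_add]
            exact iter_infl (F_le _) 1 2
          · rw [ackF, Function.iterate_succ_apply']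
            exact (ih _).trans ((F_prop (s + 1)).2 ihc)
      intro t
      refine (key t).trans ?_
      show (F (s + 1))^[t] 2 ≤ (F (s + 1))^[t] (F (s + 1) (t + 1))
      apply ((F_prop (s + 1)).2.iterate t)
      have := (F_prop (s + 1)).1 (t + 1)
      omega

theorem ackDiag_le (t : ℕ) : ackDiag t ≤ G t := by
  have h1 := ackF_le t t
  have h2 := F_mono_left t t
  have h3 : G t = F (t + 1) t + 1 := rfl
  unfold ackDiag
  omega

theorem G_le (t : ℕ) : t ≤ G t := by
  have h3 : G t = F (t + 1) t + 1 := rfl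
  have := F_le (t + 1) t
  omega

theorem G_lt (t : ℕ) : t < G t := by
  have h3 : G t = F (t + 1) t + 1 := rfl
  have := F_le (t + 1) t
  omega

theorem G_mono : Monotone G := by
  intro a b h
  have h1 : G a = F (a + 1) a + 1 := rfl
  have h2 : G b = F (b + 1) b + 1 := rfl
  have h3 := F_mono_left' (Nat.succ_le_succ h) a
  have h4 := (F_prop (b + 1)).2 h
  simp only [Nat.succ_eq_add_one] at h3
  omega

theorem pow_iter (n t : ℕ) : 2 ^ n * t ≤ (F 1)^[n] t := by
  induction n with
  | zero => simp
  | succ n ih =>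
    rw [Function.iterate_succ_apply', F_one, pow_succ]
    nlinarith

theorem F_two (t : ℕ) : 2 ^ (t + 1) * (t + 1) ≤ F 2 t := pow_iter (t + 1) (t + 1)

theorem G_eq (t : ℕ) : G t = (F t)^[t + 1] (t + 1) + 1 := rfl

attribute [irreducible] F
attribute [irreducible] G

theorem F_big (t x : ℕ) (ht : 2 ≤ t) (hx : 64 ≤ x) : 187196 ≤ F t x := by
  have h1 := F_two x
  have h2 := F_mono_left' ht x
  have h3 : 2 ^ 64 ≤ 2 ^ (x + 1) := Nat.pow_le_pow_right (by norm_num) (by omega)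
  have h4 : 2 ^ 64 * 1 ≤ 2 ^ (x + 1) * (x + 1) := Nat.mul_le_mul h3 (by omega)
  have h5 : 187196 ≤ 2 ^ 64 * 1 := by norm_num
  exact h5.trans (h4.trans (h1.trans h2))

theorem G_two (t : ℕ) (ht : 2 ≤ t) : 187196 ≤ G t := by
  have h1 := F_two (t + 1)
  have h2 := F_mono_left' ht (t + 1)
  have h3 : 2 ^ 4 ≤ 2 ^ (t + 1 + 1) := Nat.pow_le_pow_right (by norm_num) (by omega)
  have h4 : 2 ^ 4 * 4 ≤ 2 ^ (t + 1 + 1) * (t + 1 + 1) := Nat.mul_le_mul h3 (by omega)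
  have h5 : 64 ≤ F t (t + 1) := le_trans (by norm_num) (h4.trans (h1.trans h2))
  have h6 := F_big t _ ht h5
  have h7 : (F t)^[2] (t + 1) ≤ (F t)^[t + 1] (t + 1) := iter_le_iter (F_le t) (by omega) _
  rw [G_eq]
  rw [Function.iterate_succ_apply, Function.iterate_one] at h7
  omega

theorem list_lt_snd (x y : ℕ) : [x, y] < [x, y + 1] := append_lex [x] y [] []

theorem list_lt_fst (x y : ℕ) : [x, y] < [x + 1, 0] := append_lex [] x [0] [y]

theorem many_reach (x n : ℕ) : ∀ t, 2 ≤ t → n ≤ t + 1 →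
    Reach (t, ([x, n], none)) (G^[n] t, ([x, 0], none)) ∨ t < x := by
  induction n with
  | zero => intro t _ _; exact Or.inl Relation.ReflTransGen.refl
  | succ n ih =>
    intro t ht hn
    by_cases hx : t < x
    · exact Or.inr hx
    · left
      have h1 : Reach (t, ([x, n + 1], none)) (G t, ([x, n], none)) := by
        refine phase_reach ht (list_lt_snd x n) rfl ?_
        intro e he
        simp at he
        omega
      have hg := G_le t
      rcases ih (G t) (by omega) (by omega) with h2 | h2
      · exact Relation.ReflTransGen.trans h1 h2
      · omega

theorem long_reach (t : ℕ) (ht : 2 ≤ t) : ∃ N σ, Reach (t, ([1, 2], none)) (N, σ) ∧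
    ackDiag^[ackDiag 187196] 1 < N := by
  have h1 : Reach (t, ([1, 2], none)) (G (G t), ([1, 0], none)) := by
    rcases many_reach 1 2 t (by omega) (by omega) with h | h
    · exact h
    · omega
  set t1 := G (G t) with ht1
  have g2 := G_two t ht
  have hg : G t ≤ t1 := G_le _
  have h2 : Reach (t1, ([1, 0], none)) (G t1, ([0, t1 + 1], none)) := by
    refine phase_reach (by omega) (list_lt_fst 0 _) rfl ?_
    intro e he
    simp at he
    omega
  have hg1 := G_le t1
  have h3 : Reach (G t1, ([0, t1 + 1], none)) (G^[t1 + 1] (G t1), ([0, 0], none)) := by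
    rcases many_reach 0 (t1 + 1) (G t1) (by omega) (by omega) with h | h
    · exact h
    · omega
  refine ⟨_, _, (Relation.ReflTransGen.trans h1 h2).trans h3, ?_⟩
  have ha : ackDiag 187196 ≤ t1 := (ackDiag_le _).trans (G_mono g2)
  have hb : ∀ n, ackDiag^[n] 1 ≤ G^[n] (G t1) := by
    intro n
    induction n with
    | zero => show 1 ≤ G t1; omega
    | succ n ih =>
      rw [Function.iterate_succ_apply', Function.iterate_succ_apply']
      exact (ackDiag_le _).trans (G_mono ih)
  have hc : G^[ackDiag 187196] (G t1) ≤ G^[t1] (G t1) := iter_le_iter G_le ha _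
  have hd : G^[t1] (G t1) < G^[t1 + 1] (G t1) := by
    rw [Function.iterate_succ_apply']
    exact G_lt _
  exact lt_of_le_of_lt (hb _) (lt_of_le_of_lt hc hd)

/-! ## From the words `T j` to a word with property (*) -/

def pre : List (Fin 4) :=
  [0, 3, 3, 2, 2, 3, 3, 3, 3, 3, 3, 1, 1, 3, 1, 3, 1, 1, 1, 1, 1, 3, 3, 1, 1, 1, 1, 1, 1, 1, 1, 1, 1, 1, 1, 1, 1, 1, 3, 0, 0, 0, 0, 0, 0, 0]

/-- The word `pre 1 T₀ 1 T₁ … 1 T_{J-1}`. -/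
def W (T : ℕ → List (Fin 4)) : ℕ → List (Fin 4)
  | 0 => pre
  | J + 1 => W T J ++ 1 :: T J

/-- Position of the `j`-th marker. -/
def q (j : ℕ) : ℕ := 16 * (3 + j % 3) * 2 ^ (j / 3) - 1

theorem q_add_one (j : ℕ) : q j + 1 = 16 * (3 + j % 3) * 2 ^ (j / 3) := by
  have : 0 < 16 * (3 + j % 3) * 2 ^ (j / 3) := by positivity
  unfold q; omega

theorem q_succ (j : ℕ) : q (j + 1) = q j + 16 * 2 ^ (j / 3) := by
  have h1 := q_add_one j
  have h2 := q_add_one (j + 1)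
  rcases (by omega : j % 3 = 0 ∨ j % 3 = 1 ∨ j % 3 = 2) with h | h | h
  · rw [h] at h1
    rw [show (j + 1) % 3 = 1 by omega, show (j + 1) / 3 = j / 3 by omega] at h2
    omega
  · rw [h] at h1
    rw [show (j + 1) % 3 = 2 by omega, show (j + 1) / 3 = j / 3 by omega] at h2
    omega
  · rw [h] at h1
    rw [show (j + 1) % 3 = 0 by omega, show (j + 1) / 3 = j / 3 + 1 by omega, pow_succ] at h2
    omega

theorem q_three (j : ℕ) : q (j + 3) = 2 * q j + 1 := by
  have h1 := q_add_one j
  have h2 := q_add_one (j + 3)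
  rw [show (j + 3) % 3 = j % 3 by omega, show (j + 3) / 3 = j / 3 + 1 by omega, pow_succ] at h2
  have : 16 * (3 + j % 3) * (2 ^ (j / 3) * 2) = 2 * (16 * (3 + j % 3) * 2 ^ (j / 3)) := by ring
  omega

theorem q_zero : q 0 = 47 := by decide

theorem q_mono : StrictMono q := by
  apply strictMono_nat_of_lt_succ
  intro j
  have := q_succ j
  have : 0 < 2 ^ (j / 3) := by positivity
  omega

theorem W_length {T : ℕ → List (Fin 4)} {J : ℕ}
    (hlen : ∀ j < J, (T j).length + 1 = 16 * 2 ^ (j / 3)) (j : ℕ) (hj : j ≤ J) :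
    (W T j).length + 1 = q j := by
  induction j with
  | zero => simp [W, pre, q_zero]
  | succ j ih =>
    have h1 := ih (by omega)
    have h2 := hlen j (by omega)
    have h3 := q_succ j
    simp only [W, List.length_append, List.length_cons]
    omega

theorem W_prefix (T : ℕ → List (Fin 4)) {j J : ℕ} (h : j ≤ J) : ∃ r, W T J = W T j ++ r := by
  induction J, h using Nat.le_induction with
  | base => exact ⟨[], by simp⟩
  | succ u _ ih =>
    obtain ⟨r, hr⟩ := ih
    exact ⟨r ++ 1 :: T u, by simp [W, hr]⟩

theorem block_form {T : ℕ → List (Fin 4)} {J : ℕ}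
    (hlen : ∀ j < J, (T j).length + 1 = 16 * 2 ^ (j / 3))
    (hlet : ∀ j, ∀ x ∈ T j, x = 0 ∨ x = 2) {i j : ℕ} (hi : 40 ≤ i) (hij : i ≤ q j)
    (hmin : ∀ j' < j, q j' < i) (hJ : 2 * i ≤ (W T J).length) :
    j + 2 < J ∧ ∃ u v : List (Fin 4),
      friedmanBlock (W T J) i = u ++ 1 :: (T j ++ 1 :: (T (j + 1) ++ 1 :: v)) ∧
      (∀ x ∈ u, x = 0 ∨ x = 2) ∧ (∀ x ∈ v, x = 0 ∨ x = 2) ∧ u.length = q j - i := by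
  have hWJ := W_length hlen J le_rfl
  have hq2 : q (j + 2) ≤ 2 * i := by
    rcases j with _ | k
    · have : q 2 = 79 := by decide
      simp [this]; omega
    · have h1 := hmin k (by omega)
      have h2 := q_three k
      rw [show k + 1 + 2 = k + 3 by omega]; omega
  have hjJ : j + 2 < J := by
    apply q_mono.lt_iff_lt.1; omega
  refine ⟨hjJ, ?_⟩
  obtain ⟨r, hr⟩ := W_prefix T (show j + 3 ≤ J by omega)
  have hWj := W_length hlen j (by omega)
  have l0 := hlen j (by omega)
  have l1 := hlen (j + 1) (by omega)
  have l2 := hlen (j + 2) (by omega)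
  have s0 := q_succ j
  have s1 := q_succ (j + 1)
  have s2 := q_succ (j + 2)
  have s3 := q_three j
  refine ⟨(W T j).drop (i - 1), (T (j + 2)).take (2 * i - q (j + 2)), ?_, ?_, ?_, ?_⟩
  · have e1 : W T J = W T j ++ ((1 :: (T j ++ 1 :: (T (j + 1) ++ [1]))) ++ (T (j + 2) ++ r)) := by
      rw [hr]; simp [W]
    have e2 : (W T j).length - (i - 1) = q j - i := by omega
    unfold friedmanBlock
    rw [e1, List.drop_append_of_le_length (by omega), ← List.append_assoc,
      List.take_append, List.take_of_length_le]
    · have e3 : i + 1 - ((W T j).drop (i - 1) ++ (1 :: (T j ++ 1 :: (T (j + 1) ++ [1])))).length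
          = 2 * i - q (j + 2) := by
        simp only [List.length_append, List.length_cons, List.length_drop, List.length_nil]
        simp only [Nat.add_assoc, Nat.reduceAdd] at s0 s1 s2 s3 hq2 ⊢
        omega
      rw [e3, List.take_append_of_le_length]
      · simp
      · simp only [Nat.add_assoc, Nat.reduceAdd] at s0 s1 s2 s3 hq2 ⊢
        omega
    · simp only [List.length_append, List.length_cons, List.length_drop, List.length_nil]
      simp only [Nat.add_assoc, Nat.reduceAdd] at s0 s1 s2 s3 hq2 ⊢
      omega
  · rcases j with _ | k
    · intro x hx
      have hx' : x ∈ pre.drop 39 := by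
        have : (W T 0).drop (i - 1) = (pre.drop 39).drop (i - 40) := by
          rw [List.drop_drop, W]
          congr 1; omega
        rw [this] at hx
        exact List.mem_of_mem_drop hx
      have : ∀ x ∈ pre.drop 39, x = 0 ∨ x = 2 := by decide
      exact this x hx'
    · intro x hx
      have hWk := W_length hlen k (by omega)
      have h1 := hmin k (by omega)
      have : (W T (k + 1)).drop (i - 1) = (T k).drop (i - 1 - q k) := by
        rw [W, ← List.singleton_append, ← List.append_assoc, List.drop_append,
          List.drop_of_length_le]
        · simp [hWk]
        · simp; omega
      rw [this] at hx
      exact hlet k x (List.mem_of_mem_drop hx)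
  · intro x hx
    exact hlet _ x (List.mem_of_mem_take hx)
  · rw [List.length_drop]; omega

/-- The initial piece of the word, of length `78`. -/
def start : List (Fin 4) :=
  pre ++ 1 :: (padTo 15 (enc [1, 2]) ++ 1 :: List.replicate 15 0)

theorem start_mem : ∀ i ∈ List.range 40, 1 ≤ i → (3 : Fin 4) ∈ friedmanBlock start i := by
  decide +kernel

theorem start_bad : ∀ j ∈ List.range 40, ∀ i ∈ List.range j, 1 ≤ i →
    ¬ (friedmanBlock start i).Sublist (friedmanBlock start j) := by
  decide +kernel

theorem count_one {l : List (Fin 4)} (h : ∀ x ∈ l, x = 0 ∨ x = 2) : l.count 1 = 0 := by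
  apply List.count_eq_zero_of_not_mem
  intro h1
  have := h 1 h1
  revert this; decide

theorem not_mem_one {l : List (Fin 4)} (h : ∀ x ∈ l, x = 0 ∨ x = 2) : (1 : Fin 4) ∉ l := by
  intro h1
  have := h 1 h1
  revert this; decide

theorem not_mem_three {l : List (Fin 4)} (h : ∀ x ∈ l, x = 0 ∨ x = 2) : (3 : Fin 4) ∉ l := by
  intro h1
  have := h 3 h1
  revert this; decide

theorem W_star {T : ℕ → List (Fin 4)} {J : ℕ} (hJ : 2 ≤ J)
    (hlen : ∀ j < J, (T j).length + 1 = 16 * 2 ^ (j / 3))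
    (hlet : ∀ j, ∀ x ∈ T j, x = 0 ∨ x = 2)
    (h0 : T 0 = padTo 15 (enc [1, 2])) (h1 : T 1 = List.replicate 15 0)
    (hbad : ∀ j j', j < j' → j' + 1 < J →
      ¬ ((T j).Sublist (T j') ∧ (T (j + 1)).Sublist (T (j' + 1)))) :
    SatisfiesStar (W T J) := by
  obtain ⟨r, hr⟩ := W_prefix T hJ
  have hst : W T J = start ++ r := by
    rw [hr]; simp [W, h0, h1, start]
  have hsl : start.length = 78 := by decide
  have hblk : ∀ i, 1 ≤ i → i < 40 → friedmanBlock (W T J) i = friedmanBlock start i := by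
    intro i hi1 hi
    unfold friedmanBlock
    rw [hst, List.drop_append_of_le_length (by omega), List.take_append_of_le_length]
    rw [List.length_drop]; omega
  have hex : ∀ i, ∃ j, i ≤ q j := fun i => ⟨i, q_mono.id_le i⟩
  intro i i' hi hii hlen'
  by_cases hi' : i' < 40
  · rw [hblk i hi (by omega), hblk i' (by omega) hi']
    exact start_bad i' (by simpa using hi') i (by simpa using hii) hi
  · have hf' := block_form hlen hlet (i := i') (j := Nat.find (hex i')) (by omega)
      (Nat.find_spec (hex i')) (fun j' hj' => not_le.1 (Nat.find_min (hex i') hj')) hlen'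
    generalize hjd' : Nat.find (hex i') = j' at hf'
    obtain ⟨hj', u', v', hb', hu', hv', hul'⟩ := hf'
    rw [hb']
    by_cases hi40 : i < 40
    · rw [hblk i hi hi40]
      intro hs
      have := hs.subset (start_mem i (by simpa using hi40) hi)
      simp [not_mem_three hu', not_mem_three hv', not_mem_three (hlet j'),
        not_mem_three (hlet (j' + 1))] at this
    · have hf := block_form hlen hlet (i := i) (j := Nat.find (hex i)) (by omega)
        (Nat.find_spec (hex i)) (fun j' hj' => not_le.1 (Nat.find_min (hex i) hj')) (by omega)
      have hjj : Nat.find (hex i) ≤ j' := by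
        apply Nat.find_min'
        have := Nat.find_spec (hex i')
        rw [hjd'] at this
        omega
      generalize Nat.find (hex i) = j at hf hjj
      obtain ⟨hj, u, v, hb, hu, hv, hul⟩ := hf
      rw [hb]
      intro hs
      have g := split_marker hs (not_mem_one hu')
        (by simp [count_one hv, count_one hv', count_one (hlet _)]) (not_mem_one hu)
      have g2 := split_marker g.2 (not_mem_one (hlet _))
        (by simp [count_one hv, count_one hv', count_one (hlet _)]) (not_mem_one (hlet _))
      have g3 := split_marker g2.2 (not_mem_one (hlet _))
        (by simp [count_one hv, count_one hv']) (not_mem_one (hlet _))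
      rcases lt_or_eq_of_le hjj with h | h
      · exact hbad j j' h (by omega) ⟨g2.1, g3.1⟩
      · subst h
        have := g.1.length_le
        have h5 := Nat.find_spec (hex i')
        rw [hjd'] at h5
        omega

/-! ## Assembling -/

theorem pow_bound (e : ℕ) : 9 * e ^ 2 + 42 * e + 56 ≤ 64 * 2 ^ e ∧ 18 * e + 51 ≤ 64 * 2 ^ e := by
  induction e with
  | zero => simp
  | succ e ih =>
    obtain ⟨h1, h2⟩ := ih
    have h3 : 1 ≤ 2 ^ e := Nat.one_le_two_pow
    have h4 : 2 ^ (e + 1) = 2 * 2 ^ e := by ring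
    rw [h4]
    constructor
    · nlinarith
    · omega

theorem big_len (j t : ℕ) (ht : t ≤ j / 2 + 2) : Big t (16 * 2 ^ (j / 3) - 1) := by
  obtain ⟨h1, h2⟩ := pow_bound (j / 3)
  have h3 : 2 * t ≤ 3 * (j / 3) + 6 := by omega
  generalize j / 3 = e at *
  generalize 2 ^ e = P at *
  have h4 : 4 * (t * (t + 1) + 2) ≤ 64 * P := by nlinarith
  refine ⟨?_, ?_, ?_⟩
  · omega
  · have : t * 1 ≤ t * (t + 1) := by nlinarith
    omega
  · omega

/-- The segments of the word determined by a run. -/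
def seg (st : ℕ → St) (j : ℕ) : List (Fin 4) :=
  if j % 2 = 0 then Pw (16 * 2 ^ (j / 3) - 1) (st (j / 2 + 2))
  else Qw (16 * 2 ^ (j / 3) - 1) (st (j / 2 + 2))

theorem seg_even (st : ℕ → St) (i : ℕ) :
    seg st (2 * i) = Pw (16 * 2 ^ (2 * i / 3) - 1) (st (i + 2)) := by
  simp [seg]

theorem seg_odd (st : ℕ → St) (i : ℕ) :
    seg st (2 * i + 1) = Qw (16 * 2 ^ ((2 * i + 1) / 3) - 1) (st (i + 2)) := by
  have h1 : (2 * i + 1) % 2 = 1 := by omega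
  have h2 : (2 * i + 1) / 2 = i := by omega
  simp [seg, h1, h2]

theorem main : ∃ s : List (Fin 4), SatisfiesStar s ∧
    ackDiag^[ackDiag 187196] 1 < s.length := by
  obtain ⟨N, σ, hr, hN⟩ := long_reach 2 le_rfl
  obtain ⟨hle, st, hst0, -, hs⟩ := hr.run
  simp only at hle hst0 hs
  have h0 : Inv 2 (st 2) := by
    rw [hst0]
    refine ⟨rfl, by simp, ?_⟩
    intro m hm
    simp at hm
  have hinv := run_inv h0 hs
  have hlen : ∀ j < 2 * (N - 1), (seg st j).length + 1 = 16 * 2 ^ (j / 3) := by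
    intro j hj
    have hb := big_len j (j / 2 + 2) le_rfl
    have hi := hinv (j / 2 + 2) (by omega) (by omega)
    have hp : 0 < 2 ^ (j / 3) := by positivity
    unfold seg
    split
    · rw [Pw_length hi hb]; omega
    · rw [Qw_length hi hb]; omega
  refine ⟨W (seg st) (2 * (N - 1)), ?_, ?_⟩
  · apply W_star (by omega) hlen
    · intro j
      unfold seg
      split
      · exact Pw_letters _ _
      · exact Qw_letters _ _
    · simp [seg, Pw, hst0]
    · simp [seg, Qw, hst0]
    · intro j j' hjj hj'
      have h3 : ∀ i, 3 ≤ 16 * 2 ^ ((2 * i + 1) / 3) - 1 := by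
        intro i
        have hp : 0 < 2 ^ ((2 * i + 1) / 3) := by positivity
        omega
      have hbo : ∀ i, Big (i + 2) (16 * 2 ^ ((2 * i + 1) / 3) - 1) :=
        fun i => big_len _ _ (by omega)
      obtain ⟨i, hi⟩ := Nat.even_or_odd' j
      obtain ⟨i', hi'⟩ := Nat.even_or_odd' j'
      rcases hi with rfl | rfl <;> rcases hi' with rfl | rfl
      · rw [seg_even, seg_even, seg_odd, seg_odd]
        exact run_even h0 hs (by omega) (by omega) (by omega) (hbo i)
      · rintro ⟨-, h⟩
        rw [show 2 * i' + 1 + 1 = 2 * (i' + 1) by ring, seg_even, seg_odd] at h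
        exact not_Q_P (hinv (i + 2) (by omega) (by omega)) (h3 i)
          (hinv (i' + 1 + 2) (by omega) (by omega)) h
      · rintro ⟨h, -⟩
        rw [seg_even, seg_odd] at h
        exact not_Q_P (hinv (i + 2) (by omega) (by omega)) (h3 i)
          (hinv (i' + 2) (by omega) (by omega)) h
      · rw [show 2 * i' + 1 + 1 = 2 * (i' + 1) by ring,
          show 2 * i + 1 + 1 = 2 * (i + 1) by ring, seg_even, seg_even, seg_odd, seg_odd,
          show i + 1 + 2 = i + 2 + 1 by ring, show i' + 1 + 2 = i' + 2 + 1 by ring]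
        exact run_odd h0 hs (by omega) (by omega) (by omega) (hbo i)
  · have h1 := W_length hlen _ le_rfl
    have h2 : q 0 + 2 * (N - 1) ≤ q (2 * (N - 1)) := by
      have := q_mono.add_le_nat (2 * (N - 1)) 0
      rw [Nat.add_zero] at this
      omega
    rw [q_zero] at h2
    omega

end FriedmanFour

/-- n(4) > A^{(A(187196))}(1): there is a word over a four-letter alphabet of
length greater than the `A(187196)`-fold iterate of the diagonal Ackermann
function applied to 1, satisfying (*). -/
theorem friedman_n4_gt_iterated_ack :
    ∃ s : List (Fin 4), SatisfiesStar s ∧ ackDiag^[ackDiag 187196] 1 < s.length := by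
  exact FriedmanFour.main
end
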